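/- arXiv:1702.00165 — 2 statements merged into one kernel-verified Lean document; each statement's English description precedes it below -/
import Mathlib

section
/- Let 1 < c < 11/6 and let 0 < ε < 10^{-10} be a sufficiently small constant. Then Σ_{n ≤ x, n cube-free, ⌊n^c⌋ cube-free} 1 = x/ζ(3)² + O(x^{1-ε}). -/
open Filter Asymptotics Finset
open scoped Classical

/-- A natural number is cube-free if no prime cube divides it. -/
def CubeFree (n : ℕ) : Prop := ∀ p : ℕ, p.Prime → ¬ p ^ 3 ∣ n

/-- `ζ(3) = ∑ 1/n³`. -/
noncomputable def zeta3 : ℝ := ∑' n : ℕ, 1 / (n : ℝ) ^ 3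

/-- A finite set of naturals with gaps at least `q` in an interval of length `L`. -/
lemma spacing_card (T : Finset ℕ) (q : ℕ) (hq : 1 ≤ q) (L : ℝ) (hL0 : 0 ≤ L)
    (hgap : ∀ k ∈ T, ∀ k' ∈ T, k < k' → k + q ≤ k')
    (hL : ∀ k ∈ T, ∀ k' ∈ T, k < k' → ((k' : ℝ) - k) ≤ L) :
    (T.card : ℝ) ≤ 1 + L / q := by
  have hq' : (0 : ℝ) < q := by exact_mod_cast hq
  rcases T.eq_empty_or_nonempty with h | h
  · subst h; simp; positivity
  · obtain ⟨m, hm, hmin⟩ := T.exists_min_image id h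
    simp only [id] at hmin
    have hinj : Set.InjOn (fun k => (k - m) / q) (T : Set ℕ) := by
      intro k hk k' hk' hkk
      simp only [Finset.mem_coe] at hk hk'
      simp only at hkk
      have h1 := hmin k hk
      have h2 := hmin k' hk'
      rcases lt_trichotomy k k' with h3 | h3 | h3
      · have h4 := hgap k hk k' hk' h3
        have h5 : (k' - m) / q ≥ (k - m) / q + 1 := by
          rw [ge_iff_le, ← Nat.add_div_right _ (by omega)]
          exact Nat.div_le_div_right (by omega)
        omega
      · exact h3
      · have h4 := hgap k' hk' k hk h3
        have h5 : (k - m) / q ≥ (k' - m) / q + 1 := by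
          rw [ge_iff_le, ← Nat.add_div_right _ (by omega)]
          exact Nat.div_le_div_right (by omega)
        omega
    have hmaps : ∀ k ∈ T, (fun k => (k - m) / q) k ∈ Finset.range (⌊L / q⌋₊ + 1) := by
      intro k hk
      simp only [Finset.mem_range]
      have h1 := hmin k hk
      have h2 : ((k : ℝ) - m) ≤ L := by
        rcases h1.lt_or_eq with h3 | h3
        · exact hL m hm k hk h3
        · rw [h3]; simpa using hL0
      have h3 : (k - m) / q ≤ ⌊L / q⌋₊ := by
        apply Nat.le_floor
        calc (((k - m) / q : ℕ) : ℝ) ≤ ((k - m : ℕ) : ℝ) / q := Nat.cast_div_le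
          _ ≤ L / q := by
            rw [Nat.cast_sub h1]
            gcongr
      omega
    have h1 := Finset.card_le_card_of_injOn _ hmaps hinj
    rw [Finset.card_range] at h1
    have h2 : (T.card : ℝ) ≤ ⌊L / q⌋₊ + 1 := by exact_mod_cast h1
    have h3 := Nat.floor_le (show 0 ≤ L / q by positivity)
    linarith

lemma block_count (q : ℕ) (hq : 1 ≤ q) (a : ℤ) (hcop : IsCoprime a (q : ℤ)) (β : ℝ) (v : ℕ → ℝ)
    (hv : ∀ h < q, |v h - (β + a * h / q)| ≤ 2 / q) (δ : ℝ) (hδ0 : 0 ≤ δ) (hδ1 : δ ≤ 1) :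
    |(((range q).filter (fun h => Int.fract (v h) < δ)).card : ℝ) - q * δ| ≤ 12 := by
  have hq' : (0 : ℝ) < q := by exact_mod_cast hq
  have hqz : (0 : ℤ) < q := by exact_mod_cast hq
  set b : ℤ := ⌊(q : ℝ) * β⌋ with hb
  set r : ℕ → ℕ := fun h => ((b + a * h) % q).toNat with hr
  have hrc : ∀ h, ((r h : ℕ) : ℤ) = (b + a * h) % q := by
    intro h
    simp only [hr]
    exact Int.toNat_of_nonneg (Int.emod_nonneg _ hqz.ne')
  have hrlt : ∀ h, r h < q := by
    intro h
    have := Int.emod_lt_of_pos (b + a * h) hqz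
    rw [← hrc] at this
    exact_mod_cast this
  have hinj : ∀ h < q, ∀ h' < q, r h = r h' → h = h' := by
    intro h hh h' hh' he
    have h1 : (b + a * h) % q = (b + a * h') % (q : ℤ) := by rw [← hrc, ← hrc, he]
    have h2 : (q : ℤ) ∣ a * ((h : ℤ) - h') := by
      have := Int.emod_emod_of_dvd
      have h3 := Int.ModEq.dvd (show (b + a * h') ≡ (b + a * h) [ZMOD q] from h1.symm)
      have h4 : a * ((h : ℤ) - h') = b + a * h - (b + a * h') := by ring
      rw [h4]; exact h3
    have h3 : (q : ℤ) ∣ (h : ℤ) - h' := hcop.symm.dvd_of_dvd_mul_left h2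
    obtain ⟨w, hw⟩ := h3
    have : w = 0 := by
      by_contra hne
      rcases lt_or_gt_of_ne hne with h5 | h5
      · have : (q : ℤ) * w ≤ q * (-1) := by gcongr; omega
        omega
      · have : (q : ℤ) * w ≥ q * 1 := by gcongr; omega
        omega
    subst this
    omega
  -- the fractional part
  have hkey : ∀ h < q, ∃ t : ℝ, -2 ≤ t ∧ t < 3 ∧
      ∃ w : ℤ, v h = w + (r h + t) / q := by
    intro h hh
    refine ⟨q * v h - (b + a * h), ?_, ?_, (b + a * h) / q, ?_⟩
    · have h1 := (abs_le.mp (hv h hh)).1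
      have h2 := Int.floor_le ((q : ℝ) * β)
      rw [← hb] at h2
      have h3 : (q : ℝ) * (-(2 / q)) ≤ q * (v h - (β + a * h / q)) := by gcongr
      have h4 : (q : ℝ) * (-(2 / q)) = -2 := by field_simp
      have h5 : (q : ℝ) * (v h - (β + a * h / q)) = q * v h - q * β - a * h := by field_simp; ring
      linarith
    · have h1 := (abs_le.mp (hv h hh)).2
      have h2 := Int.lt_floor_add_one ((q : ℝ) * β)
      rw [← hb] at h2
      have h3 : (q : ℝ) * (v h - (β + a * h / q)) ≤ q * (2 / q) := by gcongr
      have h4 : (q : ℝ) * ((2 / q)) = 2 := by field_simp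
      have h5 : (q : ℝ) * (v h - (β + a * h / q)) = q * v h - q * β - a * h := by field_simp; ring
      linarith
    · have h1 : (b : ℝ) + a * h = q * (((b + a * h) / (q : ℤ) : ℤ) : ℝ) + r h := by
        have := Int.mul_ediv_add_emod (b + a * h) q
        rw [← hrc] at this
        exact_mod_cast this.symm
      rw [h1]
      field_simp
      ring
  have hfr : ∀ h < q, ∀ t : ℝ, -2 ≤ t → t < 3 → (∃ w : ℤ, v h = w + (r h + t) / q) →
      2 ≤ r h → r h + 3 ≤ q → Int.fract (v h) = (r h + t) / q := by
    intro h hh t ht1 ht2 ⟨w, hw⟩ h1 h2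
    rw [hw, Int.fract_intCast_add, Int.fract_eq_self]
    have h1' : (2 : ℝ) ≤ r h := by exact_mod_cast h1
    have h2' : (r h : ℝ) + 3 ≤ q := by exact_mod_cast h2
    constructor
    · apply div_nonneg <;> linarith
    · rw [div_lt_one hq']; linarith
  have hup : (((range q).filter (fun h => Int.fract (v h) < δ)).card : ℝ) ≤ q * δ + 12 := by
    have h1 : ((range q).filter (fun h => Int.fract (v h) < δ)).card ≤
        (range (⌈δ * q + 2⌉₊) ∪ Finset.Ico (q - 3) q).card := by
      apply Finset.card_le_card_of_injOn r
      · intro h hh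
        simp only [Finset.coe_filter, Finset.mem_range, Set.mem_setOf_eq] at hh
        simp only [Finset.mem_coe, Finset.mem_union, Finset.mem_range, Finset.mem_Ico]
        obtain ⟨hh1, hh2⟩ := hh
        by_cases hc : 2 ≤ r h ∧ r h + 3 ≤ q
        · left
          obtain ⟨t, ht1, ht2, hw⟩ := hkey h hh1
          have := hfr h hh1 t ht1 ht2 hw hc.1 hc.2
          rw [this, div_lt_iff₀ hq'] at hh2
          rw [Nat.lt_ceil]
          linarith
        · by_cases hc2 : r h + 3 ≤ q
          · left
            have h5 : r h < 2 := by omega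
            rw [Nat.lt_ceil]
            have : (r h : ℝ) < 2 := by exact_mod_cast h5
            have : 0 ≤ δ * q := by positivity
            linarith
          · right
            exact ⟨by omega, hrlt h⟩
      · intro h hh h' hh' he
        simp only [Finset.coe_filter, Finset.mem_range, Set.mem_setOf_eq] at hh hh'
        exact hinj h hh.1 h' hh'.1 he
    have h2 : ((range q).filter (fun h => Int.fract (v h) < δ)).card ≤ ⌈δ * q + 2⌉₊ + 3 := by
      refine h1.trans ((Finset.card_union_le _ _).trans ?_)
      rw [Finset.card_range, Nat.card_Ico]
      omega
    have h3 : (((range q).filter (fun h => Int.fract (v h) < δ)).card : ℝ) ≤ ⌈δ * q + 2⌉₊ + 3 := by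
      exact_mod_cast h2
    have h4 := Nat.ceil_lt_add_one (show 0 ≤ δ * q + 2 by positivity)
    linarith
  have hlo : (((range q).filter (fun h => ¬ Int.fract (v h) < δ)).card : ℝ) ≤ q - q * δ + 12 := by
    have h1 : ((range q).filter (fun h => ¬ Int.fract (v h) < δ)).card ≤
        (range 2 ∪ Finset.Ico (⌈δ * q⌉₊ - 3) q).card := by
      apply Finset.card_le_card_of_injOn r
      · intro h hh
        simp only [Finset.coe_filter, Finset.mem_range, Set.mem_setOf_eq] at hh
        simp only [Finset.mem_coe, Finset.mem_union, Finset.mem_range, Finset.mem_Ico]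
        obtain ⟨hh1, hh2⟩ := hh
        by_cases hc : 2 ≤ r h ∧ r h + 3 ≤ q
        · right
          obtain ⟨t, ht1, ht2, hw⟩ := hkey h hh1
          have := hfr h hh1 t ht1 ht2 hw hc.1 hc.2
          rw [this, div_lt_iff₀ hq'] at hh2
          refine ⟨?_, hrlt h⟩
          have : ⌈δ * q⌉₊ ≤ r h + 3 := by
            rw [Nat.ceil_le]
            push_cast
            linarith
          omega
        · by_cases hc2 : r h + 3 ≤ q
          · left
            omega
          · right
            refine ⟨?_, hrlt h⟩
            have : ⌈δ * q⌉₊ ≤ q := by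
              rw [Nat.ceil_le]
              nlinarith
            omega
      · intro h hh h' hh' he
        simp only [Finset.coe_filter, Finset.mem_range, Set.mem_setOf_eq] at hh hh'
        exact hinj h hh.1 h' hh'.1 he
    have h2 : ((range q).filter (fun h => ¬ Int.fract (v h) < δ)).card + ⌈δ * q⌉₊ ≤ q + 5 := by
      have hle : ⌈δ * q⌉₊ ≤ q := by
        rw [Nat.ceil_le]
        nlinarith
      have := h1.trans (Finset.card_union_le _ _)
      rw [Finset.card_range, Nat.card_Ico] at this
      omega
    have h3 : (((range q).filter (fun h => ¬ Int.fract (v h) < δ)).card : ℝ) + ⌈δ * q⌉₊ ≤ q + 5 := by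
      exact_mod_cast h2
    have h4 := Nat.le_ceil (δ * q)
    linarith
  have hsum := Finset.card_filter_add_card_filter_not (s := range q) (fun h => Int.fract (v h) < δ)
  rw [Finset.card_range] at hsum
  have hsum' : (((range q).filter (fun h => Int.fract (v h) < δ)).card : ℝ) +
      ((range q).filter (fun h => ¬ Int.fract (v h) < δ)).card = q := by exact_mod_cast hsum
  rw [abs_le]
  constructor <;> linarith

lemma adaptive_count (P bad : ℕ → Prop) (K0 K H : ℕ) (q0 δ : ℝ) (hq0 : 0 < q0)
    (hδ0 : 0 ≤ δ) (hδ1 : δ ≤ 1)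
    (hgood : ∀ k, K0 ≤ k → k + H ≤ K → ¬ bad k → ∃ q : ℕ, 1 ≤ q ∧ q0 ≤ q ∧ q ≤ H ∧
      |(((range q).filter (fun h => P (k + h))).card : ℝ) - q * δ| ≤ 12) :
    ∀ n s : ℕ, K0 ≤ s → s + n = K →
    |(((Finset.Ico s K).filter P).card : ℝ) - n * δ| ≤
      12 * n / q0 + ((Finset.Ico s K).filter bad).card + H := by
  intro n
  induction n using Nat.strong_induction_on with
  | _ n ih =>
  intro s hs hsn
  have hcardle : (((Finset.Ico s K).filter P).card : ℝ) ≤ n := by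
    have := Finset.card_filter_le (Finset.Ico s K) P
    rw [Nat.card_Ico] at this
    have h2 : ((Finset.Ico s K).filter P).card ≤ n := by omega
    exact_mod_cast h2
  have hnδ : (n : ℝ) * δ ≤ n := by
    have : (0 : ℝ) ≤ n := by positivity
    nlinarith
  have hnδ0 : 0 ≤ (n : ℝ) * δ := by positivity
  have hsplit : ∀ (Q : ℕ → Prop) (q : ℕ), s + q ≤ K → ((Finset.Ico s K).filter Q).card =
      ((range q).filter (fun h => Q (s + h))).card + ((Finset.Ico (s + q) K).filter Q).card := by
    intro Q q hq
    have h1 : ((range q).filter (fun h => Q (s + h))).card = ((Finset.Ico s (s + q)).filter Q).card := by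
      apply Finset.card_bij (fun h _ => s + h)
      · intro h hh
        simp only [Finset.mem_filter, Finset.mem_range, Finset.mem_Ico] at hh ⊢
        exact ⟨⟨by omega, by omega⟩, hh.2⟩
      · intro h _ h' _ he
        omega
      · intro k hk
        simp only [Finset.mem_filter, Finset.mem_Ico] at hk
        refine ⟨k - s, ?_, by omega⟩
        simp only [Finset.mem_filter, Finset.mem_range]
        refine ⟨by omega, ?_⟩
        rw [show s + (k - s) = k by omega]
        exact hk.2
    rw [h1, ← Finset.card_union_of_disjoint, ← Finset.filter_union,
      Finset.Ico_union_Ico_eq_Ico (by omega) hq]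
    apply Finset.disjoint_filter_filter
    exact Finset.Ico_disjoint_Ico_consecutive s (s + q) K
  have hn0 : 0 ≤ 12 * (n : ℝ) / q0 := by positivity
  by_cases hnH : n ≤ H
  · have h1 : (n : ℝ) ≤ H := by exact_mod_cast hnH
    have h3 : (0 : ℝ) ≤ (((Finset.Ico s K).filter P).card : ℝ) := by positivity
    have h4 : (0 : ℝ) ≤ (((Finset.Ico s K).filter bad).card : ℝ) := by positivity
    rw [abs_le]
    constructor <;> linarith
  · by_cases hb : bad s
    · have h1 := ih (n - 1) (by omega) (s + 1) (by omega) (by omega)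
      have h2 := hsplit P 1 (by omega)
      have h3 := hsplit bad 1 (by omega)
      have h4 : ((range 1).filter (fun h => bad (s + h))).card = 1 := by
        simp [Finset.filter_singleton, hb]
      have h5 : ((range 1).filter (fun h => P (s + h))).card ≤ 1 := by
        simpa using Finset.card_filter_le (range 1) (fun h => P (s + h))
      have h5' : (((range 1).filter (fun h => P (s + h))).card : ℝ) ≤ 1 := by exact_mod_cast h5
      have h5'' : (0 : ℝ) ≤ (((range 1).filter (fun h => P (s + h))).card : ℝ) := by positivity
      rw [h2, h3, h4]
      push_cast
      rw [Nat.cast_sub (by omega)] at h1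
      push_cast at h1
      have h6 : 12 * ((n : ℝ) - 1) / q0 ≤ 12 * n / q0 := by gcongr; linarith
      rw [abs_le] at h1 ⊢
      constructor <;> nlinarith [h1.1, h1.2]
    · obtain ⟨q, hq1, hqq, hqH, hq⟩ := hgood s hs (by omega) hb
      have h1 := ih (n - q) (by omega) (s + q) (by omega) (by omega)
      have h2 := hsplit P q (by omega)
      have h3 := hsplit bad q (by omega)
      rw [h2, h3]
      push_cast
      rw [Nat.cast_sub (by omega)] at h1
      have h4 : (0 : ℝ) ≤ (((range q).filter (fun h => bad (s + h))).card : ℝ) := by positivity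
      have h6 : 12 * ((n : ℝ) - q) / q0 + 12 ≤ 12 * n / q0 := by
        have : 12 ≤ 12 * q / q0 := by
          rw [le_div_iff₀ hq0]; linarith
        have e : 12 * ((n : ℝ) - q) / q0 = 12 * n / q0 - 12 * q / q0 := by ring
        linarith
      rw [abs_le] at h1 hq ⊢
      constructor <;> nlinarith [h1.1, h1.2, hq.1, hq.2]

lemma biUnion_card_real {ι : Type*} (s : Finset ι) (t : ι → Finset ℕ) (B : ℝ)
    (h : ∀ i ∈ s, ((t i).card : ℝ) ≤ B) : ((s.biUnion t).card : ℝ) ≤ s.card * B := by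
  calc ((s.biUnion t).card : ℝ) ≤ ((∑ i ∈ s, (t i).card : ℕ) : ℝ) := by
        exact_mod_cast Finset.card_biUnion_le
    _ = ∑ i ∈ s, ((t i).card : ℝ) := by push_cast; rfl
    _ ≤ ∑ i ∈ s, B := Finset.sum_le_sum h
    _ = s.card * B := by simp

lemma mono_of_taylor (K0 K : ℕ) (f g : ℕ → ℝ) (l0 l1 : ℝ)
    (htay : ∀ s t : ℕ, K0 ≤ s → s ≤ K → K0 ≤ t → t ≤ K →
      l0 / 2 * ((t : ℝ) - s) ^ 2 ≤ f t - f s - g s * ((t : ℝ) - s) ∧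
      f t - f s - g s * ((t : ℝ) - s) ≤ l1 / 2 * ((t : ℝ) - s) ^ 2)
    (s t : ℕ) (hs : K0 ≤ s) (hst : s < t) (ht : t ≤ K) :
    l0 * ((t : ℝ) - s) ≤ g t - g s := by
  have h1 := (htay s t hs (by omega) (by omega) ht).1
  have h2 := (htay t s (by omega) ht hs (by omega)).1
  have h3 : (0 : ℝ) < (t : ℝ) - s := by
    have : (s : ℝ) < t := by exact_mod_cast hst
    linarith
  have h4 : (l0 * ((t : ℝ) - s)) * ((t : ℝ) - s) ≤ (g t - g s) * ((t : ℝ) - s) := by nlinarith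
  exact le_of_mul_le_mul_right h4 h3

lemma equi (K0 K : ℕ) (hK : K0 ≤ K) (f g : ℕ → ℝ) (l0 l1 F δ : ℝ) (hl0 : 0 < l0) (hl1 : 0 ≤ l1)
    (H q0 : ℕ) (hH : 1 ≤ H) (hq0 : 1 ≤ q0) (hδ0 : 0 ≤ δ) (hδ1 : δ ≤ 1)
    (htay : ∀ s t : ℕ, K0 ≤ s → s ≤ K → K0 ≤ t → t ≤ K →
      l0 / 2 * ((t : ℝ) - s) ^ 2 ≤ f t - f s - g s * ((t : ℝ) - s) ∧
      f t - f s - g s * ((t : ℝ) - s) ≤ l1 / 2 * ((t : ℝ) - s) ^ 2)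
    (hg : ∀ s : ℕ, K0 ≤ s → s ≤ K → 0 ≤ g s ∧ g s ≤ F)
    (hlH : l1 * (H : ℝ) ^ 3 ≤ 2) :
    |(((Finset.Ico K0 K).filter (fun k => Int.fract (f k) < δ)).card : ℝ) - ((K : ℝ) - K0) * δ| ≤
      12 * ((K : ℝ) - K0) / q0 + q0 * (q0 * F + 2) * (1 + 2 / (H * l0)) + H := by
  have hHr : (1 : ℝ) ≤ H := by exact_mod_cast hH
  have hq0r : (1 : ℝ) ≤ q0 := by exact_mod_cast hq0
  have hF : 0 ≤ F := (hg K0 le_rfl hK).1.trans (hg K0 le_rfl hK).2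
  set bad : ℕ → Prop := fun k => ∃ r : ℚ, |g k - r| ≤ 1 / (((H : ℝ) + 1) * r.den) ∧ r.den < q0
    with hbad
  have h1 := adaptive_count (fun k => Int.fract (f k) < δ) bad K0 K H q0 δ (by positivity) hδ0 hδ1
    (by
      intro k hk hkH hb
      obtain ⟨r, hr1, hr2⟩ := Real.exists_rat_abs_sub_le_and_den_le (g k) hH
      have hden : q0 ≤ r.den := by
        by_contra hlt
        exact hb ⟨r, by exact_mod_cast hr1, by omega⟩
      refine ⟨r.den, r.pos, by exact_mod_cast hden, hr2, ?_⟩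
      apply block_count r.den r.pos r.num _ (f k) (fun h => f (k + h)) _ δ hδ0 hδ1
      · rw [Int.isCoprime_iff_gcd_eq_one]
        exact r.reduced
      · intro h hh
        have ht := htay k (k + h) hk (by omega) (by omega) (by omega)
        push_cast at ht
        have e1 : ((k : ℝ) + h - k) = h := by ring
        rw [e1] at ht
        have hd : (0 : ℝ) < r.den := by exact_mod_cast r.pos
        have hh' : (h : ℝ) ≤ r.den := by exact_mod_cast hh.le
        have hdH : (r.den : ℝ) ≤ H := by exact_mod_cast hr2
        have hrr : (r : ℝ) = r.num / r.den := by exact_mod_cast (Rat.num_div_den r).symm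
        have e2 : f (k + h) - (f k + r.num * h / r.den) =
            (f (k + h) - f k - g k * h) + (g k - r) * h := by
          rw [hrr]; ring
        rw [e2]
        have hA : |f (k + h) - f k - g k * h| ≤ 1 / r.den := by
          rw [abs_of_nonneg (by have := ht.1; have : 0 ≤ l0 / 2 * (h : ℝ) ^ 2 := by positivity
                                linarith)]
          refine ht.2.trans ?_
          rw [le_div_iff₀ hd]
          have : (h : ℝ) ^ 2 * r.den ≤ (H : ℝ) ^ 2 * H := by
            gcongr
            linarith
          nlinarith
        have hB : |(g k - r) * h| ≤ 1 / r.den := by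
          rw [abs_mul, abs_of_nonneg (show (0 : ℝ) ≤ h by positivity)]
          calc |g k - r| * h ≤ 1 / (((H : ℝ) + 1) * r.den) * r.den := by gcongr
            _ = 1 / ((H : ℝ) + 1) := by field_simp
            _ ≤ 1 / r.den := by
              apply one_div_le_one_div_of_le hd
              linarith
        calc _ ≤ |f (k + h) - f k - g k * h| + |(g k - r) * h| := abs_add_le _ _
          _ ≤ 1 / r.den + 1 / r.den := add_le_add hA hB
          _ = 2 / r.den := by ring) (K - K0) K0 le_rfl (by omega)
  rw [Nat.cast_sub hK] at h1
  refine h1.trans ?_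
  gcongr
  -- bad count
  set cell : ℕ × ℕ → Finset ℕ := fun p => (Finset.Ico K0 K).filter
    (fun k => |g k - (p.2 : ℝ) / p.1| ≤ 1 / H) with hcell
  have hsub : (Finset.Ico K0 K).filter bad ⊆
      ((range q0) ×ˢ (range (⌊(q0 : ℝ) * F⌋₊ + 2))).biUnion cell := by
    intro k hk
    simp only [Finset.mem_filter, hbad] at hk
    obtain ⟨hk1, r, hr1, hr2⟩ := hk
    have hk2 := Finset.mem_Ico.mp hk1
    have hgk := hg k hk2.1 hk2.2.le
    have hd : (1 : ℝ) ≤ r.den := by exact_mod_cast r.pos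
    have hd0 : (0 : ℝ) < r.den := by linarith
    have hrr : (r : ℝ) = r.num / r.den := by exact_mod_cast (Rat.num_div_den r).symm
    have hlt : 1 / (((H : ℝ) + 1) * r.den) < 1 / r.den := by
      apply one_div_lt_one_div_of_lt hd0
      nlinarith
    have hle : 1 / (((H : ℝ) + 1) * r.den) ≤ 1 / H := by
      apply one_div_le_one_div_of_le (by linarith)
      nlinarith
    have hab := abs_le.mp hr1
    have hnum1 : (-1 : ℝ) < r.num := by
      have : -(1 / (r.den : ℝ)) < r.num / r.den := by rw [← hrr]; linarith [hab.2, hgk.1]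
      have h3 : -(1 / (r.den : ℝ)) = (-1) / r.den := by ring
      rw [h3, div_lt_div_iff_of_pos_right hd0] at this
      exact this
    have hnum0 : 0 ≤ r.num := by
      have : (-1 : ℤ) < r.num := by exact_mod_cast hnum1
      omega
    have hnum2 : (r.num : ℝ) < q0 * F + 1 := by
      have : (r.num : ℝ) / r.den < F + 1 / r.den := by rw [← hrr]; linarith [hab.1, hgk.2]
      have h3 : F + 1 / (r.den : ℝ) = (r.den * F + 1) / r.den := by field_simp
      rw [h3, div_lt_div_iff_of_pos_right hd0] at this
      have h4 : (r.den : ℝ) ≤ q0 := by exact_mod_cast hr2.le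
      nlinarith
    have hcast : ((r.num.toNat : ℕ) : ℝ) = r.num := by
      have : ((r.num.toNat : ℕ) : ℤ) = r.num := Int.toNat_of_nonneg hnum0
      exact_mod_cast this
    rw [Finset.mem_biUnion]
    refine ⟨(r.den, r.num.toNat), ?_, ?_⟩
    · simp only [Finset.mem_product, Finset.mem_range]
      refine ⟨hr2, ?_⟩
      have h5 := Nat.lt_floor_add_one ((q0 : ℝ) * F)
      have : (r.num.toNat : ℝ) < ⌊(q0 : ℝ) * F⌋₊ + 2 := by rw [hcast]; linarith
      exact_mod_cast this
    · simp only [hcell, Finset.mem_filter]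
      refine ⟨hk1, ?_⟩
      rw [hcast, ← hrr]
      exact hr1.trans hle
  have hcard : ∀ p ∈ ((range q0) ×ˢ (range (⌊(q0 : ℝ) * F⌋₊ + 2))),
      ((cell p).card : ℝ) ≤ 1 + 2 / (H * l0) := by
    intro p _
    have := spacing_card (cell p) 1 le_rfl (2 / (H * l0)) (by positivity)
      (by intro k _ k' _ h; omega)
      (by
        intro k hk k' hk' hlt
        simp only [hcell, Finset.mem_filter, Finset.mem_Ico] at hk hk'
        have h2 := mono_of_taylor K0 K f g l0 l1 htay k k' hk.1.1 hlt hk'.1.2.le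
        have h3 := abs_le.mp hk.2
        have h4 := abs_le.mp hk'.2
        rw [le_div_iff₀ (by positivity)]
        have h5 : l0 * ((k' : ℝ) - k) ≤ 2 * (1 / H) := by linarith [h3.1, h4.2]
        have h6 : (l0 * ((k' : ℝ) - k)) * H ≤ (2 * (1 / H)) * H := by gcongr
        have h7 : (2 * (1 / (H : ℝ))) * H = 2 := by field_simp
        linarith)
    simpa using this
  have hfin := biUnion_card_real _ cell _ hcard
  have hle : (((Finset.Ico K0 K).filter bad).card : ℝ) ≤
      ((((range q0) ×ˢ (range (⌊(q0 : ℝ) * F⌋₊ + 2))).biUnion cell).card : ℝ) := by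
    exact_mod_cast Finset.card_le_card hsub
  refine hle.trans (hfin.trans ?_)
  rw [Finset.card_product, Finset.card_range, Finset.card_range]
  push_cast
  have h5 := Nat.floor_le (show 0 ≤ (q0 : ℝ) * F by positivity)
  gcongr

lemma block_min_card (S : Finset ℕ) (K l : ℕ) (hS : ∀ n ∈ S, n ≤ K)
    (R : ℕ → ℕ → Prop) (hR : ∀ a b, R a b → R b a → a = b) :
    (S.filter (fun n => ∀ n' ∈ S, n' / l = n / l → R n n')).card ≤ K / l + 1 := by
  rw [← Finset.card_range (K / l + 1)]
  apply Finset.card_le_card_of_injOn (fun n => n / l)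
  · intro n hn
    simp only [Finset.coe_filter, Set.mem_ofPred_eq] at hn
    simp only [Finset.coe_range, Set.mem_Iio]
    have := Nat.div_le_div_right (c := l) (hS n hn.1)
    omega
  · intro n hn n' hn' he
    simp only [Finset.coe_filter, Set.mem_ofPred_eq] at hn hn'
    simp only at he
    exact hR _ _ (hn.2 n' hn'.1 he.symm) (hn'.2 n hn.1 he)

set_option maxHeartbeats 1000000 in
lemma triple_local (n1 n2 n3 : ℕ) (h12 : n1 < n2) (h23 : n2 < n3) (f1 f2 f3 g l0 l1 F δ L0 : ℝ)
    (hl0 : 0 < l0) (hl1 : 0 < l1) (hδ0 : 0 < δ) (hδ1 : δ ≤ 1 / 2)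
    (hL : (n3 : ℝ) - n1 < L0) (hL1 : 2 * δ * L0 ≤ 1) (hL2 : l1 * L0 ^ 3 ≤ 1)
    (hθ1 : Int.fract f1 < δ) (hθ2 : Int.fract f2 < δ) (hθ3 : Int.fract f3 < δ)
    (hg1 : δ < g) (hg2 : g ≤ F)
    (t1 : l0 / 2 * ((n1 : ℝ) - n2) ^ 2 ≤ f1 - f2 - g * ((n1 : ℝ) - n2) ∧
      f1 - f2 - g * ((n1 : ℝ) - n2) ≤ l1 / 2 * ((n1 : ℝ) - n2) ^ 2)
    (t3 : l0 / 2 * ((n3 : ℝ) - n2) ^ 2 ≤ f3 - f2 - g * ((n3 : ℝ) - n2) ∧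
      f3 - f2 - g * ((n3 : ℝ) - n2) ≤ l1 / 2 * ((n3 : ℝ) - n2) ^ 2) :
    ∃ q p : ℕ, 1 ≤ q ∧ (q : ℝ) ^ 2 ≤ 2 * δ / l0 ∧ 1 ≤ p ∧ (p : ℝ) ≤ 2 * q * F ∧
      |g - (p : ℝ) / q| ≤ δ / q ∧ n2 + q ≤ n3 ∧ q ≤ n2 := by
  obtain ⟨a, ha⟩ : ∃ a : ℕ, n2 = n1 + a := ⟨n2 - n1, by omega⟩
  obtain ⟨b, hb⟩ : ∃ b : ℕ, n3 = n2 + b := ⟨n3 - n2, by omega⟩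
  have ha1 : 1 ≤ a := by omega
  have hb1 : 1 ≤ b := by omega
  have hn3 : (n3 : ℝ) = n2 + b := by rw [hb]; push_cast; ring
  have hn1 : (n2 : ℝ) = n1 + a := by rw [ha]; push_cast; ring
  have e1 : (n1 : ℝ) - n2 = -a := by rw [hn1]; ring
  have e3 : (n3 : ℝ) - n2 = b := by rw [hn3]; ring
  have eL : (n3 : ℝ) - n1 = a + b := by linarith
  rw [e1] at t1
  rw [e3] at t3
  rw [eL] at hL
  have haR : (1 : ℝ) ≤ a := by exact_mod_cast ha1
  have hbR : (1 : ℝ) ≤ b := by exact_mod_cast hb1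
  obtain ⟨m1, θ1, x1, p1, hθ1⟩ : ∃ (m : ℤ) (θ : ℝ), f1 = m + θ ∧ 0 ≤ θ ∧ θ < δ :=
    ⟨⌊f1⌋, Int.fract f1, (Int.floor_add_fract f1).symm, Int.fract_nonneg _, hθ1⟩
  obtain ⟨m2, θ2, x2, p2, hθ2⟩ : ∃ (m : ℤ) (θ : ℝ), f2 = m + θ ∧ 0 ≤ θ ∧ θ < δ :=
    ⟨⌊f2⌋, Int.fract f2, (Int.floor_add_fract f2).symm, Int.fract_nonneg _, hθ2⟩
  obtain ⟨m3, θ3, x3, p3, hθ3⟩ : ∃ (m : ℤ) (θ : ℝ), f3 = m + θ ∧ 0 ≤ θ ∧ θ < δ :=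
    ⟨⌊f3⌋, Int.fract f3, (Int.floor_add_fract f3).symm, Int.fract_nonneg _, hθ3⟩
  have L0pos : 0 < L0 := by linarith
  have hVlo : l0 / 2 * (a * b * (a + b)) ≤ f1 * b - f2 * (a + b) + f3 * a := by
    have u1 : l0 / 2 * (-a : ℝ) ^ 2 * b ≤ (f1 - f2 - g * (-a)) * b :=
      mul_le_mul_of_nonneg_right t1.1 (by linarith)
    have u3 : l0 / 2 * (b : ℝ) ^ 2 * a ≤ (f3 - f2 - g * b) * a :=
      mul_le_mul_of_nonneg_right t3.1 (by linarith)
    linarith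
  have hVhi : f1 * b - f2 * (a + b) + f3 * a ≤ l1 / 2 * (a * b * (a + b)) := by
    have u1 : (f1 - f2 - g * (-a)) * b ≤ l1 / 2 * (-a : ℝ) ^ 2 * b :=
      mul_le_mul_of_nonneg_right t1.2 (by linarith)
    have u3 : (f3 - f2 - g * b) * a ≤ l1 / 2 * (b : ℝ) ^ 2 * a :=
      mul_le_mul_of_nonneg_right t3.2 (by linarith)
    linarith
  have hV0 : 0 ≤ l0 / 2 * ((a : ℝ) * b * (a + b)) := by positivity
  have hV1 : l1 / 2 * ((a : ℝ) * b * (a + b)) ≤ 1 / 8 := by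
    have w1 : (a : ℝ) * b ≤ (a + b) ^ 2 / 4 := by nlinarith [sq_nonneg ((a : ℝ) - b)]
    have w2 : (a : ℝ) * b * (a + b) ≤ (a + b) ^ 2 / 4 * (a + b) := by gcongr
    have w3 : ((a : ℝ) + b) ^ 3 ≤ L0 ^ 3 := by gcongr
    have w4 : l1 * ((a : ℝ) + b) ^ 3 ≤ l1 * L0 ^ 3 := by gcongr
    have w5 := mul_le_mul_of_nonneg_left w2 (show 0 ≤ l1 / 2 by linarith)
    have w6 : l1 / 2 * (((a : ℝ) + b) ^ 2 / 4 * (a + b)) = l1 * ((a : ℝ) + b) ^ 3 / 8 := by ring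
    linarith
  have hdiff : f1 * b - f2 * (a + b) + f3 * a - ((m1 * b - m2 * (a + b) + m3 * a : ℤ) : ℝ) =
      θ1 * b - θ2 * (a + b) + θ3 * a := by
    push_cast
    rw [x1, x2, x3]; ring
  have y1 : θ1 * b ≤ δ * b := by gcongr
  have y2 : θ2 * (a + b) ≤ δ * (a + b) := by gcongr
  have y3 : θ3 * a ≤ δ * a := by gcongr
  have y1' : 0 ≤ θ1 * b := by positivity
  have y2' : 0 ≤ θ2 * (a + b) := by positivity
  have y3' : 0 ≤ θ3 * a := by positivity
  have y4 : δ * (a + b) ≤ 1 / 2 := by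
    have := mul_le_mul_of_nonneg_left hL.le hδ0.le
    linarith
  have hΔ : m1 * b - m2 * (a + b) + m3 * a = 0 := by
    have z1 : ((m1 * b - m2 * (a + b) + m3 * a : ℤ) : ℝ) < 1 := by linarith
    have z2 : (-1 : ℝ) < ((m1 * b - m2 * (a + b) + m3 * a : ℤ) : ℝ) := by linarith
    have z1' : (m1 * b - m2 * (a + b) + m3 * a : ℤ) < 1 := by exact_mod_cast z1
    have z2' : (-1 : ℤ) < (m1 * b - m2 * (a + b) + m3 * a : ℤ) := by exact_mod_cast z2
    omega
  have hab : (a : ℝ) * b ≤ 2 * δ / l0 := by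
    rw [hΔ] at hdiff
    simp only [Int.cast_zero, sub_zero] at hdiff
    have z : l0 / 2 * (a * b * (a + b)) ≤ δ * (a + b) := by linarith
    have z2 : (l0 / 2 * (a * b)) * ((a : ℝ) + b) ≤ δ * (a + b) := by linarith
    have z3 := le_of_mul_le_mul_right z2 (by positivity)
    rw [le_div_iff₀ hl0]
    linarith
  -- the rational slope
  set r : ℚ := ((m2 - m1 : ℤ) : ℚ) / (a : ℚ) with hr
  have haQ : (a : ℚ) ≠ 0 := by positivity
  have hrden : (r.den : ℚ) ≠ 0 := by exact_mod_cast r.pos.ne'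
  have hnd : r * r.den = r.num := Rat.mul_den_eq_num r
  have hA : (a : ℤ) * r.num = r.den * (m2 - m1) := by
    have : (a : ℚ) * r.num = r.den * ((m2 - m1 : ℤ) : ℚ) := by
      rw [← hnd]
      have : r * a = ((m2 - m1 : ℤ) : ℚ) := by rw [hr]; field_simp
      rw [← this]; ring
    exact_mod_cast this
  have hB : (b : ℤ) * r.num = r.den * (m3 - m2) := by
    have hz : (a : ℤ) ≠ 0 := by positivity
    apply mul_left_cancel₀ hz
    have : (m3 - m2) * (a : ℤ) = (m2 - m1) * b := by linarith
    calc (a : ℤ) * (b * r.num) = b * (a * r.num) := by ring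
      _ = b * (r.den * (m2 - m1)) := by rw [hA]
      _ = r.den * ((m2 - m1) * b) := by ring
      _ = r.den * ((m3 - m2) * a) := by rw [this]
      _ = a * (r.den * (m3 - m2)) := by ring
  have hcop : IsCoprime (r.den : ℤ) r.num := by
    apply IsCoprime.symm
    rw [Int.isCoprime_iff_gcd_eq_one]
    exact r.reduced
  have hqa : r.den ≤ a := by
    apply Nat.le_of_dvd (by omega)
    have : (r.den : ℤ) ∣ a := hcop.dvd_of_dvd_mul_right ⟨_, hA⟩
    exact_mod_cast this
  have hqb : r.den ≤ b := by
    apply Nat.le_of_dvd (by omega)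
    have : (r.den : ℤ) ∣ b := hcop.dvd_of_dvd_mul_right ⟨_, hB⟩
    exact_mod_cast this
  have hqaR : (r.den : ℝ) ≤ a := by exact_mod_cast hqa
  have hqbR : (r.den : ℝ) ≤ b := by exact_mod_cast hqb
  have hq1 : (1 : ℝ) ≤ r.den := by exact_mod_cast r.pos
  have hAR : (a : ℝ) * r.num = r.den * (m2 - m1) := by exact_mod_cast hA
  have hBR : (b : ℝ) * r.num = r.den * (m3 - m2) := by exact_mod_cast hB
  -- bounds for g
  have hglo : (r.num : ℝ) - δ ≤ g * r.den := by
    have z1 : 0 ≤ l0 / 2 * (-a : ℝ) ^ 2 := by positivity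
    have z2 : (m2 : ℝ) - m1 - δ ≤ g * a := by linarith [t1.1]
    have z3 : ((m2 : ℝ) - m1 - δ) * r.den ≤ g * a * r.den := by gcongr
    have z4 : δ * r.den ≤ δ * a := by gcongr
    have z5 : ((r.num : ℝ) - δ) * a ≤ (g * r.den) * a := by linarith
    exact le_of_mul_le_mul_right z5 (by linarith)
  have hghi : g * r.den ≤ (r.num : ℝ) + δ := by
    have z1 : 0 ≤ l0 / 2 * (b : ℝ) ^ 2 := by positivity
    have z2 : g * b ≤ (m3 : ℝ) - m2 + δ := by linarith [t3.1]
    have z3 : g * b * r.den ≤ ((m3 : ℝ) - m2 + δ) * r.den := by gcongr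
    have z4 : δ * r.den ≤ δ * b := by gcongr
    have z5 : (g * r.den) * b ≤ ((r.num : ℝ) + δ) * b := by linarith
    exact le_of_mul_le_mul_right z5 (by linarith)
  have hnum : 0 < r.num := by
    have hz := mul_le_mul_of_nonneg_left hq1 (show 0 ≤ g by linarith)
    have : (0 : ℝ) < r.num := by linarith
    exact_mod_cast this
  have hcast : ((r.num.toNat : ℕ) : ℝ) = r.num := by
    have : ((r.num.toNat : ℕ) : ℤ) = r.num := Int.toNat_of_nonneg hnum.le
    exact_mod_cast this
  have hnum1 : (1 : ℝ) ≤ r.num := by exact_mod_cast hnum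
  refine ⟨r.den, r.num.toNat, r.pos, ?_, by omega, ?_, ?_, by omega, by omega⟩
  · refine le_trans ?_ hab
    rw [sq]; gcongr
  · rw [hcast]
    have : g * r.den ≤ F * r.den := by gcongr
    linarith
  · rw [hcast]
    have z : g - (r.num : ℝ) / r.den = (g * r.den - r.num) / r.den := by field_simp
    rw [z, abs_div, abs_of_pos (show (0 : ℝ) < r.den by linarith)]
    gcongr
    rw [abs_le]
    constructor <;> linarith

lemma upper (K0 K : ℕ) (f g : ℕ → ℝ) (l0 l1 F δ L0 : ℝ) (hl0 : 0 < l0)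
    (hl1 : 0 < l1) (hδ0 : 0 < δ) (hδ1 : δ ≤ 1 / 2) (hF : 0 ≤ F) (hL0 : 0 < L0)
    (hL1 : 2 * δ * L0 ≤ 1) (hL2 : l1 * L0 ^ 3 ≤ 1)
    (htay : ∀ s t : ℕ, K0 ≤ s → s ≤ K → K0 ≤ t → t ≤ K →
      l0 / 2 * ((t : ℝ) - s) ^ 2 ≤ f t - f s - g s * ((t : ℝ) - s) ∧
      f t - f s - g s * ((t : ℝ) - s) ≤ l1 / 2 * ((t : ℝ) - s) ^ 2)
    (hg : ∀ s : ℕ, K0 ≤ s → s ≤ K → δ < g s ∧ g s ≤ F) :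
    (((Finset.Icc K0 K).filter (fun k => Int.fract (f k) < δ)).card : ℝ) ≤
      2 * (K / L0 + 1) + 8 * F * δ / l0 * (1 + Real.log K) := by
  set S := (Finset.Icc K0 K).filter (fun k => Int.fract (f k) < δ) with hS
  have hSmem : ∀ n, n ∈ S ↔ (K0 ≤ n ∧ n ≤ K) ∧ Int.fract (f n) < δ := by
    intro n; simp [hS]
  set l := ⌈L0⌉₊ with hl
  have hl_pos : 0 < l := Nat.ceil_pos.mpr hL0
  set T1 := S.filter (fun n => ∀ n' ∈ S, n' / l = n / l → n ≤ n') with hT1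
  set T2 := S.filter (fun n => ∀ n' ∈ S, n' / l = n / l → n ≥ n') with hT2
  have hc1 : T1.card ≤ K / l + 1 := by
    convert block_min_card S K l (fun n hn => ((hSmem n).1 hn).1.2) (fun a b => a ≤ b)
      (fun a b h h' => le_antisymm h h')
  have hc2 : T2.card ≤ K / l + 1 := by
    convert block_min_card S K l (fun n hn => ((hSmem n).1 hn).1.2) (fun a b => a ≥ b)
      (fun a b h h' => le_antisymm h' h)
  have hKl : ((K / l + 1 : ℕ) : ℝ) ≤ K / L0 + 1 := by
    push_cast
    have : ((K / l : ℕ) : ℝ) ≤ (K : ℝ) / l := Nat.cast_div_le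
    have h2 : (K : ℝ) / l ≤ K / L0 := by
      gcongr
      exact Nat.le_ceil L0
    linarith
  set U := 2 * δ / l0 with hU
  have hU0 : 0 < U := by positivity
  set cell : ℕ → ℕ → Finset ℕ := fun q p => S.filter (fun n =>
    |g n - (p : ℝ) / q| ≤ δ / q ∧ ∀ n' ∈ S, n < n' → n + q ≤ n') with hcell
  set Qs := (Finset.Icc 1 K).filter (fun q : ℕ => (q : ℝ) ^ 2 ≤ U) with hQs
  set T3 := Qs.biUnion (fun q : ℕ => (Finset.Icc 1 ⌊2 * (q : ℝ) * F⌋₊).biUnion (cell q)) with hT3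
  have hsub : S ⊆ (T1 ∪ T2) ∪ T3 := by
    intro n hn
    by_cases h1 : n ∈ T1
    · simp [h1]
    by_cases h2 : n ∈ T2
    · simp [h2]
    have hnn := (hSmem n).1 hn
    simp only [hT1, Finset.mem_filter, not_and, not_forall, not_le] at h1
    simp only [hT2, Finset.mem_filter, not_and, not_forall, ge_iff_le, not_le] at h2
    obtain ⟨n', hn', hb', hlt'⟩ := h1 hn
    obtain ⟨n'', hn'', hb'', hlt''⟩ := h2 hn
    obtain ⟨n1, hn1, hmax⟩ := (S.filter (fun k => k < n)).exists_max_image id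
      ⟨n', by simp [hn', hlt']⟩
    obtain ⟨n3, hn3, hmin⟩ := (S.filter (fun k => n < k)).exists_min_image id
      ⟨n'', by simp [hn'', hlt'']⟩
    simp only [Finset.mem_filter, id] at hn1 hn3 hmax hmin
    have ha := hmax n' ⟨hn', hlt'⟩
    have hb := hmin n'' ⟨hn'', hlt''⟩
    have hspan : n3 - n1 < l := by
      have w1 := Nat.div_add_mod n' l
      have w2 := Nat.div_add_mod n'' l
      have w3 := Nat.mod_lt n'' hl_pos
      rw [hb'] at w1
      rw [hb''] at w2
      omega
    have hspan' : (n3 : ℝ) - n1 < L0 := by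
      have z := Nat.lt_ceil.mp hspan
      rw [Nat.cast_sub (by omega)] at z
      exact z
    have hm1 := (hSmem n1).1 hn1.1
    have hm3 := (hSmem n3).1 hn3.1
    obtain ⟨q, p, hq1, hqU, hp1, hpF, hgpq, hq3, hqn⟩ := triple_local n1 n n3 hn1.2 hn3.2 (f n1) (f n)
      (f n3) (g n) l0 l1 F δ L0 hl0 hl1 hδ0 hδ1 hspan' hL1 hL2 hm1.2 hnn.2 hm3.2
      (hg n hnn.1.1 hnn.1.2).1 (hg n hnn.1.1 hnn.1.2).2
      (htay n n1 hnn.1.1 hnn.1.2 hm1.1.1 hm1.1.2) (htay n n3 hnn.1.1 hnn.1.2 hm3.1.1 hm3.1.2)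
    rw [Finset.mem_union]
    right
    rw [hT3, Finset.mem_biUnion]
    refine ⟨q, ?_, ?_⟩
    · simp only [hQs, Finset.mem_filter, Finset.mem_Icc]
      exact ⟨⟨hq1, by omega⟩, hqU⟩
    · rw [Finset.mem_biUnion]
      refine ⟨p, ?_, ?_⟩
      · rw [Finset.mem_Icc]
        exact ⟨hp1, Nat.le_floor hpF⟩
      · simp only [hcell, Finset.mem_filter]
        refine ⟨hn, hgpq, ?_⟩
        intro k hk hnk
        have := hmin k ⟨hk, hnk⟩
        omega
  have hcellcard : ∀ q p : ℕ, 1 ≤ q → ((cell q p).card : ℝ) ≤ 1 + U / (q : ℝ) ^ 2 := by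
    intro q p hq
    have hqR : (0 : ℝ) < q := by exact_mod_cast hq
    have h := spacing_card (cell q p) q hq (U / q) (by positivity)
      (by
        intro k hk k' hk' hlt
        simp only [hcell, Finset.mem_filter] at hk hk'
        exact hk.2.2 k' hk'.1 hlt)
      (by
        intro k hk k' hk' hlt
        simp only [hcell, Finset.mem_filter] at hk hk'
        have hm := (hSmem k).1 hk.1
        have hm' := (hSmem k').1 hk'.1
        have h2 := mono_of_taylor K0 K f g l0 l1 htay k k' hm.1.1 hlt hm'.1.2
        have h3 := abs_le.mp hk.2.1
        have h4 := abs_le.mp hk'.2.1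
        have h5 : l0 * ((k' : ℝ) - k) ≤ 2 * (δ / q) := by linarith [h3.1, h4.2]
        have h6 : U / q = 2 * (δ / q) / l0 := by rw [hU]; field_simp
        rw [h6, le_div_iff₀ hl0]
        linarith)
    have e : U / q / q = U / (q : ℝ) ^ 2 := by field_simp
    rw [e] at h
    exact h
  have hT3card : (T3.card : ℝ) ≤ 4 * F * U * (1 + Real.log K) := by
    calc (T3.card : ℝ) ≤ ((∑ q ∈ Qs, ((Finset.Icc 1 ⌊2 * (q : ℝ) * F⌋₊).biUnion (cell q)).card : ℕ) : ℝ) :=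
          Nat.cast_le.mpr Finset.card_biUnion_le
      _ = ∑ q ∈ Qs, (((Finset.Icc 1 ⌊2 * (q : ℝ) * F⌋₊).biUnion (cell q)).card : ℝ) := by push_cast; rfl
      _ ≤ ∑ q ∈ Qs, 4 * F * U * (q : ℝ)⁻¹ := by
          apply Finset.sum_le_sum
          intro q hq
          simp only [hQs, Finset.mem_filter, Finset.mem_Icc] at hq
          have hqR : (0 : ℝ) < q := by exact_mod_cast hq.1.1
          have h := biUnion_card_real (Finset.Icc 1 ⌊2 * (q : ℝ) * F⌋₊) (cell q) _
            (fun p _ => hcellcard q p hq.1.1)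
          refine h.trans ?_
          rw [Nat.card_Icc]
          have h2 := Nat.floor_le (show 0 ≤ 2 * (q : ℝ) * F by positivity)
          have h3 : ((⌊2 * (q : ℝ) * F⌋₊ + 1 - 1 : ℕ) : ℝ) ≤ 2 * (q : ℝ) * F := by
            simpa using h2
          have h4 : 1 ≤ U / (q : ℝ) ^ 2 := by
            rw [le_div_iff₀ (by positivity)]; linarith [hq.2]
          calc _ ≤ 2 * (q : ℝ) * F * (U / (q : ℝ) ^ 2 + U / (q : ℝ) ^ 2) := by gcongr
            _ = 4 * F * U * (q : ℝ)⁻¹ := by field_simp; ring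
      _ ≤ ∑ q ∈ Finset.Icc 1 K, 4 * F * U * (q : ℝ)⁻¹ := by
          apply Finset.sum_le_sum_of_subset_of_nonneg (Finset.filter_subset _ _)
          intro q _ _
          positivity
      _ = 4 * F * U * ∑ q ∈ Finset.Icc 1 K, (q : ℝ)⁻¹ := by rw [Finset.mul_sum]
      _ ≤ _ := by
          gcongr
          have h := harmonic_le_one_add_log K
          rw [harmonic_eq_sum_Icc] at h
          push_cast at h
          exact h
  have htot : S.card ≤ T1.card + T2.card + T3.card := by
    refine (Finset.card_le_card hsub).trans ?_
    have h1 := Finset.card_union_le (T1 ∪ T2) T3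
    have h2 := Finset.card_union_le T1 T2
    omega
  have htotR : (S.card : ℝ) ≤ T1.card + T2.card + T3.card := by exact_mod_cast htot
  have hc1R : (T1.card : ℝ) ≤ ((K / l + 1 : ℕ) : ℝ) := by exact_mod_cast hc1
  have hc2R : (T2.card : ℝ) ≤ ((K / l + 1 : ℕ) : ℝ) := by exact_mod_cast hc2
  have e : 8 * F * δ / l0 = 4 * F * U := by rw [hU]; ring
  rw [e]
  linarith

lemma tangent_line (h h' : ℝ → ℝ) (a b : ℝ)
    (hd : ∀ u ∈ Set.Icc a b, HasDerivAt h (h' u) u) (hm : MonotoneOn h' (Set.Icc a b))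
    (s t : ℝ) (hs : s ∈ Set.Icc a b) (ht : t ∈ Set.Icc a b) :
    h s + h' s * (t - s) ≤ h t := by
  rcases lt_trichotomy s t with hlt | heq | hlt
  · have hsub : Set.Icc s t ⊆ Set.Icc a b := Set.Icc_subset_Icc hs.1 ht.2
    obtain ⟨ξ, hξ, he⟩ := exists_hasDerivAt_eq_slope h h' hlt
      (fun u hu => (hd u (hsub hu)).continuousAt.continuousWithinAt)
      (fun u hu => hd u (hsub (Set.Ioo_subset_Icc_self hu)))
    have h1 := hm hs (hsub (Set.Ioo_subset_Icc_self hξ)) hξ.1.le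
    rw [he, le_div_iff₀ (by linarith)] at h1
    linarith
  · subst heq; simp
  · have hsub : Set.Icc t s ⊆ Set.Icc a b := Set.Icc_subset_Icc ht.1 hs.2
    obtain ⟨ξ, hξ, he⟩ := exists_hasDerivAt_eq_slope h h' hlt
      (fun u hu => (hd u (hsub hu)).continuousAt.continuousWithinAt)
      (fun u hu => hd u (hsub (Set.Ioo_subset_Icc_self hu)))
    have h1 := hm (hsub (Set.Ioo_subset_Icc_self hξ)) hs hξ.2.le
    rw [he, div_le_iff₀ (by linarith)] at h1
    linarith

lemma rpow_taylor (c a b : ℝ) (hc1 : 1 < c) (hc2 : c < 2) (ha : 0 < a) (s t : ℝ)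
    (hs : s ∈ Set.Icc a b) (ht : t ∈ Set.Icc a b) :
    c * (c - 1) * b ^ (c - 2) / 2 * (t - s) ^ 2 ≤ t ^ c - s ^ c - c * s ^ (c - 1) * (t - s) ∧
    t ^ c - s ^ c - c * s ^ (c - 1) * (t - s) ≤ c * (c - 1) * a ^ (c - 2) / 2 * (t - s) ^ 2 := by
  have hcc : 0 < c * (c - 1) := by apply mul_pos <;> linarith
  have hd1 : ∀ u ∈ Set.Icc a b, HasDerivAt (fun u : ℝ => u ^ c) (c * u ^ (c - 1)) u := by
    intro u hu
    exact Real.hasDerivAt_rpow_const (Or.inl (by linarith [hu.1]))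
  have hd2 : ∀ u ∈ Set.Icc a b, HasDerivAt (fun u : ℝ => c * u ^ (c - 1))
      (c * (c - 1) * u ^ (c - 2)) u := by
    intro u hu
    have := (Real.hasDerivAt_rpow_const (x := u) (p := c - 1) (Or.inl (by linarith [hu.1]))).const_mul c
    have e : c * (c - 1) * u ^ (c - 2) = c * ((c - 1) * u ^ (c - 1 - 1)) := by
      rw [show c - 1 - 1 = c - 2 by ring]; ring
    rw [e]
    exact this
  have hsq : ∀ (l u : ℝ), HasDerivAt (fun u : ℝ => l / 2 * u ^ 2) (l * u) u := by
    intro l u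
    have := (hasDerivAt_pow 2 u).const_mul (l / 2)
    have e : l * u = l / 2 * (((2 : ℕ) : ℝ) * u ^ (2 - 1)) := by push_cast; ring
    rw [e]
    exact this
  have hlin : ∀ (l u : ℝ), HasDerivAt (fun u : ℝ => l * u) l u := by
    intro l u
    simpa using (hasDerivAt_id u).const_mul l
  have hb2 : ∀ u ∈ Set.Icc a b, b ^ (c - 2) ≤ u ^ (c - 2) := by
    intro u hu
    exact Real.rpow_le_rpow_of_nonpos (by linarith [hu.1]) hu.2 (by linarith)
  have ha2 : ∀ u ∈ Set.Icc a b, u ^ (c - 2) ≤ a ^ (c - 2) := by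
    intro u hu
    exact Real.rpow_le_rpow_of_nonpos ha hu.1 (by linarith)
  constructor
  · set l := c * (c - 1) * b ^ (c - 2) with hl
    have hm : MonotoneOn (fun u : ℝ => c * u ^ (c - 1) - l * u) (Set.Icc a b) := by
      have hdd : ∀ u ∈ Set.Icc a b, HasDerivAt (fun u : ℝ => c * u ^ (c - 1) - l * u)
          (c * (c - 1) * u ^ (c - 2) - l) u := fun u hu => (hd2 u hu).sub (hlin l u)
      apply monotoneOn_of_deriv_nonneg (convex_Icc a b)
      · exact fun u hu => (hdd u hu).continuousAt.continuousWithinAt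
      · exact fun u hu => (hdd u (interior_subset hu)).differentiableAt.differentiableWithinAt
      · intro u hu
        rw [(hdd u (interior_subset hu)).deriv, hl]
        have := mul_le_mul_of_nonneg_left (hb2 u (interior_subset hu)) hcc.le
        linarith
    have := tangent_line (fun u : ℝ => u ^ c - l / 2 * u ^ 2) _ a b
      (fun u hu => (hd1 u hu).sub (hsq l u)) hm s t hs ht
    nlinarith
  · set l := c * (c - 1) * a ^ (c - 2) with hl
    have hm : MonotoneOn (fun u : ℝ => l * u - c * u ^ (c - 1)) (Set.Icc a b) := by
      have hdd : ∀ u ∈ Set.Icc a b, HasDerivAt (fun u : ℝ => l * u - c * u ^ (c - 1))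
          (l - c * (c - 1) * u ^ (c - 2)) u := fun u hu => (hlin l u).sub (hd2 u hu)
      apply monotoneOn_of_deriv_nonneg (convex_Icc a b)
      · exact fun u hu => (hdd u hu).continuousAt.continuousWithinAt
      · exact fun u hu => (hdd u (interior_subset hu)).differentiableAt.differentiableWithinAt
      · intro u hu
        rw [(hdd u (interior_subset hu)).deriv, hl]
        have := mul_le_mul_of_nonneg_left (ha2 u (interior_subset hu)) hcc.le
        linarith
    have := tangent_line (fun u : ℝ => l / 2 * u ^ 2 - u ^ c) _ a b
      (fun u hu => (hsq l u).sub (hd1 u hu)) hm s t hs ht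
    nlinarith

/-- Taylor bounds for `A * k ^ c` in the form used by `equi` and `upper`. -/
lemma htay_rpow (c A : ℝ) (hc1 : 1 < c) (hc2 : c < 2) (hA : 0 ≤ A) (K0 K : ℕ) (a b : ℝ) (ha : 0 < a)
    (haK : a ≤ K0) (hbK : K ≤ b) :
    ∀ s t : ℕ, K0 ≤ s → s ≤ K → K0 ≤ t → t ≤ K →
      (A * (c * (c - 1) * b ^ (c - 2))) / 2 * ((t : ℝ) - s) ^ 2 ≤
        A * (t : ℝ) ^ c - A * (s : ℝ) ^ c - (A * (c * (s : ℝ) ^ (c - 1))) * ((t : ℝ) - s) ∧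
      A * (t : ℝ) ^ c - A * (s : ℝ) ^ c - (A * (c * (s : ℝ) ^ (c - 1))) * ((t : ℝ) - s) ≤
        (A * (c * (c - 1) * a ^ (c - 2))) / 2 * ((t : ℝ) - s) ^ 2 := by
  intro s t hs1 hs2 ht1 ht2
  have h1 : (K0 : ℝ) ≤ s := by exact_mod_cast hs1
  have h2 : (s : ℝ) ≤ K := by exact_mod_cast hs2
  have h3 : (K0 : ℝ) ≤ t := by exact_mod_cast ht1
  have h4 : (t : ℝ) ≤ K := by exact_mod_cast ht2
  have h := rpow_taylor c a b hc1 hc2 ha s t ⟨by linarith, by linarith⟩ ⟨by linarith, by linarith⟩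
  have hl := mul_le_mul_of_nonneg_left h.1 hA
  have hr := mul_le_mul_of_nonneg_left h.2 hA
  constructor <;> linarith

/-- indicator of cube-free numbers -/
noncomputable def cfI (m : ℕ) : ℝ := if CubeFree m then 1 else 0

/-- truncated Moebius sum -/
noncomputable def sY (Y m : ℕ) : ℝ :=
  ∑ d ∈ (Finset.Icc 1 Y).filter (fun d => d ^ 3 ∣ m), (ArithmeticFunction.moebius d : ℝ)

lemma abs_moebius_real (d : ℕ) : |(ArithmeticFunction.moebius d : ℝ)| ≤ 1 := by
  have := ArithmeticFunction.abs_moebius_le_one (n := d)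
  exact_mod_cast this

lemma cube_part (m : ℕ) (hm : 1 ≤ m) : ∃ M : ℕ, 1 ≤ M ∧ ∀ d : ℕ, d ^ 3 ∣ m ↔ d ∣ M := by
  obtain ⟨M, hM, hmax⟩ := ((Finset.Icc 1 m).filter (fun d => d ^ 3 ∣ m)).exists_max_image id
    ⟨1, by simp [hm]⟩
  simp only [Finset.mem_filter, Finset.mem_Icc, id] at hM hmax
  refine ⟨M, hM.1.1, fun d => ⟨fun hd => ?_, fun hd => (pow_dvd_pow_of_dvd hd 3).trans hM.2⟩⟩
  have h1 : (d.lcm M) ^ 3 ∣ m := by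
    rw [← Nat.pow_lcm_pow]
    exact Nat.lcm_dvd hd hM.2
  have h0 : d.lcm M ≠ 0 := by
    intro h
    rw [h] at h1
    simp at h1
    omega
  have h2 : d.lcm M ≤ m := by
    calc d.lcm M ≤ (d.lcm M) ^ 3 := Nat.le_self_pow (by norm_num) _
      _ ≤ m := Nat.le_of_dvd hm h1
  have h3 := hmax (d.lcm M) ⟨⟨by omega, h2⟩, h1⟩
  have h4 : M ≤ d.lcm M := Nat.le_of_dvd (by omega) (Nat.dvd_lcm_right d M)
  have h5 : d.lcm M = M := le_antisymm h3 h4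
  rw [← h5]
  exact Nat.dvd_lcm_left d M

lemma cfI_eq (m : ℕ) (hm : 1 ≤ m) : cfI m = sY m m := by
  obtain ⟨M, hM1, hM⟩ := cube_part m hm
  have hset : (Finset.Icc 1 m).filter (fun d => d ^ 3 ∣ m) = M.divisors := by
    ext d
    simp only [Finset.mem_filter, Finset.mem_Icc, Nat.mem_divisors]
    rw [hM d]
    constructor
    · intro h; exact ⟨h.2, by omega⟩
    · intro h
      have hd : 1 ≤ d := Nat.pos_of_dvd_of_pos h.1 hM1
      refine ⟨⟨hd, ?_⟩, h.1⟩
      have := (hM d).2 h.1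
      calc d ≤ d ^ 3 := Nat.le_self_pow (by norm_num) _
        _ ≤ m := Nat.le_of_dvd hm this
  have hsum : ∑ d ∈ M.divisors, (ArithmeticFunction.moebius d : ℝ) = if M = 1 then 1 else 0 := by
    have h := congrArg (fun F : ArithmeticFunction ℤ => F M) ArithmeticFunction.moebius_mul_coe_zeta
    simp only [ArithmeticFunction.coe_mul_zeta_apply, ArithmeticFunction.one_apply] at h
    have h2 : ((∑ d ∈ M.divisors, ArithmeticFunction.moebius d : ℤ) : ℝ) =
        ((if M = 1 then 1 else 0 : ℤ) : ℝ) := by rw [← h]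
    push_cast at h2
    exact h2
  rw [sY, hset, hsum, cfI]
  have : CubeFree m ↔ M = 1 := by
    constructor
    · intro h
      by_contra hne
      obtain ⟨p, hp, hpM⟩ := Nat.exists_prime_and_dvd hne
      exact h p hp ((hM p).2 hpM)
    · intro h p hp hpm
      have := (hM p).1 hpm
      rw [h] at this
      exact hp.one_lt.ne' (Nat.dvd_one.mp this)
  simp [this]

lemma cfI_approx (Y m : ℕ) (hm : 1 ≤ m) :
    |cfI m - sY Y m| ≤ (((Finset.Icc (Y + 1) m).filter (fun d => d ^ 3 ∣ m)).card : ℝ) := by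
  have hle : ∀ d, d ^ 3 ∣ m → d ≤ m := by
    intro d hd
    calc d ≤ d ^ 3 := Nat.le_self_pow (by norm_num) _
      _ ≤ m := Nat.le_of_dvd hm hd
  have hpos : ∀ d, d ^ 3 ∣ m → 1 ≤ d := by
    intro d hd
    rcases Nat.eq_zero_or_pos d with h | h
    · subst h; simp at hd; omega
    · exact h
  have hset : (Finset.Icc 1 m).filter (fun d => d ^ 3 ∣ m) =
      (Finset.Icc 1 Y).filter (fun d => d ^ 3 ∣ m) ∪
        (Finset.Icc (Y + 1) m).filter (fun d => d ^ 3 ∣ m) := by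
    ext d
    simp only [Finset.mem_filter, Finset.mem_Icc, Finset.mem_union]
    constructor
    · intro h
      by_cases hd : d ≤ Y
      · left; exact ⟨⟨h.1.1, hd⟩, h.2⟩
      · right; exact ⟨⟨by omega, h.1.2⟩, h.2⟩
    · intro h
      rcases h with h | h
      · exact ⟨⟨h.1.1, hle d h.2⟩, h.2⟩
      · exact ⟨⟨by omega, h.1.2⟩, h.2⟩
  have hdisj : Disjoint ((Finset.Icc 1 Y).filter (fun d => d ^ 3 ∣ m))
      ((Finset.Icc (Y + 1) m).filter (fun d => d ^ 3 ∣ m)) := by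
    rw [Finset.disjoint_left]
    intro d h1 h2
    simp only [Finset.mem_filter, Finset.mem_Icc] at h1 h2
    omega
  have e : cfI m - sY Y m = ∑ d ∈ (Finset.Icc (Y + 1) m).filter (fun d => d ^ 3 ∣ m),
      (ArithmeticFunction.moebius d : ℝ) := by
    rw [cfI_eq m hm]
    unfold sY
    rw [hset, Finset.sum_union hdisj]
    ring
  rw [e]
  refine (Finset.abs_sum_le_sum_abs _ _).trans ?_
  refine (Finset.sum_le_sum (fun d _ => abs_moebius_real d)).trans ?_
  simp

lemma sY_abs (Y m : ℕ) : |sY Y m| ≤ Y := by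
  unfold sY
  refine (Finset.abs_sum_le_sum_abs _ _).trans ?_
  refine (Finset.sum_le_sum (fun d _ => abs_moebius_real d)).trans ?_
  have := Finset.card_filter_le (Finset.Icc 1 Y) (fun d => d ^ 3 ∣ m)
  rw [Nat.card_Icc] at this
  have h2 : (((Finset.Icc 1 Y).filter (fun d => d ^ 3 ∣ m)).card : ℝ) ≤ Y := by
    exact_mod_cast (by omega : ((Finset.Icc 1 Y).filter (fun d => d ^ 3 ∣ m)).card ≤ Y)
  simpa using h2

lemma cfI_abs (m : ℕ) : |cfI m| ≤ 1 := by
  unfold cfI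
  split_ifs <;> simp

lemma cube_tail (Y n : ℕ) (hY : 1 ≤ Y) (hn : Y ≤ n) :
    ∑ d ∈ Finset.Ioc Y n, 1 / (d : ℝ) ^ 3 ≤ 1 / (Y : ℝ) ^ 2 - 1 / (n : ℝ) ^ 2 := by
  induction n, hn using Nat.le_induction with
  | base => simp
  | succ n hn ih =>
    rw [Finset.sum_Ioc_succ_top hn]
    have hnR : (1 : ℝ) ≤ n := by exact_mod_cast hY.trans hn
    have : 1 / ((n + 1 : ℕ) : ℝ) ^ 3 ≤ 1 / (n : ℝ) ^ 2 - 1 / ((n + 1 : ℕ) : ℝ) ^ 2 := by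
      push_cast
      rw [div_sub_div _ _ (by positivity) (by positivity), div_le_div_iff₀ (by positivity) (by positivity)]
      have h3 : (0 : ℝ) < n := by linarith
      have key : (1 * ((n : ℝ) + 1) ^ 2 - n ^ 2 * 1) * (n + 1) ^ 3 - 1 * (n ^ 2 * (n + 1) ^ 2) =
        (n + 1) ^ 2 * ((2 * n + 1) * (n + 1) - n ^ 2) := by ring
      have : 0 ≤ ((n : ℝ) + 1) ^ 2 * ((2 * n + 1) * (n + 1) - n ^ 2) := by
        apply mul_nonneg (by positivity); nlinarith
      linarith
    linarith

lemma summable_mu3 : Summable (fun n : ℕ => (ArithmeticFunction.moebius n : ℝ) / (n : ℝ) ^ 3) := by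
  apply Summable.of_norm_bounded (g := fun n : ℕ => 1 / (n : ℝ) ^ 3)
  · exact Real.summable_one_div_nat_pow.mpr (by norm_num)
  · intro n
    rw [Real.norm_eq_abs, abs_div, abs_of_nonneg (show (0 : ℝ) ≤ (n : ℝ) ^ 3 by positivity)]
    gcongr
    exact abs_moebius_real n

lemma zeta3_mul : zeta3 * ∑' n : ℕ, (ArithmeticFunction.moebius n : ℝ) / (n : ℝ) ^ 3 = 1 := by
  have h3 : 1 < (3 : ℂ).re := by norm_num
  have h := ArithmeticFunction.LSeries_zeta_mul_Lseries_moebius h3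
  have e1 : LSeries (fun n => ((ArithmeticFunction.zeta n : ℕ) : ℂ)) 3 = (zeta3 : ℂ) := by
    rw [ArithmeticFunction.LSeries_zeta_eq_riemannZeta h3, zeta_eq_tsum_one_div_nat_cpow h3, zeta3,
      Complex.ofReal_tsum]
    apply tsum_congr
    intro n
    push_cast
    norm_cast
  have e2 : LSeries (fun n => ((ArithmeticFunction.moebius n : ℤ) : ℂ)) 3 =
      ((∑' n : ℕ, (ArithmeticFunction.moebius n : ℝ) / (n : ℝ) ^ 3 : ℝ) : ℂ) := by
    rw [LSeries, Complex.ofReal_tsum]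
    apply tsum_congr
    intro n
    rw [LSeries.term_of_ne_zero' (by norm_num)]
    push_cast
    norm_cast
  rw [e1, e2] at h
  exact_mod_cast h

lemma mu_tail (Y : ℕ) (hY : 1 ≤ Y) :
    |∑ d ∈ Finset.Icc 1 Y, (ArithmeticFunction.moebius d : ℝ) / (d : ℝ) ^ 3 - 1 / zeta3| ≤
      1 / (Y : ℝ) ^ 2 := by
  have hz : 1 / zeta3 = ∑' n : ℕ, (ArithmeticFunction.moebius n : ℝ) / (n : ℝ) ^ 3 := by
    have := zeta3_mul
    have h0 : zeta3 ≠ 0 := by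
      intro h; rw [h] at this; simp at this
    field_simp
    linarith
  rw [hz]
  have hlim := summable_mu3.hasSum.tendsto_sum_nat
  have hlim2 : Tendsto (fun n => |∑ d ∈ Finset.Icc 1 Y, (ArithmeticFunction.moebius d : ℝ) / (d : ℝ) ^ 3 -
      ∑ i ∈ range n, (ArithmeticFunction.moebius i : ℝ) / (i : ℝ) ^ 3|) atTop (nhds
      |∑ d ∈ Finset.Icc 1 Y, (ArithmeticFunction.moebius d : ℝ) / (d : ℝ) ^ 3 -
        ∑' n : ℕ, (ArithmeticFunction.moebius n : ℝ) / (n : ℝ) ^ 3|) :=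
    (tendsto_const_nhds.sub hlim).abs
  refine le_of_tendsto hlim2 ?_
  filter_upwards [eventually_ge_atTop (Y + 1)] with n hn
  obtain ⟨k, rfl⟩ : ∃ k, n = k + 1 := ⟨n - 1, by omega⟩
  have hset : ∑ i ∈ range (k + 1), (ArithmeticFunction.moebius i : ℝ) / (i : ℝ) ^ 3 =
      ∑ d ∈ Finset.Icc 1 Y, (ArithmeticFunction.moebius d : ℝ) / (d : ℝ) ^ 3 +
      ∑ d ∈ Finset.Ioc Y k, (ArithmeticFunction.moebius d : ℝ) / (d : ℝ) ^ 3 := by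
    rw [← Finset.sum_union]
    · symm
      apply Finset.sum_subset
      · intro d hd
        simp only [Finset.mem_union, Finset.mem_Icc, Finset.mem_Ioc, Finset.mem_range] at hd ⊢
        omega
      · intro d hd1 hd2
        simp only [Finset.mem_union, Finset.mem_Icc, Finset.mem_Ioc, Finset.mem_range] at hd1 hd2
        have : d = 0 := by omega
        subst this; simp
    · rw [Finset.disjoint_left]
      intro d h1 h2
      simp only [Finset.mem_Icc, Finset.mem_Ioc] at h1 h2
      omega
  rw [hset, sub_add_cancel_left, abs_neg]
  calc _ ≤ ∑ d ∈ Finset.Ioc Y k, |(ArithmeticFunction.moebius d : ℝ) / (d : ℝ) ^ 3| :=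
        Finset.abs_sum_le_sum_abs _ _
    _ ≤ ∑ d ∈ Finset.Ioc Y k, 1 / (d : ℝ) ^ 3 := by
        apply Finset.sum_le_sum
        intro d _
        rw [abs_div, abs_of_nonneg (show (0 : ℝ) ≤ (d : ℝ) ^ 3 by positivity)]
        gcongr
        exact abs_moebius_real d
    _ ≤ 1 / (Y : ℝ) ^ 2 - 1 / (k : ℝ) ^ 2 := cube_tail Y k hY (by omega)
    _ ≤ _ := by
        have : 0 ≤ 1 / (k : ℝ) ^ 2 := by positivity
        linarith

lemma zeta3_inv_le : |1 / zeta3| ≤ 2 := by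
  have h := mu_tail 1 le_rfl
  simp only [Finset.Icc_self, Finset.sum_singleton] at h
  norm_num at h
  rw [abs_le] at h ⊢
  simp only [one_div]
  constructor <;> linarith [h.1, h.2]

lemma dvd_floor_iff (D : ℕ) (hD : 1 ≤ D) (t : ℝ) (ht : 0 ≤ t) :
    D ∣ ⌊t⌋₊ ↔ Int.fract (1 / (D : ℝ) * t) < 1 / (D : ℝ) := by
  have hDR : (0 : ℝ) < D := by exact_mod_cast hD
  have h1 := Nat.floor_le ht
  have h2 := Nat.lt_floor_add_one t
  set m := ⌊t⌋₊ with hm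
  have h3 := Nat.div_add_mod m D
  have h4 := Nat.mod_lt m (show 0 < D by omega)
  have h3R : (D : ℝ) * ((m / D : ℕ) : ℝ) + ((m % D : ℕ) : ℝ) = m := by exact_mod_cast h3
  have h4R : ((m % D : ℕ) : ℝ) + 1 ≤ D := by exact_mod_cast h4
  have hr0 : (0 : ℝ) ≤ ((m % D : ℕ) : ℝ) := by positivity
  have e : 1 / (D : ℝ) * t = (((m / D : ℕ) : ℤ) : ℝ) + (((m % D : ℕ) : ℝ) + (t - m)) / D := by
    rw [Int.cast_natCast]
    field_simp
    linarith
  have hfr : Int.fract (1 / (D : ℝ) * t) = (((m % D : ℕ) : ℝ) + (t - m)) / D := by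
    rw [e, Int.fract_intCast_add, Int.fract_eq_self]
    constructor
    · apply div_nonneg <;> linarith
    · rw [div_lt_one hDR]; linarith
  rw [hfr, div_lt_div_iff_of_pos_right hDR, Nat.dvd_iff_mod_eq_zero]
  constructor
  · intro h; rw [h]; push_cast; linarith
  · intro h
    have : ((m % D : ℕ) : ℝ) < 1 := by linarith
    have : m % D < 1 := by exact_mod_cast this
    omega

lemma log_pow_bound (u : ℝ) (hu : 2 ≤ u) (K : ℕ) (hK : (K : ℝ) ≤ u ^ 1000) :
    1 + Real.log K ≤ 1001 * u := by
  have h1 : Real.log K ≤ 1000 * u := by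
    rcases Nat.eq_zero_or_pos K with h | h
    · subst h; simp; linarith
    · calc Real.log K ≤ Real.log (u ^ 1000) := Real.log_le_log (by exact_mod_cast h) hK
        _ = 1000 * Real.log u := by rw [Real.log_pow]; norm_num
        _ ≤ 1000 * u := by
          have := Real.log_le_self (show 0 ≤ u by linarith)
          linarith
  linarith

lemma pow_neg_bound (c u : ℝ) (hc2 : c < 11 / 6) (hu : 1 ≤ u) (j : ℕ) :
    (u ^ (6 * j)) ^ (c - 2) ≤ 1 / u ^ j := by
  have hu0 : 0 ≤ u := by linarith
  calc (u ^ (6 * j)) ^ (c - 2) ≤ (u ^ (6 * j)) ^ (-(1 / 6) : ℝ) := by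
        apply Real.rpow_le_rpow_of_exponent_le (one_le_pow₀ hu); linarith
    _ = 1 / u ^ j := by
        rw [Real.rpow_neg (by positivity), one_div]
        congr 1
        rw [← Real.rpow_natCast, ← Real.rpow_mul hu0, ← Real.rpow_natCast]
        congr 1
        push_cast; ring_nf

/-- Count for one large `d`. -/
lemma large_one (c u : ℝ) (hc1 : 1 < c) (hc2 : c < 11 / 6) (hu : 2 ≤ u) (d : ℕ) (hd : 2 ≤ d) :
    (((Finset.Icc (⌊u ^ 900⌋₊ + 1) ⌊u ^ 1000⌋₊).filter (fun n : ℕ => d ^ 3 ∣ ⌊(n : ℝ) ^ c⌋₊)).card : ℝ) ≤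
      2 * (u ^ 1000 * (2 / (d : ℝ) ^ 3 + 2 / (d * u ^ 50)) + 1) +
        8 / (c - 1) * (u ^ 1000 / (d : ℝ) ^ 3) * (1001 * u) := by
  have hu0 : 0 < u := by linarith
  have hdR : (2 : ℝ) ≤ d := by exact_mod_cast hd
  have hd0 : (0 : ℝ) < d := by linarith
  set K := ⌊u ^ 1000⌋₊ with hK
  set K0 := ⌊u ^ 900⌋₊ + 1 with hK0
  have hKle : (K : ℝ) ≤ u ^ 1000 := Nat.floor_le (by positivity)
  have hK0ge : u ^ 900 ≤ (K0 : ℝ) := by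
    rw [hK0]; push_cast; exact (Nat.lt_floor_add_one _).le
  set A : ℝ := 1 / ((d ^ 3 : ℕ) : ℝ) with hA
  have hAe : A = 1 / (d : ℝ) ^ 3 := by rw [hA]; push_cast; rfl
  have hA0 : 0 < A := by rw [hAe]; positivity
  have hcm : 0 < c - 1 := by linarith
  have hcc : 0 < c * (c - 1) := by apply mul_pos <;> linarith
  have hcc2 : c * (c - 1) ≤ 2 := by nlinarith
  set l0 := A * (c * (c - 1) * (u ^ 1000) ^ (c - 2)) with hl0
  set l1 := A * (c * (c - 1) * (u ^ 900) ^ (c - 2)) with hl1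
  set F := A * (c * (u ^ 1000) ^ (c - 1)) with hF
  have hl0p : 0 < l0 := by
    rw [hl0]
    have : 0 < (u ^ 1000) ^ (c - 2) := Real.rpow_pos_of_pos (by positivity) _
    positivity
  have hl1p : 0 < l1 := by
    rw [hl1]
    have : 0 < (u ^ 900) ^ (c - 2) := Real.rpow_pos_of_pos (by positivity) _
    positivity
  have hFp : 0 ≤ F := by
    have : 0 < (u ^ 1000) ^ (c - 1) := Real.rpow_pos_of_pos (by positivity) _
    have : 0 < c := by linarith
    positivity
  have hd8 : (8 : ℝ) ≤ (d : ℝ) ^ 3 := by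
    calc (8 : ℝ) = 2 ^ 3 := by norm_num
      _ ≤ (d : ℝ) ^ 3 := by gcongr
  set L0 : ℝ := min ((d : ℝ) ^ 3 / 2) (d * u ^ 50 / 2) with hL0
  have hL0p : 0 < L0 := by rw [hL0]; apply lt_min <;> positivity
  have hAd : A * (d : ℝ) ^ 3 = 1 := by rw [hAe]; field_simp
  have hmain := upper K0 K (fun n : ℕ => A * (n : ℝ) ^ c) (fun n : ℕ => A * (c * (n : ℝ) ^ (c - 1))) l0 l1 F A L0
    hl0p hl1p hA0 (by
      rw [hAe, div_le_div_iff₀ (by positivity) (by norm_num)]; linarith) hFp hL0p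
    (by
      have : L0 ≤ (d : ℝ) ^ 3 / 2 := min_le_left _ _
      have := mul_le_mul_of_nonneg_left this hA0.le
      linarith)
    (by
      have h1 : L0 ≤ d * u ^ 50 / 2 := min_le_right _ _
      have h2 : L0 ^ 3 ≤ (d * u ^ 50 / 2) ^ 3 := by gcongr
      have h3 : l1 ≤ A * (2 * (1 / u ^ 150)) := by
        rw [hl1]
        have := pow_neg_bound c u hc2 (by linarith) 150
        norm_num only at this ⊢
        gcongr
      calc l1 * L0 ^ 3 ≤ (A * (2 * (1 / u ^ 150))) * (d * u ^ 50 / 2) ^ 3 := by gcongr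
        _ = (A * (d : ℝ) ^ 3) * (u ^ 150 / u ^ 150) / 4 := by ring
        _ ≤ 1 := by
          rw [hAd, div_self (by positivity)]; norm_num)
    (htay_rpow c A hc1 (by linarith) hA0.le K0 K (u ^ 900) (u ^ 1000) (by positivity) hK0ge hKle)
    (by
      intro s hs1 hs2
      have hs0 : 1 ≤ s := by omega
      have hsR : (1 : ℝ) ≤ s := by exact_mod_cast hs0
      have hsK : (s : ℝ) ≤ u ^ 1000 := le_trans (by exact_mod_cast hs2) hKle
      constructor
      · have h1 : (1 : ℝ) ≤ (s : ℝ) ^ (c - 1) := Real.one_le_rpow hsR hcm.le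
        have h2 : 1 < c * (s : ℝ) ^ (c - 1) := by nlinarith
        calc A = A * 1 := by ring
          _ < A * (c * (s : ℝ) ^ (c - 1)) := by gcongr
      · rw [hF]
        have : (s : ℝ) ^ (c - 1) ≤ (u ^ 1000) ^ (c - 1) :=
          Real.rpow_le_rpow (by linarith) hsK hcm.le
        have : 0 < c := by linarith
        gcongr)
  have hset : (Finset.Icc K0 K).filter (fun n : ℕ => d ^ 3 ∣ ⌊(n : ℝ) ^ c⌋₊) =
      (Finset.Icc K0 K).filter (fun n : ℕ => Int.fract (A * (n : ℝ) ^ c) < A) := by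
    apply Finset.filter_congr
    intro n _
    exact dvd_floor_iff (d ^ 3) (Nat.one_le_pow _ _ (by omega)) _ (by positivity)
  rw [hset]
  refine hmain.trans ?_
  have hinv : 1 / L0 ≤ 2 / (d : ℝ) ^ 3 + 2 / (d * u ^ 50) := by
    rcases min_choice ((d : ℝ) ^ 3 / 2) (d * u ^ 50 / 2) with h | h
    · rw [hL0, h]
      have e : 1 / ((d : ℝ) ^ 3 / 2) = 2 / (d : ℝ) ^ 3 := by field_simp
      rw [e]
      have : 0 ≤ 2 / (d * u ^ 50) := by positivity
      linarith
    · rw [hL0, h]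
      have e : 1 / (d * u ^ 50 / 2) = 2 / (d * u ^ 50) := by field_simp
      rw [e]
      have : 0 ≤ 2 / (d : ℝ) ^ 3 := by positivity
      linarith
  have hx0 : 0 < u ^ 1000 := by positivity
  have hratio : 8 * F * A / l0 = 8 / (c - 1) * (u ^ 1000 / (d : ℝ) ^ 3) := by
    rw [hF, hl0]
    have hp : (u ^ 1000) ^ (c - 1) = (u ^ 1000) ^ (c - 2) * u ^ 1000 := by
      rw [show c - 1 = (c - 2) + 1 by ring, Real.rpow_add_one hx0.ne']
    have hne : (u ^ 1000) ^ (c - 2) ≠ 0 := (Real.rpow_pos_of_pos hx0 _).ne'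
    rw [hp]
    have hc0 : c ≠ 0 := by linarith
    generalize (u ^ 1000) ^ (c - 2) = w at hne
    generalize u ^ 1000 = X at *
    rw [hAe]
    field_simp
  rw [hratio]
  have hlog := log_pow_bound u hu K hKle
  have h1 : (K : ℝ) / L0 ≤ u ^ 1000 * (2 / (d : ℝ) ^ 3 + 2 / (d * u ^ 50)) := by
    rw [div_eq_mul_one_div]
    gcongr
  gcongr

/-- Sum over all large `d`. -/
lemma large_sum (c u : ℝ) (hc1 : 1 < c) (hc2 : c < 11 / 6) (hu : 2 ≤ u) :
    ∑ d ∈ Finset.Ioc ⌊u⌋₊ ⌊u ^ 667⌋₊,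
    (((Finset.Icc (⌊u ^ 900⌋₊ + 1) ⌊u ^ 1000⌋₊).filter (fun n : ℕ => d ^ 3 ∣ ⌊(n : ℝ) ^ c⌋₊)).card : ℝ) ≤
      (10 ^ 5 / (c - 1) + 10 ^ 5) * u ^ 999 := by
  have hu0 : 0 < u := by linarith
  set Y := ⌊u⌋₊ with hY
  set D := ⌊u ^ 667⌋₊ with hD
  have hY1 : 1 ≤ Y := by
    apply Nat.le_floor; push_cast; linarith
  have hYle : (Y : ℝ) ≤ u := Nat.floor_le hu0.le
  have hYge : u / 2 ≤ Y := by
    have := Nat.lt_floor_add_one u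
    rw [← hY] at this
    linarith
  have hDle : (D : ℝ) ≤ u ^ 667 := Nat.floor_le (by positivity)
  have hYD : Y ≤ D := by
    apply Nat.le_floor
    exact hYle.trans (le_self_pow₀ (by linarith) (by norm_num))
  have hcm : 0 < c - 1 := by linarith
  have hs3 : ∑ d ∈ Finset.Ioc Y D, 1 / (d : ℝ) ^ 3 ≤ 4 / u ^ 2 := by
    have h1 := cube_tail Y D hY1 hYD
    have h2 : 0 ≤ 1 / (D : ℝ) ^ 2 := by positivity
    have h3 : 1 / (Y : ℝ) ^ 2 ≤ 1 / (u / 2) ^ 2 := by gcongr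
    have h4 : 1 / (u / 2) ^ 2 = 4 / u ^ 2 := by field_simp; norm_num
    linarith
  have hs1 : ∑ d ∈ Finset.Ioc Y D, 1 / (d : ℝ) ≤ 1001 * u := by
    have h := harmonic_le_one_add_log D
    rw [harmonic_eq_sum_Icc] at h
    push_cast at h
    have hlog := log_pow_bound u hu D (hDle.trans (pow_le_pow_right₀ (by linarith) (by norm_num)))
    refine le_trans ?_ (h.trans hlog)
    simp only [one_div]
    apply Finset.sum_le_sum_of_subset_of_nonneg
    · intro d hd
      simp only [Finset.mem_Ioc, Finset.mem_Icc] at hd ⊢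
      omega
    · intro d _ _; positivity
  have hs0 : ∑ d ∈ Finset.Ioc Y D, (1 : ℝ) ≤ u ^ 667 := by
    rw [Finset.sum_const, Nat.card_Ioc, nsmul_eq_mul, mul_one]
    refine le_trans ?_ hDle
    exact_mod_cast Nat.sub_le D Y
  calc _ ≤ ∑ d ∈ Finset.Ioc Y D, (2 * (u ^ 1000 * (2 / (d : ℝ) ^ 3 + 2 / (d * u ^ 50)) + 1) +
        8 / (c - 1) * (u ^ 1000 / (d : ℝ) ^ 3) * (1001 * u)) := by
        apply Finset.sum_le_sum
        intro d hd
        rw [Finset.mem_Ioc] at hd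
        exact large_one c u hc1 hc2 hu d (by omega)
    _ = ∑ d ∈ Finset.Ioc Y D, ((4 * u ^ 1000 + 8 / (c - 1) * u ^ 1000 * (1001 * u)) * (1 / (d : ℝ) ^ 3)
        + (4 * u ^ 950) * (1 / (d : ℝ)) + 2 * 1) := by
        apply Finset.sum_congr rfl
        intro d hd
        rw [Finset.mem_Ioc] at hd
        have : (0 : ℝ) < d := by exact_mod_cast (by omega : 0 < d)
        have e : u ^ 1000 * (2 / (d * u ^ 50)) = u ^ 950 * (2 / d) := by
          rw [show u ^ 1000 = u ^ 950 * u ^ 50 by ring]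
          generalize u ^ 950 = w1
          have : u ^ 50 ≠ 0 := by positivity
          generalize u ^ 50 = w2 at *
          field_simp
        rw [mul_add (u ^ 1000), e]
        ring
    _ = (4 * u ^ 1000 + 8 / (c - 1) * u ^ 1000 * (1001 * u)) * ∑ d ∈ Finset.Ioc Y D, (1 / (d : ℝ) ^ 3)
        + (4 * u ^ 950) * ∑ d ∈ Finset.Ioc Y D, (1 / (d : ℝ)) + 2 * ∑ d ∈ Finset.Ioc Y D, (1 : ℝ) := by
        rw [Finset.sum_add_distrib, Finset.sum_add_distrib, ← Finset.mul_sum, ← Finset.mul_sum,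
          ← Finset.mul_sum]
    _ ≤ (4 * u ^ 1000 + 8 / (c - 1) * u ^ 1000 * (1001 * u)) * (4 / u ^ 2)
        + (4 * u ^ 950) * (1001 * u) + 2 * u ^ 667 := by gcongr
    _ = 16 * u ^ 998 + 32032 / (c - 1) * u ^ 999 + 4004 * u ^ 951 + 2 * u ^ 667 := by
        have e1 : u ^ 1000 = u ^ 998 * u ^ 2 := by ring
        have e2 : u ^ 999 = u ^ 998 * u := by ring
        have e3 : u ^ 951 = u ^ 950 * u := by ring
        rw [e1, e2, e3]
        generalize u ^ 998 = w1
        generalize u ^ 950 = w2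
        generalize u ^ 667 = w3
        field_simp
        ring
    _ ≤ 16 * u ^ 999 + 32032 / (c - 1) * u ^ 999 + 4004 * u ^ 999 + 2 * u ^ 999 := by
        have hu1 : 1 ≤ u := by linarith
        gcongr <;> norm_num
    _ ≤ _ := by
        have : 0 ≤ 1 / (c - 1) := by positivity
        have h9 : 0 ≤ u ^ 999 := by positivity
        have e : (10 ^ 5 / (c - 1) + 10 ^ 5) * u ^ 999 -
          (16 * u ^ 999 + 32032 / (c - 1) * u ^ 999 + 4004 * u ^ 999 + 2 * u ^ 999) =
          ((10 ^ 5 - 32032) * (1 / (c - 1)) + (10 ^ 5 - 4022)) * u ^ 999 := by ring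
        have : 0 ≤ ((10 ^ 5 - 32032) * (1 / (c - 1)) + (10 ^ 5 - 4022)) * u ^ 999 := by positivity
        linarith

lemma small_card (c : ℝ) (d e M N : ℕ) (hd : 1 ≤ d) (he : 1 ≤ e) :
    ((Finset.Icc (M + 1) N).filter (fun n : ℕ => e ^ 3 ∣ n ∧ d ^ 3 ∣ ⌊(n : ℝ) ^ c⌋₊)).card =
    ((Finset.Ico (M / e ^ 3 + 1) (N / e ^ 3 + 1)).filter (fun k : ℕ =>
      Int.fract (1 / ((d ^ 3 : ℕ) : ℝ) * (((e ^ 3 : ℕ) : ℝ) ^ c) * (k : ℝ) ^ c) <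
        1 / ((d ^ 3 : ℕ) : ℝ))).card := by
  have he3 : 0 < e ^ 3 := by positivity
  have key : ∀ k : ℕ, (d ^ 3 ∣ ⌊((e ^ 3 * k : ℕ) : ℝ) ^ c⌋₊ ↔
      Int.fract (1 / ((d ^ 3 : ℕ) : ℝ) * (((e ^ 3 : ℕ) : ℝ) ^ c) * (k : ℝ) ^ c) <
        1 / ((d ^ 3 : ℕ) : ℝ)) := by
    intro k
    have h := dvd_floor_iff (d ^ 3) (Nat.one_le_pow _ _ (by omega)) (((e ^ 3 * k : ℕ) : ℝ) ^ c)
      (by positivity)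
    rw [h, Nat.cast_mul (e ^ 3) k, Real.mul_rpow (by positivity) (by positivity), mul_assoc]
  symm
  apply Finset.card_bij (fun k _ => e ^ 3 * k)
  · intro k hk
    rw [Finset.mem_filter, Finset.mem_Ico] at hk
    obtain ⟨⟨h1, h2⟩, h3⟩ := hk
    rw [Finset.mem_filter, Finset.mem_Icc]
    refine ⟨⟨?_, ?_⟩, Dvd.intro _ rfl, (key k).2 h3⟩
    · have := (Nat.div_lt_iff_lt_mul he3).1 (show M / e ^ 3 < k by omega)
      rw [mul_comm]; omega
    · have := (Nat.le_div_iff_mul_le he3).1 (show k ≤ N / e ^ 3 by omega)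
      rw [mul_comm]; omega
  · intro a _ b _ h
    exact Nat.eq_of_mul_eq_mul_left he3 h
  · intro n hn
    rw [Finset.mem_filter, Finset.mem_Icc] at hn
    obtain ⟨⟨h1, h2⟩, ⟨k, rfl⟩, h4⟩ := hn
    refine ⟨k, ?_, rfl⟩
    rw [Finset.mem_filter, Finset.mem_Ico]
    refine ⟨⟨?_, ?_⟩, (key k).1 h4⟩
    · have := (Nat.div_lt_iff_lt_mul he3 (x := M) (y := k)).2 (by rw [mul_comm]; omega)
      omega
    · have := (Nat.le_div_iff_mul_le he3 (x := k) (y := N)).2 (by rw [mul_comm]; omega)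
      omega

lemma natdiv_diff (M N E : ℕ) (hE : 1 ≤ E) :
    |(((N / E : ℕ) : ℝ) - ((M / E : ℕ) : ℝ)) - ((N : ℝ) - M) / E| ≤ 1 := by
  have hER : (0 : ℝ) < E := by exact_mod_cast hE
  have aux : ∀ n : ℕ, ((n / E : ℕ) : ℝ) ≤ n / E ∧ (n : ℝ) / E ≤ ((n / E : ℕ) : ℝ) + 1 := by
    intro n
    refine ⟨Nat.cast_div_le, ?_⟩
    rw [div_le_iff₀ hER]
    have := Nat.lt_div_mul_add (a := n) (b := E) (by omega)
    have h : n ≤ (n / E + 1) * E := by rw [add_mul, one_mul]; omega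
    exact_mod_cast h
  have h1 := aux N
  have h2 := aux M
  rw [sub_div, abs_le]
  constructor <;> linarith

set_option maxHeartbeats 1000000 in
lemma small_one (c u : ℝ) (hc1 : 1 < c) (hc2 : c < 11 / 6) (hu : 2 ≤ u) (d e : ℕ)
    (hd : 1 ≤ d) (he : 1 ≤ e) (hdu : (d : ℝ) ≤ u) (heu : (e : ℝ) ≤ u) :
    |(((Finset.Icc (⌊u ^ 900⌋₊ + 1) ⌊u ^ 1000⌋₊).filter
      (fun n : ℕ => e ^ 3 ∣ n ∧ d ^ 3 ∣ ⌊(n : ℝ) ^ c⌋₊)).card : ℝ) -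
      ((⌊u ^ 1000⌋₊ : ℝ) - ⌊u ^ 900⌋₊) * (1 / (e : ℝ) ^ 3) * (1 / (d : ℝ) ^ 3)| ≤
      (26 + 32 / (c - 1)) * u ^ 995 := by
  have hu0 : 0 < u := by linarith
  have hu1 : 1 ≤ u := by linarith
  have hcm : 0 < c - 1 := by linarith
  have hc0 : 0 < c := by linarith
  have hcc : 0 < c * (c - 1) := by positivity
  have hcc2 : c * (c - 1) ≤ 2 := by nlinarith
  set N := ⌊u ^ 1000⌋₊ with hN
  set M := ⌊u ^ 900⌋₊ with hM
  have hNle : (N : ℝ) ≤ u ^ 1000 := Nat.floor_le (by positivity)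
  have hMlt : u ^ 900 < (M : ℝ) + 1 := Nat.lt_floor_add_one _
  have hMN : M ≤ N := Nat.floor_le_floor (pow_le_pow_right₀ hu1 (by norm_num))
  rw [small_card c d e M N hd he]
  have he3 : 1 ≤ e ^ 3 := Nat.one_le_pow _ _ (by omega)
  have hd3 : 1 ≤ d ^ 3 := Nat.one_le_pow _ _ (by omega)
  have he3R : (1 : ℝ) ≤ ((e ^ 3 : ℕ) : ℝ) := by exact_mod_cast he3
  have hd3R : (1 : ℝ) ≤ ((d ^ 3 : ℕ) : ℝ) := by exact_mod_cast hd3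
  have he3u : ((e ^ 3 : ℕ) : ℝ) ≤ u ^ 3 := by push_cast; gcongr
  have hd3u : ((d ^ 3 : ℕ) : ℝ) ≤ u ^ 3 := by push_cast; gcongr
  have hee : (1 / (e : ℝ) ^ 3) = 1 / ((e ^ 3 : ℕ) : ℝ) := by push_cast; rfl
  have hdd : (1 / (d : ℝ) ^ 3) = 1 / ((d ^ 3 : ℕ) : ℝ) := by push_cast; rfl
  rw [hee, hdd]
  have hdiff := natdiv_diff M N (e ^ 3) he3
  generalize e ^ 3 = E at *
  generalize d ^ 3 = D at *
  set δ : ℝ := 1 / (D : ℝ) with hδ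
  have hδ0 : 0 ≤ δ := by positivity
  have hδ1 : δ ≤ 1 := by rw [hδ, div_le_one (by linarith)]; exact hd3R
  have hδu : 1 / u ^ 3 ≤ δ := by rw [hδ]; gcongr
  set A : ℝ := δ * ((E : ℝ) ^ c) with hA
  have hEc1 : (1 : ℝ) ≤ (E : ℝ) ^ c := Real.one_le_rpow he3R hc0.le
  have hEc2 : (E : ℝ) ^ c ≤ u ^ 6 := by
    calc (E : ℝ) ^ c ≤ (E : ℝ) ^ (2 : ℝ) :=
          Real.rpow_le_rpow_of_exponent_le he3R (by linarith)
      _ = (E : ℝ) ^ 2 := Real.rpow_two _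
      _ ≤ (u ^ 3) ^ 2 := by gcongr
      _ = u ^ 6 := by ring
  have hA1 : 1 / u ^ 3 ≤ A := by
    calc 1 / u ^ 3 = 1 / u ^ 3 * 1 := by ring
      _ ≤ A := by rw [hA]; gcongr
  have hA2 : A ≤ u ^ 6 := by
    calc A ≤ 1 * u ^ 6 := by rw [hA]; gcongr
      _ = u ^ 6 := by ring
  have hA0 : 0 < A := lt_of_lt_of_le (by positivity) hA1
  set K0 := M / E + 1 with hK0
  set K := N / E + 1 with hK
  have hKK : K0 ≤ K := by
    have := Nat.div_le_div_right (c := E) hMN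
    omega
  have hKb : (K : ℝ) ≤ u ^ 1002 := by
    have h1 : (K : ℝ) ≤ N + 1 := by
      have := Nat.div_le_self N E
      exact_mod_cast (by omega : K ≤ N + 1)
    have h2 : 1 ≤ u ^ 1000 := one_le_pow₀ hu1
    have h3 : u ^ 1002 = u ^ 1000 * u ^ 2 := by ring
    have h4 : 4 ≤ u ^ 2 := by nlinarith
    rw [h3]
    generalize u ^ 1000 = w at *
    nlinarith
  have hK0a : u ^ 894 ≤ (K0 : ℝ) := by
    have h1 : M + 1 ≤ K0 * E := by
      have := Nat.lt_div_mul_add (a := M) (b := E) (by omega)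
      rw [hK0, add_mul, one_mul]; omega
    have h2 : (M : ℝ) + 1 ≤ K0 * E := by exact_mod_cast h1
    have h3 : (K0 : ℝ) * E ≤ K0 * u ^ 3 := by gcongr
    have h4 : u ^ 897 * u ^ 3 ≤ K0 * u ^ 3 := by
      rw [← pow_add]; norm_num only; linarith
    have h5 : u ^ 897 ≤ K0 := le_of_mul_le_mul_right h4 (by positivity)
    exact le_trans (pow_le_pow_right₀ hu1 (by norm_num)) h5
  have hbpos : 0 < u ^ 1002 := by positivity
  have hapos : 0 < u ^ 894 := by positivity
  set l0 := A * (c * (c - 1) * (u ^ 1002) ^ (c - 2)) with hl0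
  set l1 := A * (c * (c - 1) * (u ^ 894) ^ (c - 2)) with hl1
  set F := A * (c * (u ^ 1002) ^ (c - 1)) with hF
  have hl0p : 0 < l0 := by
    rw [hl0]
    have : 0 < (u ^ 1002) ^ (c - 2) := Real.rpow_pos_of_pos hbpos _
    positivity
  have hl1p : 0 < l1 := by
    rw [hl1]
    have : 0 < (u ^ 894) ^ (c - 2) := Real.rpow_pos_of_pos hapos _
    positivity
  have hFp : 0 ≤ F := by
    have : 0 < (u ^ 1002) ^ (c - 1) := Real.rpow_pos_of_pos hbpos _
    positivity
  set H := ⌊u ^ 20⌋₊ with hH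
  have hHle : (H : ℝ) ≤ u ^ 20 := Nat.floor_le (by positivity)
  have hHge : u ^ 20 / 2 ≤ (H : ℝ) := by
    have h1 := Nat.lt_floor_add_one (u ^ 20)
    rw [← hH] at h1
    have h2 : u ≤ u ^ 20 := le_self_pow₀ hu1 (by norm_num)
    linarith
  have hH1 : 1 ≤ H := Nat.le_floor (by push_cast; exact one_le_pow₀ hu1)
  set q := ⌈u ^ 5⌉₊ with hq
  have hqge : u ^ 5 ≤ (q : ℝ) := Nat.le_ceil _
  have hqle : (q : ℝ) ≤ 2 * u ^ 5 := by
    have h1 := Nat.ceil_lt_add_one (show 0 ≤ u ^ 5 by positivity)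
    rw [← hq] at h1
    have h2 : 1 ≤ u ^ 5 := one_le_pow₀ hu1
    linarith
  have hq1 : 1 ≤ q := Nat.one_le_ceil_iff.2 (by positivity)
  have hq1R : (1 : ℝ) ≤ q := by exact_mod_cast hq1
  have hmain := equi K0 K hKK (fun n : ℕ => A * (n : ℝ) ^ c) (fun n : ℕ => A * (c * (n : ℝ) ^ (c - 1)))
    l0 l1 F δ hl0p hl1p.le H q hH1 hq1 hδ0 hδ1
    (htay_rpow c A hc1 (by linarith) hA0.le K0 K (u ^ 894) (u ^ 1002) hapos hK0a hKb)
    (by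
      intro s hs1 hs2
      have hsK : (s : ℝ) ≤ u ^ 1002 := le_trans (by exact_mod_cast hs2) hKb
      constructor
      · positivity
      · rw [hF]
        have : (s : ℝ) ^ (c - 1) ≤ (u ^ 1002) ^ (c - 1) :=
          Real.rpow_le_rpow (by positivity) hsK hcm.le
        gcongr)
    (by
      have h3 : l1 ≤ u ^ 6 * (2 * (1 / u ^ 149)) := by
        rw [hl1]
        have := pow_neg_bound c u hc2 (by linarith) 149
        norm_num only at this ⊢
        gcongr
      calc l1 * (H : ℝ) ^ 3 ≤ (u ^ 6 * (2 * (1 / u ^ 149))) * (u ^ 20) ^ 3 := by gcongr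
        _ = 2 * (u ^ 66 / u ^ 149) := by ring
        _ ≤ 2 * 1 := by
          gcongr
          rw [div_le_one (by positivity)]
          exact pow_le_pow_right₀ hu1 (by norm_num)
        _ = 2 := by ring)
  have hKd : (K : ℝ) - K0 = ((N / E : ℕ) : ℝ) - ((M / E : ℕ) : ℝ) := by
    rw [hK, hK0]; push_cast; ring
  have hKdle : (K : ℝ) - K0 ≤ u ^ 1000 := by
    rw [hKd]
    have h1 : ((N / E : ℕ) : ℝ) ≤ N := by exact_mod_cast Nat.div_le_self N E
    have h2 : (0 : ℝ) ≤ ((M / E : ℕ) : ℝ) := by positivity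
    linarith
  have hKd0 : 0 ≤ (K : ℝ) - K0 := by
    have : (K0 : ℝ) ≤ K := by exact_mod_cast hKK
    linarith
  -- error terms
  have t1 : 12 * ((K : ℝ) - K0) / q ≤ 12 * u ^ 995 := by
    rw [div_le_iff₀ (by linarith)]
    calc 12 * ((K : ℝ) - K0) ≤ 12 * u ^ 1000 := by gcongr
      _ = 12 * u ^ 995 * u ^ 5 := by ring
      _ ≤ _ := by gcongr
  have hFle : F ≤ 2 * u ^ 841 := by
    have h1 : (u ^ 1002) ^ (c - 1) ≤ u ^ 835 := by
      calc (u ^ 1002) ^ (c - 1) ≤ (u ^ 1002) ^ (5 / 6 : ℝ) :=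
            Real.rpow_le_rpow_of_exponent_le (one_le_pow₀ hu1) (by linarith)
        _ = u ^ 835 := by
          rw [← Real.rpow_natCast u 1002, ← Real.rpow_mul hu0.le, ← Real.rpow_natCast u 835]
          norm_num
    calc F ≤ u ^ 6 * (2 * u ^ 835) := by
          rw [hF]
          gcongr
          linarith
      _ = 2 * u ^ 841 := by ring
  have hp : (u ^ 1002) ^ (c - 1) = (u ^ 1002) ^ (c - 2) * u ^ 1002 := by
    rw [show c - 1 = (c - 2) + 1 by ring, Real.rpow_add_one hbpos.ne']
  have hFl : F / l0 = u ^ 1002 / (c - 1) := by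
    rw [hF, hl0, hp]
    have hne : (u ^ 1002) ^ (c - 2) ≠ 0 := (Real.rpow_pos_of_pos hbpos _).ne'
    generalize (u ^ 1002) ^ (c - 2) = w at hne
    generalize u ^ 1002 = X
    field_simp
  have hl0i : 1 / l0 ≤ u ^ 1005 / (c - 1) := by
    have h1 : 1 ≤ (u ^ 1002) ^ (c - 1) := Real.one_le_rpow (one_le_pow₀ hu1) hcm.le
    have h2 : (c - 1) ≤ l0 * u ^ 1005 := by
      have e1 : l0 * u ^ 1005 = (A * u ^ 3) * (c * (c - 1) * (u ^ 1002) ^ (c - 1)) := by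
        rw [hl0, hp, show u ^ 1005 = u ^ 3 * u ^ 1002 by ring]
        generalize (u ^ 1002) ^ (c - 2) = w
        generalize u ^ 1002 = X
        ring
      have e2 : 1 ≤ A * u ^ 3 := by
        rw [div_le_iff₀ (by positivity)] at hA1; exact hA1
      rw [e1]
      calc c - 1 = 1 * (1 * (c - 1) * 1) := by ring
        _ ≤ _ := by gcongr
    rw [div_le_div_iff₀ hl0p hcm]
    linarith
  have hHi : 2 / (H : ℝ) ≤ 4 / u ^ 20 := by
    have hHp : (0 : ℝ) < H := by exact_mod_cast hH1
    rw [div_le_div_iff₀ hHp (by positivity)]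
    linarith
  have hHp : (0 : ℝ) < H := by exact_mod_cast hH1
  have t2 : q * (q * F + 2) * (1 + 2 / (H * l0)) ≤ (12 + 32 / (c - 1)) * u ^ 995 := by
    have e1 : q * (q * F + 2) * (1 + 2 / (H * l0)) =
        ((q : ℝ) ^ 2 * F + 2 * q) + 2 / (H : ℝ) * ((q : ℝ) ^ 2 * (F / l0) + 2 * q * (1 / l0)) := by
      field_simp
      try ring
    rw [e1, hFl]
    calc _ ≤ ((2 * u ^ 5) ^ 2 * (2 * u ^ 841) + 2 * (2 * u ^ 5)) + 4 / u ^ 20 *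
          ((2 * u ^ 5) ^ 2 * (u ^ 1002 / (c - 1)) + 2 * (2 * u ^ 5) * (u ^ 1005 / (c - 1))) := by
          gcongr
      _ = 8 * u ^ 851 + 4 * u ^ 5 + (16 / (c - 1)) * u ^ 992 + (16 / (c - 1)) * u ^ 990 := by
          rw [show u ^ 1002 = u ^ 982 * u ^ 20 by ring, show u ^ 1005 = u ^ 985 * u ^ 20 by ring,
            show u ^ 992 = u ^ 982 * u ^ 10 by ring, show u ^ 990 = u ^ 985 * u ^ 5 by ring,
            show u ^ 851 = u ^ 841 * u ^ 10 by ring]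
          have hne : u ^ 20 ≠ 0 := by positivity
          generalize u ^ 20 = w at hne
          generalize u ^ 982 = w1
          generalize u ^ 985 = w2
          generalize u ^ 841 = w3
          field_simp
          ring
      _ ≤ 8 * u ^ 995 + 4 * u ^ 995 + (16 / (c - 1)) * u ^ 995 + (16 / (c - 1)) * u ^ 995 := by
          gcongr <;> norm_num
      _ = _ := by ring
  have t3 : (H : ℝ) ≤ u ^ 995 := hHle.trans (pow_le_pow_right₀ hu1 (by norm_num))
  have t4 : |((K : ℝ) - K0) * δ - ((N : ℝ) - M) * (1 / (E : ℝ)) * δ| ≤ u ^ 995 := by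
    have e1 : ((K : ℝ) - K0) * δ - ((N : ℝ) - M) * (1 / (E : ℝ)) * δ =
        ((((N / E : ℕ) : ℝ) - ((M / E : ℕ) : ℝ)) - ((N : ℝ) - M) / E) * δ := by rw [hKd]; ring
    rw [e1, abs_mul, abs_of_nonneg hδ0]
    calc _ ≤ (1 : ℝ) * 1 := by gcongr
      _ ≤ u ^ 995 := by rw [one_mul]; exact one_le_pow₀ hu1
  have hfin := abs_sub_le
    ((((Finset.Ico K0 K).filter (fun k : ℕ => Int.fract (A * (k : ℝ) ^ c) < δ)).card : ℝ))
    (((K : ℝ) - K0) * δ) (((N : ℝ) - M) * (1 / (E : ℝ)) * δ)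
  calc _ ≤ _ := hfin
    _ ≤ (12 * u ^ 995 + (12 + 32 / (c - 1)) * u ^ 995 + u ^ 995) + u ^ 995 := by
      gcongr
      exact hmain.trans (by gcongr)
    _ = _ := by ring

lemma swap_card (S T : Finset ℕ) (r : ℕ → ℕ → Prop) :
    ∑ n ∈ S, ((T.filter (fun d : ℕ => r d n)).card : ℝ) =
      ∑ d ∈ T, ((S.filter (fun n : ℕ => r d n)).card : ℝ) := by
  simp only [Finset.card_filter, Nat.cast_sum]
  exact Finset.sum_comm

lemma sY_ite (Y m : ℕ) : sY Y m =
    ∑ d ∈ Finset.Icc 1 Y, (if d ^ 3 ∣ m then (ArithmeticFunction.moebius d : ℝ) else 0) := by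
  unfold sY
  rw [Finset.sum_filter]

lemma sY_prod_sum (Y : ℕ) (S : Finset ℕ) (f : ℕ → ℕ) :
    ∑ n ∈ S, sY Y n * sY Y (f n) = ∑ e ∈ Finset.Icc 1 Y, ∑ d ∈ Finset.Icc 1 Y,
      (ArithmeticFunction.moebius e : ℝ) * (ArithmeticFunction.moebius d : ℝ) *
        ((S.filter (fun n : ℕ => e ^ 3 ∣ n ∧ d ^ 3 ∣ f n)).card : ℝ) := by
  have h1 : ∀ n, sY Y n * sY Y (f n) = ∑ e ∈ Finset.Icc 1 Y, ∑ d ∈ Finset.Icc 1 Y,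
      (ArithmeticFunction.moebius e : ℝ) * (ArithmeticFunction.moebius d : ℝ) *
        (if e ^ 3 ∣ n ∧ d ^ 3 ∣ f n then 1 else 0) := by
    intro n
    rw [sY_ite, sY_ite, Finset.sum_mul_sum]
    apply Finset.sum_congr rfl
    intro e _
    apply Finset.sum_congr rfl
    intro d _
    by_cases h1 : e ^ 3 ∣ n <;> by_cases h2 : d ^ 3 ∣ f n <;> simp [h1, h2]
  simp_rw [h1]
  rw [Finset.sum_comm]
  apply Finset.sum_congr rfl
  intro e _
  rw [Finset.sum_comm]
  apply Finset.sum_congr rfl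
  intro d _
  rw [← Finset.mul_sum, Finset.card_filter]
  push_cast
  rfl

lemma tail_floor (c u : ℝ) (hc1 : 1 < c) (hc2 : c < 11 / 6) (hu : 2 ≤ u) (n : ℕ) (hn : 1 ≤ n)
    (hnu : (n : ℝ) ≤ u ^ 1000) :
    |cfI ⌊(n : ℝ) ^ c⌋₊ - sY ⌊u⌋₊ ⌊(n : ℝ) ^ c⌋₊| ≤
      (((Finset.Ioc ⌊u⌋₊ ⌊u ^ 667⌋₊).filter (fun d : ℕ => d ^ 3 ∣ ⌊(n : ℝ) ^ c⌋₊)).card : ℝ) := by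
  have hu1 : 1 ≤ u := by linarith
  have hnR : (1 : ℝ) ≤ n := by exact_mod_cast hn
  have h1 : (1 : ℝ) ≤ (n : ℝ) ^ c := Real.one_le_rpow hnR (by linarith)
  have h2 : 1 ≤ ⌊(n : ℝ) ^ c⌋₊ := Nat.le_floor (by exact_mod_cast h1)
  have h3 : (n : ℝ) ^ c ≤ (u ^ 667) ^ 3 := by
    calc (n : ℝ) ^ c ≤ (n : ℝ) ^ (2 : ℝ) := Real.rpow_le_rpow_of_exponent_le hnR (by linarith)
      _ = (n : ℝ) ^ 2 := Real.rpow_two _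
      _ ≤ (u ^ 1000) ^ 2 := by gcongr
      _ = u ^ 2000 := by rw [← pow_mul]
      _ ≤ u ^ 2001 := pow_le_pow_right₀ hu1 (by norm_num)
      _ = (u ^ 667) ^ 3 := by rw [← pow_mul]
  have h4 : (⌊(n : ℝ) ^ c⌋₊ : ℝ) ≤ (n : ℝ) ^ c := Nat.floor_le (by linarith)
  refine (cfI_approx _ _ h2).trans ?_
  generalize ⌊(n : ℝ) ^ c⌋₊ = m at *
  norm_cast
  apply Finset.card_le_card
  intro d hd
  rw [Finset.mem_filter, Finset.mem_Icc] at hd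
  rw [Finset.mem_filter, Finset.mem_Ioc]
  refine ⟨⟨by omega, ?_⟩, hd.2⟩
  apply Nat.le_floor
  have h5 : d ^ 3 ≤ m := Nat.le_of_dvd h2 hd.2
  have h6 : (d : ℝ) ^ 3 ≤ m := by exact_mod_cast h5
  exact le_of_pow_le_pow_left₀ (by norm_num) (by positivity) ((h6.trans h4).trans h3)

lemma tail_plain (Y N M : ℕ) (hY : 1 ≤ Y) (hYN : Y ≤ N) :
    ∑ n ∈ Finset.Icc (M + 1) N, |cfI n - sY Y n| ≤ (N : ℝ) / (Y : ℝ) ^ 2 := by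
  calc _ ≤ ∑ n ∈ Finset.Icc (M + 1) N,
        (((Finset.Ioc Y N).filter (fun d : ℕ => d ^ 3 ∣ n)).card : ℝ) := by
        apply Finset.sum_le_sum
        intro n hn
        rw [Finset.mem_Icc] at hn
        refine (cfI_approx _ _ (by omega)).trans ?_
        norm_cast
        apply Finset.card_le_card
        intro d hd
        rw [Finset.mem_filter, Finset.mem_Icc] at hd
        rw [Finset.mem_filter, Finset.mem_Ioc]
        exact ⟨⟨by omega, by omega⟩, hd.2⟩
    _ = ∑ d ∈ Finset.Ioc Y N,
        (((Finset.Icc (M + 1) N).filter (fun n : ℕ => d ^ 3 ∣ n)).card : ℝ) := by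
        have := swap_card (Finset.Icc (M + 1) N) (Finset.Ioc Y N) (fun d n => d ^ 3 ∣ n)
        convert this
    _ ≤ ∑ d ∈ Finset.Ioc Y N, (N : ℝ) * (1 / (d : ℝ) ^ 3) := by
        apply Finset.sum_le_sum
        intro d hd
        have h1 : ((Finset.Icc (M + 1) N).filter (fun n : ℕ => d ^ 3 ∣ n)).card ≤ N / d ^ 3 := by
          rw [← Nat.Ioc_filter_dvd_card_eq_div N (d ^ 3)]
          apply Finset.card_le_card
          apply Finset.filter_subset_filter
          intro n hn
          rw [Finset.mem_Icc] at hn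
          rw [Finset.mem_Ioc]; omega
        calc _ ≤ ((N / d ^ 3 : ℕ) : ℝ) := by exact_mod_cast h1
          _ ≤ (N : ℝ) / ((d ^ 3 : ℕ) : ℝ) := Nat.cast_div_le
          _ = _ := by push_cast; ring
    _ = N * ∑ d ∈ Finset.Ioc Y N, (1 / (d : ℝ) ^ 3) := by rw [Finset.mul_sum]
    _ ≤ N * (1 / (Y : ℝ) ^ 2) := by
        have h1 := cube_tail Y N hY hYN
        have h2 : 0 ≤ 1 / (N : ℝ) ^ 2 := by positivity
        gcongr
        linarith
    _ = _ := by ring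

lemma main_term (c u : ℝ) (hc1 : 1 < c) (hc2 : c < 11 / 6) (hu : 2 ≤ u) :
    |∑ n ∈ Finset.Icc (⌊u ^ 900⌋₊ + 1) ⌊u ^ 1000⌋₊, sY ⌊u⌋₊ n * sY ⌊u⌋₊ ⌊(n : ℝ) ^ c⌋₊ -
      ((⌊u ^ 1000⌋₊ : ℝ) - ⌊u ^ 900⌋₊) *
        (∑ d ∈ Finset.Icc 1 ⌊u⌋₊, (ArithmeticFunction.moebius d : ℝ) / (d : ℝ) ^ 3) ^ 2| ≤
      (26 + 32 / (c - 1)) * u ^ 997 := by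
  have hu0 : 0 < u := by linarith
  have hcm : 0 < c - 1 := by linarith
  rw [sY_prod_sum ⌊u⌋₊ _ (fun n : ℕ => ⌊(n : ℝ) ^ c⌋₊), pow_two, Finset.sum_mul_sum, Finset.mul_sum,
    ← Finset.sum_sub_distrib]
  have hY : ((⌊u⌋₊ : ℕ) : ℝ) ≤ u := Nat.floor_le hu0.le
  have hmem : ∀ d ∈ Finset.Icc 1 ⌊u⌋₊, 1 ≤ d ∧ (d : ℝ) ≤ u := by
    intro d hd
    rw [Finset.mem_Icc] at hd
    exact ⟨hd.1, le_trans (by exact_mod_cast hd.2) hY⟩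
  have hin : ∀ e ∈ Finset.Icc 1 ⌊u⌋₊, ∀ d ∈ Finset.Icc 1 ⌊u⌋₊,
      |(ArithmeticFunction.moebius e : ℝ) * (ArithmeticFunction.moebius d : ℝ) *
        (((Finset.Icc (⌊u ^ 900⌋₊ + 1) ⌊u ^ 1000⌋₊).filter
          (fun n : ℕ => e ^ 3 ∣ n ∧ d ^ 3 ∣ ⌊(n : ℝ) ^ c⌋₊)).card : ℝ) -
        ((⌊u ^ 1000⌋₊ : ℝ) - ⌊u ^ 900⌋₊) * ((ArithmeticFunction.moebius e : ℝ) / (e : ℝ) ^ 3 *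
          ((ArithmeticFunction.moebius d : ℝ) / (d : ℝ) ^ 3))| ≤
      (26 + 32 / (c - 1)) * u ^ 995 := by
    intro e he d hd
    have h := small_one c u hc1 hc2 hu d e (hmem d hd).1 (hmem e he).1 (hmem d hd).2 (hmem e he).2
    generalize (((Finset.Icc (⌊u ^ 900⌋₊ + 1) ⌊u ^ 1000⌋₊).filter
          (fun n : ℕ => e ^ 3 ∣ n ∧ d ^ 3 ∣ ⌊(n : ℝ) ^ c⌋₊)).card : ℝ) = X at *
    generalize (⌊u ^ 1000⌋₊ : ℝ) - ⌊u ^ 900⌋₊ = W at *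
    have e1 : (ArithmeticFunction.moebius e : ℝ) * (ArithmeticFunction.moebius d : ℝ) * X -
        W * ((ArithmeticFunction.moebius e : ℝ) / (e : ℝ) ^ 3 *
          ((ArithmeticFunction.moebius d : ℝ) / (d : ℝ) ^ 3)) =
        (ArithmeticFunction.moebius e : ℝ) * (ArithmeticFunction.moebius d : ℝ) *
        (X - W * (1 / (e : ℝ) ^ 3) * (1 / (d : ℝ) ^ 3)) := by ring
    rw [e1, abs_mul, abs_mul]
    have h1 := abs_moebius_real e
    have h2 := abs_moebius_real d
    calc _ ≤ 1 * 1 * ((26 + 32 / (c - 1)) * u ^ 995) := by gcongr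
      _ = _ := by ring
  have hB : 0 ≤ (26 + 32 / (c - 1)) * u ^ 995 := by positivity
  calc _ ≤ ∑ e ∈ Finset.Icc 1 ⌊u⌋₊, ∑ d ∈ Finset.Icc 1 ⌊u⌋₊, (26 + 32 / (c - 1)) * u ^ 995 := by
        refine (Finset.abs_sum_le_sum_abs _ _).trans ?_
        apply Finset.sum_le_sum
        intro e he
        rw [Finset.mul_sum, ← Finset.sum_sub_distrib]
        refine (Finset.abs_sum_le_sum_abs _ _).trans ?_
        apply Finset.sum_le_sum
        intro d hd
        exact hin e he d hd
    _ = ((⌊u⌋₊ : ℕ) : ℝ) * (((⌊u⌋₊ : ℕ) : ℝ) * ((26 + 32 / (c - 1)) * u ^ 995)) := by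
        simp only [Finset.sum_const, Nat.card_Icc, nsmul_eq_mul, Nat.add_sub_cancel]
    _ ≤ u * (u * ((26 + 32 / (c - 1)) * u ^ 995)) := by gcongr
    _ = _ := by ring

lemma count_eq (c : ℝ) (N : ℕ) :
    (((Finset.Icc 1 N).filter (fun n : ℕ => CubeFree n ∧ CubeFree ⌊(n : ℝ) ^ c⌋₊)).card : ℝ) =
      ∑ n ∈ Finset.Icc 1 N, cfI n * cfI ⌊(n : ℝ) ^ c⌋₊ := by
  rw [Finset.card_filter]
  push_cast
  apply Finset.sum_congr rfl
  intro n _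
  unfold cfI
  by_cases h1 : CubeFree n <;> by_cases h2 : CubeFree ⌊(n : ℝ) ^ c⌋₊ <;> simp [h1, h2]

lemma split_sum (M N : ℕ) (hMN : M ≤ N) (f : ℕ → ℝ) (hf : ∀ n, |f n| ≤ 1) :
    |∑ n ∈ Finset.Icc 1 N, f n - ∑ n ∈ Finset.Icc (M + 1) N, f n| ≤ M := by
  have e1 : Finset.Icc 1 N = Finset.Ioc 0 N := by ext; simp only [Finset.mem_Icc, Finset.mem_Ioc]; omega
  have e2 : Finset.Icc (M + 1) N = Finset.Ioc M N := by
    ext; simp only [Finset.mem_Icc, Finset.mem_Ioc]; omega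
  rw [e1, e2, ← Finset.sum_Ioc_consecutive f (Nat.zero_le M) hMN, add_sub_cancel_right]
  refine (Finset.abs_sum_le_sum_abs _ _).trans ?_
  refine (Finset.sum_le_sum (fun n _ => hf n)).trans ?_
  simp

lemma const_term (u : ℝ) (hu : 2 ≤ u) :
    |((⌊u ^ 1000⌋₊ : ℝ) - ⌊u ^ 900⌋₊) *
        (∑ d ∈ Finset.Icc 1 ⌊u⌋₊, (ArithmeticFunction.moebius d : ℝ) / (d : ℝ) ^ 3) ^ 2 -
      u ^ 1000 / zeta3 ^ 2| ≤ 28 * u ^ 999 := by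
  have hu0 : 0 < u := by linarith
  have hu1 : 1 ≤ u := by linarith
  have hY1 : 1 ≤ ⌊u⌋₊ := Nat.le_floor (by push_cast; linarith)
  have hYge : u / 2 ≤ (⌊u⌋₊ : ℝ) := by
    have := Nat.lt_floor_add_one u
    linarith
  have h1 := mu_tail ⌊u⌋₊ hY1
  have h2 := zeta3_inv_le
  have h3 : 1 / ((⌊u⌋₊ : ℕ) : ℝ) ^ 2 ≤ 4 / u ^ 2 := by
    calc _ ≤ 1 / (u / 2) ^ 2 := by gcongr
      _ = 4 / u ^ 2 := by field_simp; norm_num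
  have h4 : 4 / u ^ 2 ≤ 1 := by rw [div_le_one (by positivity)]; nlinarith
  rw [show u ^ 1000 / zeta3 ^ 2 = u ^ 1000 * (1 / zeta3) ^ 2 by ring]
  generalize ∑ d ∈ Finset.Icc 1 ⌊u⌋₊, (ArithmeticFunction.moebius d : ℝ) / (d : ℝ) ^ 3 = P at *
  generalize 1 / zeta3 = Z at *
  have hd : |P - Z| ≤ 4 / u ^ 2 := h1.trans h3
  have hs : |P + Z| ≤ 5 := by
    have e : P + Z = (P - Z) + 2 * Z := by ring
    rw [e]
    refine (abs_add_le _ _).trans ?_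
    rw [abs_mul, abs_two]
    linarith
  have hN1 : ((⌊u ^ 1000⌋₊ : ℕ) : ℝ) ≤ u ^ 1000 := Nat.floor_le (by positivity)
  have hN2 := Nat.lt_floor_add_one (u ^ 1000)
  have hM1 : ((⌊u ^ 900⌋₊ : ℕ) : ℝ) ≤ u ^ 900 := Nat.floor_le (by positivity)
  have hM0 : (0 : ℝ) ≤ ((⌊u ^ 900⌋₊ : ℕ) : ℝ) := by positivity
  have hMN : ((⌊u ^ 900⌋₊ : ℕ) : ℝ) ≤ ((⌊u ^ 1000⌋₊ : ℕ) : ℝ) := by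
    exact_mod_cast Nat.floor_le_floor (pow_le_pow_right₀ hu1 (by norm_num))
  have hM9 : u ^ 900 ≤ u ^ 999 := pow_le_pow_right₀ hu1 (by norm_num)
  have h19 : 1 ≤ u ^ 999 := one_le_pow₀ hu1
  have h89 : u ^ 998 ≤ u ^ 999 := pow_le_pow_right₀ hu1 (by norm_num)
  have e1000 : u ^ 1000 * (4 / u ^ 2) = 4 * u ^ 998 := by
    rw [show u ^ 1000 = u ^ 998 * u ^ 2 by ring]
    generalize u ^ 998 = w
    field_simp
  have hZ2 : |Z ^ 2| ≤ 4 := by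
    rw [abs_pow]
    calc |Z| ^ 2 ≤ 2 ^ 2 := by gcongr
      _ = 4 := by norm_num
  have hW0 : 0 ≤ (⌊u ^ 1000⌋₊ : ℝ) - ⌊u ^ 900⌋₊ := by linarith
  have hW1 : (⌊u ^ 1000⌋₊ : ℝ) - ⌊u ^ 900⌋₊ ≤ u ^ 1000 := by linarith
  have hW2 : |(⌊u ^ 1000⌋₊ : ℝ) - ⌊u ^ 900⌋₊ - u ^ 1000| ≤ 2 * u ^ 999 := by
    rw [abs_le]; constructor <;> linarith
  generalize (⌊u ^ 1000⌋₊ : ℝ) - ⌊u ^ 900⌋₊ = W at *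
  have e : W * P ^ 2 - u ^ 1000 * Z ^ 2 = W * ((P - Z) * (P + Z)) + (W - u ^ 1000) * Z ^ 2 := by ring
  rw [e]
  refine (abs_add_le _ _).trans ?_
  rw [abs_mul, abs_mul, abs_mul, abs_of_nonneg hW0]
  calc _ ≤ u ^ 1000 * (4 / u ^ 2 * 5) + (2 * u ^ 999) * 4 := by gcongr
    _ = 5 * (u ^ 1000 * (4 / u ^ 2)) + 8 * u ^ 999 := by ring
    _ ≤ _ := by rw [e1000]; linarith

lemma main_bound (c u : ℝ) (hc1 : 1 < c) (hc2 : c < 11 / 6) (hu : 2 ≤ u) :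
    |(((Finset.Icc 1 ⌊u ^ 1000⌋₊).filter
      (fun n : ℕ => CubeFree n ∧ CubeFree ⌊(n : ℝ) ^ c⌋₊)).card : ℝ) - u ^ 1000 / zeta3 ^ 2| ≤
      (10 ^ 6 / (c - 1) + 10 ^ 6) * u ^ 999 := by
  have hu0 : 0 < u := by linarith
  have hu1 : 1 ≤ u := by linarith
  have hcm : 0 < c - 1 := by linarith
  rw [count_eq]
  have hMN : ⌊u ^ 900⌋₊ ≤ ⌊u ^ 1000⌋₊ := Nat.floor_le_floor (pow_le_pow_right₀ hu1 (by norm_num))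
  have hYN : ⌊u⌋₊ ≤ ⌊u ^ 1000⌋₊ := Nat.floor_le_floor (le_self_pow₀ hu1 (by norm_num))
  have hY1 : 1 ≤ ⌊u⌋₊ := Nat.le_floor (by push_cast; linarith)
  have hNle : ((⌊u ^ 1000⌋₊ : ℕ) : ℝ) ≤ u ^ 1000 := Nat.floor_le (by positivity)
  have hMle : ((⌊u ^ 900⌋₊ : ℕ) : ℝ) ≤ u ^ 900 := Nat.floor_le (by positivity)
  have hYge : u / 2 ≤ (⌊u⌋₊ : ℝ) := by
    have := Nat.lt_floor_add_one u
    linarith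
  have s1 := split_sum ⌊u ^ 900⌋₊ ⌊u ^ 1000⌋₊ hMN (fun n : ℕ => cfI n * cfI ⌊(n : ℝ) ^ c⌋₊) (by
    intro n
    rw [abs_mul]
    calc _ ≤ (1 : ℝ) * 1 := by
          have h1 := cfI_abs n
          have h2 := cfI_abs ⌊(n : ℝ) ^ c⌋₊
          gcongr
      _ = 1 := by ring)
  have s5 := main_term c u hc1 hc2 hu
  have s6 := const_term u hu
  have s2 : |∑ n ∈ Finset.Icc (⌊u ^ 900⌋₊ + 1) ⌊u ^ 1000⌋₊, cfI n * cfI ⌊(n : ℝ) ^ c⌋₊ -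
      ∑ n ∈ Finset.Icc (⌊u ^ 900⌋₊ + 1) ⌊u ^ 1000⌋₊, cfI n * sY ⌊u⌋₊ ⌊(n : ℝ) ^ c⌋₊| ≤
      (10 ^ 5 / (c - 1) + 10 ^ 5) * u ^ 999 := by
    rw [← Finset.sum_sub_distrib]
    refine (Finset.abs_sum_le_sum_abs _ _).trans (le_trans ?_ (large_sum c u hc1 hc2 hu))
    have hsw := swap_card (Finset.Icc (⌊u ^ 900⌋₊ + 1) ⌊u ^ 1000⌋₊) (Finset.Ioc ⌊u⌋₊ ⌊u ^ 667⌋₊)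
      (fun d n : ℕ => d ^ 3 ∣ ⌊(n : ℝ) ^ c⌋₊)
    refine le_trans ?_ (le_of_eq (hsw.trans ?_))
    · apply Finset.sum_le_sum
      intro n hn
      rw [Finset.mem_Icc] at hn
      rw [← mul_sub, abs_mul]
      have h1 := cfI_abs n
      have h2 := tail_floor c u hc1 hc2 hu n (by omega)
        (le_trans (by exact_mod_cast hn.2) hNle)
      calc _ ≤ 1 * |cfI ⌊(n : ℝ) ^ c⌋₊ - sY ⌊u⌋₊ ⌊(n : ℝ) ^ c⌋₊| := by gcongr
        _ ≤ _ := by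
          rw [one_mul]
          refine h2.trans (le_of_eq ?_)
          congr!
    · congr!
  have s3 : |∑ n ∈ Finset.Icc (⌊u ^ 900⌋₊ + 1) ⌊u ^ 1000⌋₊, cfI n * sY ⌊u⌋₊ ⌊(n : ℝ) ^ c⌋₊ -
      ∑ n ∈ Finset.Icc (⌊u ^ 900⌋₊ + 1) ⌊u ^ 1000⌋₊, sY ⌊u⌋₊ n * sY ⌊u⌋₊ ⌊(n : ℝ) ^ c⌋₊| ≤
      2 * u ^ 999 := by
    rw [← Finset.sum_sub_distrib]
    have ht := tail_plain ⌊u⌋₊ ⌊u ^ 1000⌋₊ ⌊u ^ 900⌋₊ hY1 hYN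
    have hYp : (0 : ℝ) < ⌊u⌋₊ := by exact_mod_cast hY1
    calc _ ≤ ∑ n ∈ Finset.Icc (⌊u ^ 900⌋₊ + 1) ⌊u ^ 1000⌋₊, |cfI n - sY ⌊u⌋₊ n| * ⌊u⌋₊ := by
          refine (Finset.abs_sum_le_sum_abs _ _).trans ?_
          apply Finset.sum_le_sum
          intro n _
          rw [← sub_mul, abs_mul]
          have := sY_abs ⌊u⌋₊ ⌊(n : ℝ) ^ c⌋₊
          gcongr
      _ ≤ ((⌊u ^ 1000⌋₊ : ℕ) : ℝ) / ((⌊u⌋₊ : ℕ) : ℝ) ^ 2 * ⌊u⌋₊ := by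
          rw [← Finset.sum_mul]; gcongr
      _ = ((⌊u ^ 1000⌋₊ : ℕ) : ℝ) / ((⌊u⌋₊ : ℕ) : ℝ) := by field_simp
      _ ≤ u ^ 1000 / (u / 2) := by gcongr
      _ = 2 * u ^ 999 := by
          rw [show u ^ 1000 = u ^ 999 * u by ring]
          generalize u ^ 999 = w
          field_simp
  have h79 : u ^ 997 ≤ u ^ 999 := pow_le_pow_right₀ hu1 (by norm_num)
  have h09 : u ^ 900 ≤ u ^ 999 := pow_le_pow_right₀ hu1 (by norm_num)
  have s5b : (26 + 32 / (c - 1)) * u ^ 997 ≤ (26 + 32 / (c - 1)) * u ^ 999 := by gcongr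
  have h9 : 0 ≤ u ^ 999 := by positivity
  have hci : 0 ≤ 1 / (c - 1) := by positivity
  have efin : (10 ^ 6 / (c - 1) + 10 ^ 6) * u ^ 999 = (u ^ 999 +
      (10 ^ 5 / (c - 1) + 10 ^ 5) * u ^ 999 + 2 * u ^ 999 + (26 + 32 / (c - 1)) * u ^ 999 +
      28 * u ^ 999) + ((10 ^ 6 - 10 ^ 5 - 32) * (1 / (c - 1)) + (10 ^ 6 - 10 ^ 5 - 57)) * u ^ 999 := by
    ring
  have hpos : 0 ≤ ((10 ^ 6 - 10 ^ 5 - 32) * (1 / (c - 1)) + (10 ^ 6 - 10 ^ 5 - 57)) * u ^ 999 := by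
    apply mul_nonneg _ h9
    norm_num only
    positivity
  rw [efin]
  beta_reduce at s1
  have t1 := abs_le.1 s1
  have t2 := abs_le.1 s2
  have t3 := abs_le.1 s3
  have t5 := abs_le.1 s5
  have t6 := abs_le.1 s6
  rw [abs_le]
  constructor <;> linarith [t1.1, t1.2, t2.1, t2.2, t3.1, t3.2, t5.1, t5.2, t6.1, t6.2]

theorem cubefree_floor_count_cubefree (c ε : ℝ) (hc1 : 1 < c) (hc2 : c < 11 / 6)
    (hε1 : 0 < ε) (hε2 : ε < 1 / 10 ^ 10) :
    (fun x : ℝ =>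
        (((Finset.Icc 1 ⌊x⌋₊).filter
            (fun n => CubeFree n ∧ CubeFree ⌊(n : ℝ) ^ c⌋₊)).card : ℝ)
          - x / zeta3 ^ 2)
      =O[atTop] fun x : ℝ => x ^ (1 - ε) := by
  have hcm : 0 < c - 1 := by linarith
  apply IsBigO.of_bound (10 ^ 6 / (c - 1) + 10 ^ 6)
  filter_upwards [eventually_ge_atTop ((2 : ℝ) ^ 1000)] with x hx
  have h21 : (1 : ℝ) ≤ 2 ^ 1000 := one_le_pow₀ (by norm_num)
  have hx1 : 1 ≤ x := h21.trans hx
  have hx0 : 0 ≤ x := le_trans zero_le_one hx1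
  obtain ⟨u, hudef⟩ : ∃ u : ℝ, u = x ^ (1 / 1000 : ℝ) := ⟨_, rfl⟩
  have hupow : u ^ 1000 = x := by
    rw [hudef, ← Real.rpow_natCast, ← Real.rpow_mul hx0]
    norm_num
  have hu0 : 0 ≤ u := by rw [hudef]; positivity
  have hu2 : 2 ≤ u := by
    rw [← hupow] at hx
    exact le_of_pow_le_pow_left₀ (by norm_num) hu0 hx
  have h := main_bound c u hc1 hc2 hu2
  have h999 : u ^ 999 ≤ x ^ (1 - ε) := by
    rw [hudef, ← Real.rpow_natCast, ← Real.rpow_mul hx0]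
    apply Real.rpow_le_rpow_of_exponent_le hx1
    have : (1 : ℝ) / 10 ^ 10 ≤ 1 / 1000 := by norm_num
    push_cast
    linarith
  rw [hupow] at h
  rw [Real.norm_eq_abs, Real.norm_eq_abs, abs_of_nonneg (Real.rpow_nonneg hx0 _)]
  refine h.trans ?_
  gcongr
end

section
/- For every fixed real c with 1 < c < 11/6, the set {n ∈ ℕ : ⌊m^c⌋ = n for some m ∈ ℕ, and n is cube-free} is infinite; equivalently, there are infinitely many m ∈ ℕ such that ⌊m^c⌋ is cube-free. -/
namespace CF

open Filter Topology Finset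

lemma mvt_rpow (p x y : ℝ) (hx : 0 < x) (hxy : x < y) :
    ∃ ξ ∈ Set.Ioo x y, y ^ p - x ^ p = p * ξ ^ (p - 1) * (y - x) := by
  obtain ⟨ξ, hξ, h⟩ := exists_hasDerivAt_eq_slope (fun s : ℝ => s ^ p)
    (fun s => p * s ^ (p - 1)) hxy
    (fun s hs => (Real.continuousAt_rpow_const s p
      (Or.inl (by have := hs.1; linarith))).continuousWithinAt)
    (fun s hs => Real.hasDerivAt_rpow_const (Or.inl (by have := hs.1; linarith)))
  refine ⟨ξ, hξ, ?_⟩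
  have : y - x ≠ 0 := by linarith
  rw [h]; field_simp

lemma mvt_second (c x a t : ℝ) (hx : 0 < x) (ha : 0 < a) (ht : 0 < t) :
    ∃ ζ ∈ Set.Ioo x (x + a + t),
      ((x + t + a) ^ c - (x + t) ^ c) - ((x + a) ^ c - x ^ c)
        = t * (a * (c * (c - 1))) * ζ ^ (c - 2) := by
  have hd : ∀ s : ℝ, 0 < s → HasDerivAt (fun s : ℝ => (s + a) ^ c - s ^ c)
      (c * (s + a) ^ (c - 1) - c * s ^ (c - 1)) s := by
    intro s hs
    have h1 : HasDerivAt (fun s : ℝ => (s + a) ^ c) (c * (s + a) ^ (c - 1)) s := by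
      have := (Real.hasDerivAt_rpow_const (x := s + a) (p := c)
        (Or.inl (by linarith))).comp_add_const s a
      simpa using this
    exact h1.sub (Real.hasDerivAt_rpow_const (Or.inl hs.ne'))
  obtain ⟨ξ, hξ, h⟩ := exists_hasDerivAt_eq_slope (fun s : ℝ => (s + a) ^ c - s ^ c)
    (fun s => c * (s + a) ^ (c - 1) - c * s ^ (c - 1)) (show x < x + t by linarith)
    (fun s hs => (hd s (by have := hs.1; linarith)).continuousAt.continuousWithinAt)
    (fun s hs => hd s (by have := hs.1; linarith))
  obtain ⟨ζ, hζ, h2⟩ := mvt_rpow (c - 1) ξ (ξ + a) (by have := hξ.1; linarith) (by linarith)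
  refine ⟨ζ, ⟨by have := hξ.1; have := hζ.1; linarith,
    by have := hξ.2; have := hζ.2; linarith⟩, ?_⟩
  have h3 : c - 1 - 1 = c - 2 := by ring
  rw [h3] at h2
  have h4 : c * (ξ + a) ^ (c - 1) - c * ξ ^ (c - 1) = c * ((c - 1) * ζ ^ (c - 2) * a) := by
    rw [← mul_sub, h2]; ring
  rw [h4] at h
  have : x + t - x ≠ 0 := by linarith
  rw [eq_div_iff this] at h
  rw [← h]; ring

/-- weights -/
noncomputable def w (c : ℝ) (m : ℕ) : ℝ := (m : ℝ) ^ (c - 2)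

/-- total weight -/
noncomputable def W (c : ℝ) (X : ℕ) : ℝ := ∑ m ∈ Ico X (2 * X), w c m

/-- weighted sum -/
noncomputable def G (c : ℝ) (z : ℕ → ℂ) (X : ℕ) : ℂ := ∑ m ∈ Ico X (2 * X), (w c m : ℂ) * z m

/-- weighted average going to zero -/
def Neg (c : ℝ) (z : ℕ → ℂ) : Prop :=
  ∀ ε : ℝ, 0 < ε → ∀ᶠ X : ℕ in atTop, ‖G c z X‖ ≤ ε * (X : ℝ) ^ (c - 1)

lemma w_nonneg (c : ℝ) (m : ℕ) : 0 ≤ w c m := Real.rpow_nonneg (Nat.cast_nonneg m) _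

lemma w_anti {c : ℝ} (hc : c < 2) {m n : ℕ} (hm : 1 ≤ m) (h : m ≤ n) : w c n ≤ w c m := by
  unfold w
  exact Real.rpow_le_rpow_of_nonpos (by exact_mod_cast hm) (by exact_mod_cast h) (by linarith)

lemma mul_w {c : ℝ} {X : ℕ} (hX : 1 ≤ X) : (X : ℝ) * w c X = (X : ℝ) ^ (c - 1) := by
  unfold w
  have : (0 : ℝ) < X := by exact_mod_cast hX
  have h : c - 1 = 1 + (c - 2) := by ring
  rw [h, Real.rpow_add this, Real.rpow_one]

lemma W_le {c : ℝ} (hc : c < 2) {X : ℕ} (hX : 1 ≤ X) : W c X ≤ (X : ℝ) ^ (c - 1) := by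
  unfold W
  calc _ ≤ ∑ m ∈ Ico X (2 * X), w c X := by
        refine sum_le_sum fun m hm => w_anti hc hX (mem_Ico.1 hm).1
    _ = (X : ℝ) * w c X := by
        simp [two_mul]
    _ = _ := mul_w hX

lemma le_W {c : ℝ} (hc1 : 1 < c) (hc : c < 2) {X : ℕ} (hX : 1 ≤ X) :
    (X : ℝ) ^ (c - 1) / 2 ≤ W c X := by
  unfold W
  have h0 : (0 : ℝ) < X := by exact_mod_cast hX
  calc (X : ℝ) ^ (c - 1) / 2 ≤ (X : ℝ) * w c (2 * X) := by
        rw [← mul_w hX]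
        unfold w
        push_cast
        rw [Real.mul_rpow (by norm_num) h0.le]
        have : (2 : ℝ)⁻¹ ≤ 2 ^ (c - 2) := by
          rw [← Real.rpow_neg_one]
          exact Real.rpow_le_rpow_of_exponent_le (by norm_num) (by linarith)
        have h2 : 0 ≤ (X : ℝ) * (X : ℝ) ^ (c - 2) := by positivity
        nlinarith
    _ = ∑ m ∈ Ico X (2 * X), w c (2 * X) := by simp [two_mul]
    _ ≤ _ := by
        refine sum_le_sum fun m hm => w_anti hc ?_ (mem_Ico.1 hm).2.le
        have := (mem_Ico.1 hm).1; omega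

lemma tele {E : Type*} [AddCommGroup E] (f : ℕ → E) (X : ℕ) :
    ∑ m ∈ Ico X (2 * X), (f (m + 1) - f m) = f (2 * X) - f X := by
  rw [Finset.sum_Ico_sub f (by omega)]

lemma tele_w {c : ℝ} (hc : c < 2) {X : ℕ} (hX : 1 ≤ X) (h : ℕ) :
    ∑ m ∈ Ico X (2 * X), (w c m - w c (m + h)) ≤ h * w c X := by
  induction h with
  | zero => simp
  | succ h ih =>
    have h1 : ∑ m ∈ Ico X (2 * X), (w c m - w c (m + (h + 1)))
        = ∑ m ∈ Ico X (2 * X), (w c m - w c (m + h))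
          - ∑ m ∈ Ico X (2 * X), ((fun m => w c (m + h)) (m + 1) - (fun m => w c (m + h)) m) := by
      rw [← sum_sub_distrib]
      refine sum_congr rfl fun m _ => ?_
      have : m + (h + 1) = m + 1 + h := by ring
      simp only [this]; ring
    rw [h1, tele (fun m => w c (m + h)) X]
    have h2 := w_nonneg c (2 * X + h)
    have h3 := w_anti hc hX (show X ≤ X + h by omega)
    push_cast
    linarith

lemma G_norm_le {c : ℝ} {z : ℕ → ℂ} (hz : ∀ m, ‖z m‖ ≤ 1) (X : ℕ) : ‖G c z X‖ ≤ W c X := by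
  unfold G W
  refine (norm_sum_le _ _).trans (sum_le_sum fun m _ => ?_)
  rw [norm_mul, Complex.norm_real, Real.norm_of_nonneg (w_nonneg c m)]
  exact mul_le_of_le_one_right (w_nonneg c m) (hz m)

lemma w_small {c : ℝ} (C : ℝ) {ε : ℝ} (hε : 0 < ε) :
    ∀ᶠ X : ℕ in atTop, C * w c X ≤ ε * (X : ℝ) ^ (c - 1) := by
  filter_upwards [eventually_ge_atTop 1, eventually_ge_atTop ⌈C / ε⌉₊] with X h1 h2
  rw [← mul_w h1]
  have h3 : C / ε ≤ X := (Nat.le_ceil _).trans (by exact_mod_cast h2)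
  rw [div_le_iff₀ hε] at h3
  have := w_nonneg c X
  nlinarith

lemma Neg.add {c : ℝ} {z z' : ℕ → ℂ} (h : Neg c z) (h' : Neg c z') :
    Neg c (fun m => z m + z' m) := by
  intro ε hε
  filter_upwards [h (ε / 2) (by linarith), h' (ε / 2) (by linarith)] with X h1 h2
  have : G c (fun m => z m + z' m) X = G c z X + G c z' X := by
    unfold G; rw [← sum_add_distrib]; exact sum_congr rfl fun m _ => by ring
  rw [this]
  refine (norm_add_le _ _).trans ?_
  linarith

lemma Neg.sum {c : ℝ} {z : ℕ → ℕ → ℂ} (A : ℕ) (h : ∀ k < A, Neg c (z k)) :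
    Neg c (fun m => ∑ k ∈ range A, z k m) := by
  induction A with
  | zero =>
    intro ε hε
    filter_upwards with X
    simp only [G, range_zero, sum_empty, mul_zero, norm_zero, sum_const_zero]
    positivity
  | succ A ih =>
    simp only [sum_range_succ]
    exact (ih fun k hk => h k (by omega)).add (h A (by omega))

lemma shift_one {c : ℝ} (hc : c < 2) {z : ℕ → ℂ} (hz : ∀ m, ‖z m‖ ≤ 1) :
    Neg c (fun m => z (m + 1) - z m) := by
  intro ε hε
  filter_upwards [w_small 3 hε, eventually_ge_atTop 1] with X hX hX1
  refine le_trans ?_ hX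
  have h1 : G c (fun m => z (m + 1) - z m) X
      = ((w c (2 * X) : ℂ) * z (2 * X) - w c X * z X)
        + ∑ m ∈ Ico X (2 * X), ((w c m - w c (m + 1) : ℝ) : ℂ) * z (m + 1) := by
    rw [← tele (fun m => (w c m : ℂ) * z m) X, ← sum_add_distrib]
    unfold G
    refine sum_congr rfl fun m _ => ?_
    push_cast; ring
  rw [h1]
  have hw : ∀ m, X ≤ m → ‖(w c m : ℂ) * z m‖ ≤ w c X := by
    intro m hm
    rw [norm_mul, Complex.norm_real, Real.norm_of_nonneg (w_nonneg c m)]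
    exact (mul_le_of_le_one_right (w_nonneg c m) (hz m)).trans (w_anti hc hX1 hm)
  have h2 : ‖∑ m ∈ Ico X (2 * X), ((w c m - w c (m + 1) : ℝ) : ℂ) * z (m + 1)‖ ≤ 1 * w c X := by
    have := tele_w hc hX1 1
    rw [Nat.cast_one] at this
    refine le_trans ?_ this
    refine (norm_sum_le _ _).trans (sum_le_sum fun m hm => ?_)
    have hm1 := (mem_Ico.1 hm).1
    have := w_anti hc (show 1 ≤ m by omega) (show m ≤ m + 1 by omega)
    rw [norm_mul, Complex.norm_real, Real.norm_of_nonneg (by linarith)]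
    exact mul_le_of_le_one_right (by linarith) (hz _)
  refine (norm_add_le _ _).trans ?_
  have h3 := norm_sub_le ((w c (2 * X) : ℂ) * z (2 * X)) (w c X * z X)
  have h4 := hw (2 * X) (by omega)
  have h5 := hw X le_rfl
  linarith

lemma shift {c : ℝ} (hc : c < 2) {z : ℕ → ℂ} (hz : ∀ m, ‖z m‖ ≤ 1) (h : ℕ) :
    Neg c (fun m => z (m + h) - z m) := by
  induction h with
  | zero =>
    intro ε hε
    filter_upwards with X
    simp only [G, add_zero, sub_self, mul_zero, norm_zero, sum_const_zero]
    positivity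
  | succ h ih =>
    have := ih.add (shift_one hc (z := fun m => z (m + h)) (fun m => hz _))
    convert this using 2 with m
    rw [show m + (h + 1) = m + 1 + h by ring]; ring

lemma Neg.neg {c : ℝ} {z : ℕ → ℂ} (h : Neg c z) : Neg c (fun m => - z m) := by
  intro ε hε
  filter_upwards [h ε hε] with X hX
  have : G c (fun m => - z m) X = - G c z X := by
    unfold G; rw [← sum_neg_distrib]; exact sum_congr rfl fun m _ => by ring
  rw [this, norm_neg]; exact hX

lemma Neg.conj {c : ℝ} {z : ℕ → ℂ} (h : Neg c z) : Neg c (fun m => (starRingEnd ℂ) (z m)) := by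
  intro ε hε
  filter_upwards [h ε hε] with X hX
  have : G c (fun m => (starRingEnd ℂ) (z m)) X = (starRingEnd ℂ) (G c z X) := by
    unfold G; rw [map_sum]; exact sum_congr rfl fun m _ => by simp
  rw [this, RCLike.norm_conj]; exact hX

lemma Neg.shift {c : ℝ} (hc : c < 2) {z : ℕ → ℂ} (hz : ∀ m, ‖z m‖ ≤ 1) (h : Neg c z) (k : ℕ) :
    Neg c (fun m => z (m + k)) := by
  have := h.add (CF.shift hc hz k)
  simpa using this

lemma gram {c : ℝ} {z : ℕ → ℕ → ℂ} (hz : ∀ k m, ‖z k m‖ ≤ 1) (A : ℕ)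
    (h : ∀ k < A, ∀ l < A, k ≠ l → Neg c (fun m => z k m * (starRingEnd ℂ) (z l m)))
    {ε : ℝ} (hε : 0 < ε) :
    ∀ᶠ X : ℕ in atTop, ∑ m ∈ Ico X (2 * X), w c m * ‖∑ k ∈ range A, z k m‖ ^ 2
      ≤ A * W c X + ε * (X : ℝ) ^ (c - 1) := by
  set δ : ℝ := ε / (A ^ 2 + 1) with hδ
  have hδ0 : 0 < δ := by positivity
  have hev : ∀ᶠ X : ℕ in atTop, ∀ k ∈ range A, ∀ l ∈ range A, k ≠ l →
      ‖G c (fun m => z k m * (starRingEnd ℂ) (z l m)) X‖ ≤ δ * (X : ℝ) ^ (c - 1) := by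
    rw [Filter.eventually_all_finset]
    intro k hk
    rw [Filter.eventually_all_finset]
    intro l hl
    by_cases hkl : k = l
    · simp [hkl]
    · filter_upwards [h k (mem_range.1 hk) l (mem_range.1 hl) hkl δ hδ0] with X hX _
      exact hX
  filter_upwards [hev] with X hX
  have hN : 0 ≤ (X : ℝ) ^ (c - 1) := by positivity
  have hWn : 0 ≤ W c X := sum_nonneg fun m _ => w_nonneg c m
  have e1 : ((∑ m ∈ Ico X (2 * X), w c m * ‖∑ k ∈ range A, z k m‖ ^ 2 : ℝ) : ℂ)
      = ∑ k ∈ range A, ∑ l ∈ range A, G c (fun m => z k m * (starRingEnd ℂ) (z l m)) X := by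
    unfold G
    have : ∀ m, ((w c m * ‖∑ k ∈ range A, z k m‖ ^ 2 : ℝ) : ℂ)
        = ∑ k ∈ range A, ∑ l ∈ range A, (w c m : ℂ) * (z k m * (starRingEnd ℂ) (z l m)) := by
      intro m
      push_cast
      rw [← Complex.mul_conj', map_sum, sum_mul_sum, mul_sum]
      refine sum_congr rfl fun k _ => ?_
      rw [mul_sum]
    rw [Complex.ofReal_sum]
    simp only [this]
    rw [sum_comm]
    refine sum_congr rfl fun k _ => ?_
    rw [sum_comm]
  have e2 : ∑ m ∈ Ico X (2 * X), w c m * ‖∑ k ∈ range A, z k m‖ ^ 2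
      ≤ ∑ k ∈ range A, ∑ l ∈ range A, ‖G c (fun m => z k m * (starRingEnd ℂ) (z l m)) X‖ := by
    refine (le_abs_self _).trans ?_
    rw [← Real.norm_eq_abs, ← Complex.norm_real, e1]
    refine (norm_sum_le _ _).trans (sum_le_sum fun k _ => norm_sum_le _ _)
  refine e2.trans ?_
  calc _ ≤ ∑ k ∈ range A, ∑ l ∈ range A, ((if k = l then W c X else 0) + δ * (X : ℝ) ^ (c - 1)) := by
        refine sum_le_sum fun k hk => sum_le_sum fun l hl => ?_
        by_cases hkl : k = l
        · subst hkl
          rw [if_pos rfl]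
          have := G_norm_le (c := c) (z := fun m => z k m * (starRingEnd ℂ) (z k m)) (fun m => by
            rw [norm_mul, RCLike.norm_conj]
            exact mul_le_one₀ (hz k m) (norm_nonneg _) (hz k m)) X
          have h3 : 0 ≤ δ * (X : ℝ) ^ (c - 1) := by positivity
          linarith
        · rw [if_neg hkl]
          simpa using hX k hk l hl hkl
    _ = A * W c X + (A : ℝ) ^ 2 * (δ * (X : ℝ) ^ (c - 1)) := by
        simp only [sum_add_distrib, sum_ite_eq, sum_const, card_range, nsmul_eq_mul]
        rw [sum_congr rfl (fun k hk => if_pos hk)]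
        simp only [sum_const, card_range, nsmul_eq_mul]
        ring
    _ ≤ _ := by
        have : (A : ℝ) ^ 2 * δ ≤ ε := by
          rw [hδ, mul_div_assoc', div_le_iff₀ (by positivity)]
          nlinarith
        nlinarith

lemma vdc {c : ℝ} (hc : c < 2) {z : ℕ → ℂ} (hz : ∀ m, ‖z m‖ ≤ 1)
    (h : ∀ a, 1 ≤ a → Neg c (fun m => z (m + a) * (starRingEnd ℂ) (z m))) : Neg c z := by
  intro ε hε
  obtain ⟨n, hn⟩ := exists_nat_gt (3 / ε)
  have hn0 : (0 : ℝ) < n := lt_trans (by positivity) hn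
  have hn1 : (1 : ℝ) ≤ n := by exact_mod_cast (by exact_mod_cast hn0 : 0 < n)
  have hg := gram (c := c) (z := fun k m => z (m + k)) (fun k m => hz _) (n ^ 2) (by
    intro k _ l _ hkl
    have hb : ∀ a m, ‖z (m + a) * (starRingEnd ℂ) (z m)‖ ≤ 1 := by
      intro a m
      rw [norm_mul, RCLike.norm_conj]
      exact mul_le_one₀ (hz _) (norm_nonneg _) (hz _)
    rcases lt_or_gt_of_ne hkl with h1 | h1
    · have := ((h (l - k) (by omega)).shift hc (hb _) k).conj
      convert this using 2 with m
      rw [show m + k + (l - k) = m + l by omega]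
      simp [mul_comm]
    · have := ((h (k - l) (by omega)).shift hc (hb _) l)
      convert this using 2 with m
      rw [show m + l + (k - l) = m + k by omega]) (ε := 1) one_pos
  have hs := Neg.sum (c := c) (z := fun k m => z (m + k) - z m) (n ^ 2)
    (fun k _ => CF.shift hc hz k) 1 one_pos
  filter_upwards [hg, hs, eventually_ge_atTop 1] with X hX hX2 hX1
  have hN : 0 ≤ (X : ℝ) ^ (c - 1) := by positivity
  have hW := W_le hc hX1
  have hW0 : 0 ≤ W c X := sum_nonneg fun m _ => w_nonneg c m
  set N := (X : ℝ) ^ (c - 1) with hNdef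
  set s : ℕ → ℂ := fun m => ∑ k ∈ range (n ^ 2), z (m + k) with hsdef
  have e1 : ‖G c s X‖ ^ 2 ≤ (2 * n * N) ^ 2 := by
    have h1 : ‖G c s X‖ ≤ ∑ m ∈ Ico X (2 * X), w c m * ‖s m‖ := by
      unfold G
      refine (norm_sum_le _ _).trans (sum_le_sum fun m _ => ?_)
      rw [norm_mul, Complex.norm_real, Real.norm_of_nonneg (w_nonneg c m)]
    have h2 : (∑ m ∈ Ico X (2 * X), w c m * ‖s m‖) ^ 2
        ≤ (∑ m ∈ Ico X (2 * X), w c m) * (∑ m ∈ Ico X (2 * X), w c m * ‖s m‖ ^ 2) := by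
      refine Finset.sum_sq_le_sum_mul_sum_of_sq_le_mul _ (fun m _ => w_nonneg c m)
        (fun m _ => mul_nonneg (w_nonneg c m) (by positivity)) (fun m _ => le_of_eq ?_)
      ring
    have h3 : ‖G c s X‖ ^ 2 ≤ W c X * ((n ^ 2 : ℕ) * W c X + 1 * N) := by
      refine (pow_le_pow_left₀ (norm_nonneg _) h1 2).trans (h2.trans ?_)
      exact mul_le_mul_of_nonneg_left hX hW0
    refine h3.trans ?_
    push_cast
    calc W c X * ((n : ℝ) ^ 2 * W c X + 1 * N) ≤ N * ((n : ℝ) ^ 2 * N + 1 * N) := by gcongr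
      _ ≤ (2 * n * N) ^ 2 := by
          have hn2 : (1 : ℝ) ≤ (n : ℝ) ^ 2 := one_le_pow₀ hn1
          have : N * N ≤ (n : ℝ) ^ 2 * (N * N) := le_mul_of_one_le_left (mul_nonneg hN hN) hn2
          nlinarith [mul_nonneg hN hN]
  have e2 : ‖G c s X‖ ≤ 2 * n * N := by
    exact le_of_sq_le_sq e1 (by positivity)
  have e3 : G c s X = G c (fun m => ∑ k ∈ range (n ^ 2), (z (m + k) - z m)) X
      + (n : ℂ) ^ 2 * G c z X := by
    unfold G
    rw [mul_sum, ← sum_add_distrib]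
    refine sum_congr rfl fun m _ => ?_
    simp only [hsdef, sum_sub_distrib, sum_const, card_range, nsmul_eq_mul]
    push_cast; ring
  have e4 : (n : ℝ) ^ 2 * ‖G c z X‖ ≤ 2 * n * N + 1 * N := by
    have : (n : ℂ) ^ 2 * G c z X
      = G c s X - G c (fun m => ∑ k ∈ range (n ^ 2), (z (m + k) - z m)) X := by rw [e3]; ring
    have h5 : ‖(n : ℂ) ^ 2 * G c z X‖ = (n : ℝ) ^ 2 * ‖G c z X‖ := by simp
    rw [← h5, this]
    refine (norm_sub_le _ _).trans ?_
    linarith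
  rw [div_lt_iff₀ hε] at hn
  have e5 : (n : ℝ) ^ 2 * ‖G c z X‖ ≤ (n : ℝ) ^ 2 * (ε * N) := by
    refine e4.trans ?_
    have : 2 * n * N + 1 * N ≤ n * (3 * N) := by nlinarith
    refine this.trans ?_
    rw [sq, mul_assoc]
    refine mul_le_mul_of_nonneg_left ?_ hn0.le
    rw [← mul_assoc]
    exact mul_le_mul_of_nonneg_right hn.le hN
  exact le_of_mul_le_mul_left e5 (by positivity)


lemma rpow_small {p q C ε : ℝ} (hε : 0 < ε) (hpq : p < q) :
    ∀ᶠ X : ℕ in atTop, C * (X : ℝ) ^ p ≤ ε * (X : ℝ) ^ q := by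
  have h1 : Tendsto (fun X : ℕ => (X : ℝ) ^ (q - p)) atTop atTop :=
    (tendsto_rpow_atTop (by linarith)).comp tendsto_natCast_atTop_atTop
  filter_upwards [h1.eventually_ge_atTop (C / ε), eventually_ge_atTop 1] with X hX hX1
  have h0 : (0 : ℝ) < X := by exact_mod_cast hX1
  rw [div_le_iff₀ hε] at hX
  have : (X : ℝ) ^ q = (X : ℝ) ^ (q - p) * (X : ℝ) ^ p := by
    rw [← Real.rpow_add h0]; congr 1; ring
  rw [this]
  have h2 : 0 < (X : ℝ) ^ p := by positivity
  nlinarith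

/-- the phase -/
noncomputable def z (c b : ℝ) (m : ℕ) : ℂ := Complex.exp ((b * (m : ℝ) ^ c : ℝ) * Complex.I)

lemma norm_z (c b : ℝ) (m : ℕ) : ‖z c b m‖ = 1 := Complex.norm_exp_ofReal_mul_I _

lemma diff_neg {c b : ℝ} (hc1 : 1 < c) (hc : c < 2) (hb : b ≠ 0) (a : ℕ) (ha : 1 ≤ a) :
    Neg c (fun m => z c b (m + a) * (starRingEnd ℂ) (z c b m)) := by
  set D : ℕ → ℝ := fun m => ((m : ℝ) + a) ^ c - (m : ℝ) ^ c with hD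
  set E : ℕ → ℂ := fun m => Complex.exp ((b * D m : ℝ) * Complex.I) with hE
  have hEz : (fun m => z c b (m + a) * (starRingEnd ℂ) (z c b m)) = E := by
    funext m
    simp only [z, hE, hD]
    rw [← Complex.exp_conj, ← Complex.exp_add]
    congr 1
    simp only [map_mul, Complex.conj_ofReal, Complex.conj_I]
    push_cast; ring
  rw [hEz]
  have hEn : ∀ m, ‖E m‖ = 1 := fun m => Complex.norm_exp_ofReal_mul_I _
  have ha0 : (0 : ℝ) < a := by exact_mod_cast ha
  set γ : ℝ := a * (c * (c - 1)) with hγ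
  have hγ0 : 0 < γ := by have : 0 < c - 1 := by linarith
                         positivity
  have hΔ : ∀ m : ℕ, 1 ≤ m → γ * w c (m + (a + 1)) ≤ D (m + 1) - D m ∧
      D (m + 1) - D m ≤ γ * w c m := by
    intro m hm
    have hm0 : (0 : ℝ) < m := by exact_mod_cast hm
    obtain ⟨ζ, hζ, h⟩ := mvt_second c m a 1 hm0 ha0 one_pos
    have h1 : D (m + 1) - D m = γ * ζ ^ (c - 2) := by
      simp only [hD]; push_cast; rw [h]; ring
    rw [h1]
    have hζ0 : 0 < ζ := hm0.trans hζ.1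
    constructor
    · refine mul_le_mul_of_nonneg_left ?_ hγ0.le
      unfold w
      refine Real.rpow_le_rpow_of_nonpos hζ0 ?_ (by linarith)
      have := hζ.2
      push_cast; linarith
    · refine mul_le_mul_of_nonneg_left ?_ hγ0.le
      exact Real.rpow_le_rpow_of_nonpos hm0 hζ.1.le (by linarith)
  have hb0 : 0 < |b| := abs_pos.2 hb
  intro ε hε
  have hbg : 0 < |b| * γ := by positivity
  filter_upwards [eventually_ge_atTop 1,
    w_small (c := c) (γ * (a + 1) * |b|) (show 0 < ε * (|b| * γ) / 3 by positivity),
    rpow_small (C := 2) (show 0 < ε * (|b| * γ) / 3 by positivity) (show 0 < c - 1 by linarith),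
    rpow_small (C := (|b| * γ) ^ 2) (show 0 < ε * (|b| * γ) / 3 by positivity)
      (show 2 * c - 3 < c - 1 by linarith),
    rpow_small (C := |b| * γ) one_pos (show c - 2 < 0 by linarith)] with X hX1 h1 h2 h3 h4
  rw [Real.rpow_zero, mul_one] at h2 h4
  have hX0 : (0 : ℝ) < X := by exact_mod_cast hX1
  have hmX : ∀ m ∈ Ico X (2 * X), X ≤ m := fun m hm => (mem_Ico.1 hm).1
  -- main sum
  have s1 : ‖∑ m ∈ Ico X (2 * X), E m * ((b * (D (m + 1) - D m) : ℝ) * Complex.I)‖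
      ≤ 2 + (|b| * γ) ^ 2 * (X : ℝ) ^ (2 * c - 3) := by
    have e1 : ∑ m ∈ Ico X (2 * X), E m * ((b * (D (m + 1) - D m) : ℝ) * Complex.I)
        = (E (2 * X) - E X) - ∑ m ∈ Ico X (2 * X),
          E m * (Complex.exp ((b * (D (m + 1) - D m) : ℝ) * Complex.I) - 1
            - (b * (D (m + 1) - D m) : ℝ) * Complex.I) := by
      rw [← tele E X, ← sum_sub_distrib]
      refine sum_congr rfl fun m _ => ?_
      have : E (m + 1) = E m * Complex.exp ((b * (D (m + 1) - D m) : ℝ) * Complex.I) := by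
        simp only [hE]
        rw [← Complex.exp_add]
        congr 1
        push_cast; ring
      rw [this]; ring
    rw [e1]
    have e2 : ‖∑ m ∈ Ico X (2 * X),
          E m * (Complex.exp ((b * (D (m + 1) - D m) : ℝ) * Complex.I) - 1
            - (b * (D (m + 1) - D m) : ℝ) * Complex.I)‖
        ≤ ∑ m ∈ Ico X (2 * X), (|b| * γ * w c X) ^ 2 := by
      refine (norm_sum_le _ _).trans (sum_le_sum fun m hm => ?_)
      have hm1 := hmX m hm
      obtain ⟨l1, l2⟩ := hΔ m (by omega)
      have l0 : 0 ≤ D (m + 1) - D m := le_trans (mul_nonneg hγ0.le (w_nonneg _ _)) l1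
      have l3 : ‖((b * (D (m + 1) - D m) : ℝ) : ℂ) * Complex.I‖ ≤ |b| * γ * w c X := by
        rw [norm_mul, Complex.norm_I, mul_one, Complex.norm_real, norm_mul, Real.norm_eq_abs,
          Real.norm_of_nonneg l0, mul_assoc]
        refine mul_le_mul_of_nonneg_left (l2.trans ?_) hb0.le
        exact mul_le_mul_of_nonneg_left (w_anti hc hX1 hm1) hγ0.le
      rw [norm_mul, hEn, one_mul]
      refine (Complex.norm_exp_sub_one_sub_id_le (l3.trans h4)).trans ?_
      exact pow_le_pow_left₀ (norm_nonneg _) l3 2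
    have e3 : ∑ m ∈ Ico X (2 * X), (|b| * γ * w c X) ^ 2
        = (|b| * γ) ^ 2 * (X : ℝ) ^ (2 * c - 3) := by
      have : (X : ℝ) ^ (2 * c - 3) = X * (w c X) ^ 2 := by
        unfold w
        rw [sq, ← Real.rpow_add hX0, show 2 * c - 3 = 1 + (c - 2 + (c - 2)) by ring,
          Real.rpow_add hX0, Real.rpow_one]
      rw [this]
      simp only [sum_const, Nat.card_Ico, nsmul_eq_mul, two_mul, Nat.add_sub_cancel]
      ring
    rw [e3] at e2
    refine (norm_sub_le _ _).trans ?_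
    have := norm_sub_le (E (2 * X)) (E X)
    rw [hEn, hEn] at this
    linarith
  have s2 : ‖∑ m ∈ Ico X (2 * X), E m * ((γ * w c m - (D (m + 1) - D m) : ℝ) : ℂ)‖
      ≤ γ * ((a + 1) * w c X) := by
    have := tele_w hc hX1 (a + 1)
    push_cast at this
    refine le_trans ?_ (mul_le_mul_of_nonneg_left this hγ0.le)
    rw [mul_sum]
    refine (norm_sum_le _ _).trans (sum_le_sum fun m hm => ?_)
    have hm1 := hmX m hm
    obtain ⟨l1, l2⟩ := hΔ m (by omega)
    rw [norm_mul, hEn, one_mul, Complex.norm_real, Real.norm_of_nonneg (by linarith)]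
    linarith
  have e4 : ((b * γ : ℝ) : ℂ) * Complex.I * G c E X
      = ∑ m ∈ Ico X (2 * X), E m * ((b * (D (m + 1) - D m) : ℝ) * Complex.I)
        + ((b : ℝ) : ℂ) * Complex.I *
          ∑ m ∈ Ico X (2 * X), E m * ((γ * w c m - (D (m + 1) - D m) : ℝ) : ℂ) := by
    unfold G
    rw [mul_sum, mul_sum, ← sum_add_distrib]
    refine sum_congr rfl fun m _ => ?_
    push_cast; ring
  have e5 : |b| * γ * ‖G c E X‖ ≤ (2 + (|b| * γ) ^ 2 * (X : ℝ) ^ (2 * c - 3))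
      + |b| * (γ * ((a + 1) * w c X)) := by
    have l1 : ‖((b * γ : ℝ) : ℂ) * Complex.I * G c E X‖ = |b| * γ * ‖G c E X‖ := by
      rw [norm_mul, norm_mul, Complex.norm_I, mul_one, Complex.norm_real, norm_mul,
        Real.norm_eq_abs, Real.norm_of_nonneg hγ0.le]
    rw [← l1, e4]
    refine (norm_add_le _ _).trans (add_le_add s1 ?_)
    rw [norm_mul, norm_mul, Complex.norm_I, mul_one, Complex.norm_real, Real.norm_eq_abs]
    exact mul_le_mul_of_nonneg_left s2 hb0.le
  have e6 : |b| * γ * ‖G c E X‖ ≤ |b| * γ * (ε * (X : ℝ) ^ (c - 1)) := by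
    linarith
  exact le_of_mul_le_mul_left e6 hbg

lemma z_neg {c b : ℝ} (hc1 : 1 < c) (hc : c < 2) (hb : b ≠ 0) : Neg c (z c b) :=
  vdc hc (fun m => (norm_z c b m).le) (fun a ha => diff_neg hc1 hc hb a ha)

lemma sum_sq_center (K : ℕ) :
    ∑ k ∈ range K, ((k : ℝ) - ((K : ℝ) - 1) / 2) ^ 2 = (K : ℝ) * ((K : ℝ) ^ 2 - 1) / 12 := by
  have h : ∀ t : ℝ, ∑ k ∈ range K, ((k : ℝ) - t) ^ 2
      = (K : ℝ) * (K - 1) * (2 * K - 1) / 6 - t * K * (K - 1) + K * t ^ 2 := by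
    intro t
    induction K with
    | zero => simp
    | succ n ih => rw [sum_range_succ, ih]; push_cast; ring
  rw [h]; ring

lemma kernel_lower (K : ℕ) (hK : 1 ≤ K) (θ : ℝ) (hθ : |θ| ≤ Real.pi / K) :
    (K : ℝ) / 2 ≤ ‖∑ k ∈ range K, Complex.exp ((k * θ : ℝ) * Complex.I)‖ := by
  have hK0 : (0 : ℝ) < K := by exact_mod_cast hK
  set t : ℝ := ((K : ℝ) - 1) / 2 with ht
  have h1 : ‖∑ k ∈ range K, Complex.exp ((k * θ : ℝ) * Complex.I)‖
      = ‖Complex.exp ((-t * θ : ℝ) * Complex.I) *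
          ∑ k ∈ range K, Complex.exp ((k * θ : ℝ) * Complex.I)‖ := by
    rw [norm_mul, Complex.norm_exp_ofReal_mul_I, one_mul]
  rw [h1]
  refine le_trans ?_ (Complex.re_le_norm _)
  rw [mul_sum, Complex.re_sum]
  have h2 : ∀ k ∈ range K, 1 - (((k : ℝ) - t) * θ) ^ 2 / 2 ≤
      (Complex.exp ((-t * θ : ℝ) * Complex.I) * Complex.exp ((k * θ : ℝ) * Complex.I)).re := by
    intro k _
    rw [← Complex.exp_add]
    have : ((-t * θ : ℝ) : ℂ) * Complex.I + ((k * θ : ℝ) : ℂ) * Complex.I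
        = ((((k : ℝ) - t) * θ : ℝ) : ℂ) * Complex.I := by push_cast; ring
    rw [this, Complex.exp_ofReal_mul_I_re]
    exact Real.one_sub_sq_div_two_le_cos
  refine le_trans ?_ (sum_le_sum h2)
  have h3 : ∑ k ∈ range K, (1 - (((k : ℝ) - t) * θ) ^ 2 / 2)
      = K - θ ^ 2 / 2 * ((K : ℝ) * ((K : ℝ) ^ 2 - 1) / 12) := by
    rw [← sum_sq_center, sum_sub_distrib, mul_sum]
    simp only [sum_const, card_range, nsmul_eq_mul, mul_one]
    congr 1
    exact sum_congr rfl fun k _ => by ring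
  rw [h3]
  have h4 : θ ^ 2 * K ^ 2 ≤ 10 := by
    rw [le_div_iff₀ hK0] at hθ
    have h5 : (|θ| * K) ^ 2 ≤ Real.pi ^ 2 := pow_le_pow_left₀ (by positivity) hθ 2
    rw [mul_pow, sq_abs] at h5
    have := Real.pi_lt_d2
    have := Real.pi_pos
    nlinarith
  nlinarith [mul_nonneg hK0.le (sq_nonneg θ)]

lemma small_d {c : ℝ} (hc1 : 1 < c) (hc : c < 2) (K : ℕ) (hK : 1 ≤ K) {ε : ℝ} (hε : 0 < ε) :
    ∀ᶠ X : ℕ in atTop,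
      ∑ m ∈ (Ico X (2 * X)).filter (fun m : ℕ => K ∣ ⌊(m : ℝ) ^ c⌋₊), w c m
        ≤ 4 / K * W c X + ε * (X : ℝ) ^ (c - 1) := by
  have hK0 : (0 : ℝ) < K := by exact_mod_cast hK
  set y : ℕ → ℕ → ℂ := fun k m =>
    Complex.exp ((k * (2 * Real.pi / K * ((m : ℝ) ^ c - 1 / 2)) : ℝ) * Complex.I) with hy
  have hg := gram (c := c) (z := y) (fun k m => (Complex.norm_exp_ofReal_mul_I _).le) K (by
    intro k _ l _ hkl
    have hkl' : ((k : ℝ) - l) ≠ 0 := sub_ne_zero.2 (by exact_mod_cast hkl)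
    have hb : ((k : ℝ) - l) * (2 * Real.pi / K) ≠ 0 :=
      mul_ne_zero hkl' (by have := Real.pi_pos; positivity)
    intro ε hε
    filter_upwards [z_neg hc1 hc hb ε hε] with X hX
    have : G c (fun m => y k m * (starRingEnd ℂ) (y l m)) X
        = Complex.exp (((-((k : ℝ) - l) * (2 * Real.pi / K) / 2 : ℝ) : ℂ) * Complex.I)
          * G c (z c (((k : ℝ) - l) * (2 * Real.pi / K))) X := by
      unfold G
      rw [mul_sum]
      refine sum_congr rfl fun m _ => ?_
      rw [mul_left_comm (Complex.exp _)]
      congr 1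
      simp only [hy, z]
      rw [← Complex.exp_conj, ← Complex.exp_add, ← Complex.exp_add]
      congr 1
      simp only [map_mul, Complex.conj_ofReal, Complex.conj_I]
      push_cast; ring
    rw [this, norm_mul, Complex.norm_exp_ofReal_mul_I, one_mul]
    exact hX) (ε := ε * (K ^ 2 / 4)) (by positivity)
  filter_upwards [hg] with X hX
  have hp : ∀ m : ℕ, K ∣ ⌊(m : ℝ) ^ c⌋₊ → (K : ℝ) ^ 2 / 4 ≤ ‖∑ k ∈ range K, y k m‖ ^ 2 := by
    intro m hm
    obtain ⟨n, hn⟩ := hm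
    have hx0 : (0 : ℝ) ≤ (m : ℝ) ^ c := by positivity
    have f1 := Nat.floor_le hx0
    have f2 := Nat.lt_floor_add_one ((m : ℝ) ^ c)
    rw [hn] at f1 f2
    push_cast at f1 f2
    set r : ℝ := (m : ℝ) ^ c - K * n with hr
    have hk := kernel_lower K hK (2 * Real.pi / K * (r - 1 / 2)) (by
      rw [abs_mul, abs_of_pos (by have := Real.pi_pos; positivity)]
      have : |r - 1 / 2| ≤ 1 / 2 := by rw [abs_le]; constructor <;> linarith
      calc _ ≤ 2 * Real.pi / K * (1 / 2) := by gcongr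
        _ = _ := by ring)
    have he : ∑ k ∈ range K, y k m
        = ∑ k ∈ range K, Complex.exp ((k * (2 * Real.pi / K * (r - 1 / 2)) : ℝ) * Complex.I) := by
      refine sum_congr rfl fun k _ => ?_
      simp only [hy]
      have hKc : (K : ℂ) ≠ 0 := by exact_mod_cast hK0.ne'
      have : ((k * (2 * Real.pi / K * ((m : ℝ) ^ c - 1 / 2)) : ℝ) : ℂ) * Complex.I
          = ((k * (2 * Real.pi / K * (r - 1 / 2)) : ℝ) : ℂ) * Complex.I
            + ((k * n : ℕ) : ℂ) * (2 * Real.pi * Complex.I) := by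
        have h1 : (m : ℝ) ^ c = r + K * n := by rw [hr]; ring
        rw [h1]
        push_cast
        field_simp
        ring
      rw [this, Complex.exp_add, Complex.exp_nat_mul_two_pi_mul_I, mul_one]
    rw [← he] at hk
    have := pow_le_pow_left₀ (by positivity) hk 2
    calc _ = ((K : ℝ) / 2) ^ 2 := by ring
      _ ≤ _ := this
  have h1 : (K : ℝ) ^ 2 / 4 * ∑ m ∈ (Ico X (2 * X)).filter (fun m : ℕ => K ∣ ⌊(m : ℝ) ^ c⌋₊), w c m
      ≤ K * W c X + ε * (K ^ 2 / 4) * (X : ℝ) ^ (c - 1) := by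
    refine le_trans ?_ hX
    rw [mul_sum]
    refine le_trans (sum_le_sum fun m hm => ?_)
      (sum_le_sum_of_subset_of_nonneg (filter_subset (fun m : ℕ => K ∣ ⌊(m : ℝ) ^ c⌋₊) _)
        (fun m _ _ => mul_nonneg (w_nonneg c m) (by positivity)))
    rw [mul_comm]
    exact mul_le_mul_of_nonneg_left (hp m (mem_filter.1 hm).2) (w_nonneg c m)
  have h2 : (K : ℝ) ^ 2 / 4 * (4 / K * W c X + ε * (X : ℝ) ^ (c - 1))
      = K * W c X + ε * (K ^ 2 / 4) * (X : ℝ) ^ (c - 1) := by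
    field_simp
  rw [← h2] at h1
  exact le_of_mul_le_mul_left h1 (by positivity)


lemma rpow_step {c : ℝ} (hc1 : 1 < c) {m n : ℕ} (hm : 1 ≤ m) (h : m < n) :
    (m : ℝ) ^ c + 1 ≤ (n : ℝ) ^ c := by
  have hm1 : (1 : ℝ) ≤ m := by exact_mod_cast hm
  have hn : (m : ℝ) + 1 ≤ n := by exact_mod_cast h
  obtain ⟨ξ, hξ, he⟩ := mvt_rpow c m n (by linarith) (by linarith)
  have h1 : 1 ≤ ξ ^ (c - 1) := Real.one_le_rpow (by linarith [hξ.1]) (by linarith)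
  have h2 : 1 ≤ c * ξ ^ (c - 1) := by nlinarith
  nlinarith

lemma pair_count {c : ℝ} (hc1 : 1 < c) (hc : c < 2) {X d a : ℕ} (hX : 1 ≤ X) (hd : 1 ≤ d)
    (ha : 1 ≤ a) :
    (((Ico X (2 * X)).filter (fun m : ℕ => d ^ 3 ∣ ⌊(m : ℝ) ^ c⌋₊ ∧ m + a < 2 * X ∧
      d ^ 3 ∣ ⌊((m + a : ℕ) : ℝ) ^ c⌋₊)).card : ℝ)
      ≤ 8 * a * (X : ℝ) ^ (c - 1) / d ^ 3 + 32 * X / ((c - 1) * d ^ 3) := by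
  set S := (Ico X (2 * X)).filter (fun m : ℕ => d ^ 3 ∣ ⌊(m : ℝ) ^ c⌋₊ ∧ m + a < 2 * X ∧
      d ^ 3 ∣ ⌊((m + a : ℕ) : ℝ) ^ c⌋₊) with hS
  have hX0 : (0 : ℝ) < X := by exact_mod_cast hX
  have hd0 : (0 : ℝ) < d := by exact_mod_cast hd
  have ha0 : (0 : ℝ) < a := by exact_mod_cast ha
  have hc0 : 0 < c - 1 := by linarith
  set T : ℝ := 8 * a * (X : ℝ) ^ (c - 1) / d ^ 3 with hT
  set B : ℝ := 4 * (X : ℝ) ^ (2 - c) / (a * (c - 1)) with hB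
  have hT0 : 0 ≤ T := by positivity
  have hB0 : 0 ≤ B := by positivity
  set F : ℕ → ℕ := fun m => (⌊((m + a : ℕ) : ℝ) ^ c⌋₊ - ⌊(m : ℝ) ^ c⌋₊) / d ^ 3 with hF
  -- basic property
  have key : ∀ m ∈ S, 1 ≤ F m ∧
      |((F m : ℝ) * d ^ 3) - (((m : ℝ) + a) ^ c - (m : ℝ) ^ c)| < 1 := by
    intro m hm
    obtain ⟨h1, h2, h3, h4⟩ := mem_filter.1 hm
    have hm1 : 1 ≤ m := hX.trans (mem_Ico.1 h1).1
    have hst := rpow_step hc1 hm1 (show m < m + a by omega)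
    have f1 := Nat.floor_le (show (0 : ℝ) ≤ (m : ℝ) ^ c by positivity)
    have f2 := Nat.lt_floor_add_one ((m : ℝ) ^ c)
    have f3 := Nat.floor_le (show (0 : ℝ) ≤ ((m + a : ℕ) : ℝ) ^ c by positivity)
    have f4 := Nat.lt_floor_add_one (((m + a : ℕ) : ℝ) ^ c)
    set p := ⌊(m : ℝ) ^ c⌋₊
    set q := ⌊((m + a : ℕ) : ℝ) ^ c⌋₊
    have hpq : p < q := by
      have : (p : ℝ) < q := by linarith
      exact_mod_cast this
    have hdv : d ^ 3 ∣ q - p := Nat.dvd_sub h4 h2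
    have he : F m * d ^ 3 = q - p := Nat.div_mul_cancel hdv
    constructor
    · by_contra hcon
      have : F m = 0 := by omega
      rw [this] at he
      omega
    · have he' : (F m : ℝ) * d ^ 3 = (q : ℝ) - p := by
        rw [← Nat.cast_sub hpq.le, ← he]; push_cast; ring
      rw [he', abs_lt]
      push_cast at f3 f4
      constructor <;> linarith
  have hmaps : ∀ m ∈ S, F m ∈ Icc 1 ⌊T⌋₊ := by
    intro m hm
    obtain ⟨k1, k2⟩ := key m hm
    obtain ⟨h1, h2, h3, h4⟩ := mem_filter.1 hm
    have hm1 : 1 ≤ m := hX.trans (mem_Ico.1 h1).1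
    have hm0 : (0 : ℝ) < m := by exact_mod_cast hm1
    refine mem_Icc.2 ⟨k1, Nat.le_floor ?_⟩
    rw [hT, le_div_iff₀ (by positivity)]
    have hst := rpow_step hc1 hm1 (show m < m + a by omega)
    push_cast at hst
    have k3 := (abs_lt.1 k2).2
    obtain ⟨ξ, hξ, he⟩ := mvt_rpow c m (m + a) hm0 (by linarith)
    have hξX : ξ ≤ 2 * X := by
      have : ((m : ℝ) + a) < 2 * X := by exact_mod_cast h3
      linarith [hξ.2]
    have hξ1 : ξ ^ (c - 1) ≤ 2 * (X : ℝ) ^ (c - 1) := by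
      refine (Real.rpow_le_rpow (by linarith [hξ.1]) hξX hc0.le).trans ?_
      rw [Real.mul_rpow (by norm_num) hX0.le]
      refine mul_le_mul_of_nonneg_right ?_ (by positivity)
      calc (2 : ℝ) ^ (c - 1) ≤ 2 ^ (1 : ℝ) :=
            Real.rpow_le_rpow_of_exponent_le (by norm_num) (by linarith)
        _ = 2 := Real.rpow_one 2
    have h6 : c * ξ ^ (c - 1) ≤ 2 * (2 * (X : ℝ) ^ (c - 1)) := by
      have : 0 ≤ ξ ^ (c - 1) := Real.rpow_nonneg (by linarith [hξ.1]) _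
      nlinarith
    have h7 : ((m : ℝ) + a) ^ c - (m : ℝ) ^ c ≤ 4 * a * (X : ℝ) ^ (c - 1) := by
      rw [he]
      nlinarith
    linarith
  have hfib : ∀ k ∈ Icc 1 ⌊T⌋₊, (S.filter (fun m => F m = k)).card ≤ ⌊B⌋₊ + 1 := by
    intro k _
    rcases (S.filter (fun m => F m = k)).eq_empty_or_nonempty with h | h
    · rw [h]; simp
    · set μ := (S.filter (fun m => F m = k)).min' h with hμ
      have hμm := (S.filter (fun m => F m = k)).min'_mem h
      rw [← hμ] at hμm
      obtain ⟨hμS, hμk⟩ := mem_filter.1 hμm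
      have hsub : S.filter (fun m => F m = k) ⊆ Icc μ (μ + ⌊B⌋₊) := by
        intro m hm
        have hle : μ ≤ m := min'_le _ _ hm
        obtain ⟨hmS, hmk⟩ := mem_filter.1 hm
        refine mem_Icc.2 ⟨hle, ?_⟩
        rcases hle.eq_or_lt with h0 | hlt
        · omega
        · have ht : (0 : ℝ) < (m : ℝ) - μ := sub_pos.2 (by exact_mod_cast hlt)
          have hμ1 : 1 ≤ μ := hX.trans (mem_Ico.1 (mem_filter.1 hμS).1).1
          have hμ0 : (0 : ℝ) < μ := by exact_mod_cast hμ1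
          obtain ⟨ζ, hζ, he⟩ := mvt_second c μ a (m - μ) hμ0 ha0 ht
          have k1 := abs_lt.1 (key m hmS).2
          have k2 := abs_lt.1 (key μ hμS).2
          rw [hmk] at k1
          rw [hμk] at k2
          have e1 : (μ : ℝ) + (m - μ) = m := by ring
          rw [e1] at he
          have hζ2 : ζ ≤ 2 * X := by
            have h3 : ((m : ℝ) + a) < 2 * X := by exact_mod_cast (mem_filter.1 hmS).2.2.1
            have := hζ.2
            linarith
          have hζ0 : 0 < ζ := hμ0.trans hζ.1
          have hz : (X : ℝ) ^ (c - 2) / 2 ≤ ζ ^ (c - 2) := by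
            refine le_trans ?_ (Real.rpow_le_rpow_of_nonpos hζ0 hζ2 (by linarith))
            rw [Real.mul_rpow (by norm_num) hX0.le]
            have : (2 : ℝ)⁻¹ ≤ 2 ^ (c - 2) := by
              rw [← Real.rpow_neg_one]
              exact Real.rpow_le_rpow_of_exponent_le (by norm_num) (by linarith)
            have h2 : 0 ≤ (X : ℝ) ^ (c - 2) := by positivity
            nlinarith
          have e2 : ((m : ℝ) - μ) * (a * (c * (c - 1))) * ζ ^ (c - 2) < 2 := by
            rw [← he]; linarith
          have e3 : ((m : ℝ) - μ) * (a * (c - 1)) * ((X : ℝ) ^ (c - 2) / 2) ≤ 2 := by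
            refine le_trans ?_ e2.le
            have : a * (c - 1) ≤ a * (c * (c - 1)) := by nlinarith [mul_pos ha0 hc0]
            gcongr
          have e4 : (X : ℝ) ^ (2 - c) * (X : ℝ) ^ (c - 2) = 1 := by
            rw [← Real.rpow_add hX0]; simp
          have e5 : (m : ℝ) - μ ≤ B := by
            rw [hB, le_div_iff₀ (by positivity)]
            have hp : 0 < (X : ℝ) ^ (2 - c) := by positivity
            have := mul_le_mul_of_nonneg_left e3 hp.le
            calc ((m : ℝ) - μ) * (a * (c - 1))
                = 2 * ((X : ℝ) ^ (2 - c) * (((m : ℝ) - μ) * (a * (c - 1)) * ((X : ℝ) ^ (c - 2) / 2)))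
                  := by
                    linear_combination (-((m : ℝ) - μ) * (a * (c - 1))) * e4
              _ ≤ 2 * ((X : ℝ) ^ (2 - c) * 2) := by linarith
              _ = _ := by ring
          have e6 : m - μ ≤ ⌊B⌋₊ := Nat.le_floor (by rw [Nat.cast_sub hle]; exact e5)
          omega
      refine (card_le_card hsub).trans ?_
      rw [Nat.card_Icc]; omega
  have hcard := card_le_mul_card_image_of_maps_to hmaps (⌊B⌋₊ + 1) hfib
  rw [Nat.card_Icc, Nat.add_sub_cancel] at hcard
  have h1 : (S.card : ℝ) ≤ (⌊B⌋₊ + 1) * ⌊T⌋₊ := by exact_mod_cast hcard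
  have h2 : ((⌊B⌋₊ : ℝ) + 1) * ⌊T⌋₊ ≤ (B + 1) * T := by
    have := Nat.floor_le hB0
    have := Nat.floor_le hT0
    gcongr
  have h3 : B * T = 32 * X / ((c - 1) * d ^ 3) := by
    have e4 : (X : ℝ) ^ (2 - c) * (X : ℝ) ^ (c - 1) = X := by
      rw [← Real.rpow_add hX0]; ring_nf; simp
    rw [hB, hT]
    field_simp
    linear_combination 32 * e4
  linarith

lemma count_le {c : ℝ} (hc1 : 1 < c) (hc : c < 2) {X d A : ℕ} (hX : 1 ≤ X) (hd : 1 ≤ d)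
    (hA : 1 ≤ A) :
    (((Ico X (2 * X)).filter (fun m : ℕ => d ^ 3 ∣ ⌊(m : ℝ) ^ c⌋₊)).card : ℝ)
      ≤ X / A + 1 + A * (8 * A * (X : ℝ) ^ (c - 1) / d ^ 3 + 32 * X / ((c - 1) * d ^ 3)) := by
  set S := (Ico X (2 * X)).filter (fun m : ℕ => d ^ 3 ∣ ⌊(m : ℝ) ^ c⌋₊) with hS
  set P : ℕ → Finset ℕ := fun a => (Ico X (2 * X)).filter (fun m : ℕ => d ^ 3 ∣ ⌊(m : ℝ) ^ c⌋₊ ∧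
    m + a < 2 * X ∧ d ^ 3 ∣ ⌊((m + a : ℕ) : ℝ) ^ c⌋₊) with hP
  set R := S.filter (fun m => ∀ a ∈ Ico 1 A, m + a ∉ S) with hR
  have hc0 : 0 < c - 1 := by linarith
  have hd0 : (0 : ℝ) < d := by exact_mod_cast hd
  have hsub : S ⊆ R ∪ (Ico 1 A).biUnion P := by
    intro m hm
    by_cases h : ∀ a ∈ Ico 1 A, m + a ∉ S
    · exact mem_union_left _ (mem_filter.2 ⟨hm, h⟩)
    · push Not at h
      obtain ⟨a, ha, hma⟩ := h
      refine mem_union_right _ (mem_biUnion.2 ⟨a, ha, mem_filter.2 ⟨(mem_filter.1 hm).1,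
        (mem_filter.1 hm).2, (mem_Ico.1 (mem_filter.1 hma).1).2, (mem_filter.1 hma).2⟩⟩)
  have hRc : R.card ≤ X / A + 1 := by
    have : R.card ≤ (range (X / A + 1)).card := by
      refine card_le_card_of_injOn (fun m => (m - X) / A) ?_ ?_
      · intro m hm
        have h1 := mem_Ico.1 (mem_filter.1 (mem_filter.1 hm).1).1
        simp only [coe_range, Set.mem_Iio]
        exact Nat.lt_succ_of_le (Nat.div_le_div_right (by omega))
      · have aux : ∀ m ∈ R, ∀ n ∈ R, (m - X) / A = (n - X) / A → ¬ m < n := by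
          intro m hm n hn h hlt
          have h1 := mem_Ico.1 (mem_filter.1 (mem_filter.1 hm).1).1
          have h2 := (mem_filter.1 hm).2 (n - m) (by
            refine mem_Ico.2 ⟨by omega, ?_⟩
            have e1 := Nat.div_add_mod (m - X) A
            have e2 := Nat.div_add_mod (n - X) A
            have e3 := Nat.mod_lt (n - X) (show 0 < A by omega)
            rw [h] at e1
            omega)
          rw [show m + (n - m) = n by omega] at h2
          exact h2 (mem_filter.1 hn).1
        intro m hm n hn h
        have a1 := aux m hm n hn h
        have a2 := aux n hn m hm h.symm
        omega
    simpa using this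
  have h1 : S.card ≤ X / A + 1 + ∑ a ∈ Ico 1 A, (P a).card :=
    (card_le_card hsub).trans ((card_union_le _ _).trans (add_le_add hRc card_biUnion_le))
  have h2 : (S.card : ℝ) ≤ ((X / A : ℕ) : ℝ) + 1 + ∑ a ∈ Ico 1 A, ((P a).card : ℝ) := by
    exact_mod_cast h1
  have h3 : ((X / A : ℕ) : ℝ) ≤ X / A := Nat.cast_div_le
  have h4 : ∑ a ∈ Ico 1 A, ((P a).card : ℝ)
      ≤ ∑ a ∈ Ico 1 A, (8 * A * (X : ℝ) ^ (c - 1) / d ^ 3 + 32 * X / ((c - 1) * d ^ 3)) := by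
    refine sum_le_sum fun a ha => ?_
    have ha' := mem_Ico.1 ha
    refine (pair_count hc1 hc hX hd ha'.1).trans ?_
    have : (a : ℝ) ≤ A := by exact_mod_cast ha'.2.le
    gcongr
  rw [sum_const, Nat.card_Ico, nsmul_eq_mul] at h4
  have h5 : ((A - 1 : ℕ) : ℝ) ≤ A := by exact_mod_cast Nat.sub_le _ _
  have h6 : ((A - 1 : ℕ) : ℝ) * (8 * A * (X : ℝ) ^ (c - 1) / d ^ 3 + 32 * X / ((c - 1) * d ^ 3))
      ≤ A * (8 * A * (X : ℝ) ^ (c - 1) / d ^ 3 + 32 * X / ((c - 1) * d ^ 3)) := by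
    gcongr
  linarith

/-- bound for one large `d` -/
lemma large_d {c : ℝ} (hc1 : 1 < c) (hc : c < 11 / 6) {X d : ℕ} (hX : 1 ≤ X) (hd : 1 ≤ d)
    (hdX : (d : ℝ) ^ 3 ≤ (2 * X) ^ c) :
    (((Ico X (2 * X)).filter (fun m : ℕ => d ^ 3 ∣ ⌊(m : ℝ) ^ c⌋₊)).card : ℝ)
      ≤ (129 + 64 / (c - 1)) * X * (d : ℝ) ^ (-(21 / 20) : ℝ) + 1 := by
  have hX0 : (0 : ℝ) < X := by exact_mod_cast hX
  have hX1 : (1 : ℝ) ≤ X := by exact_mod_cast hX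
  have hd0 : (0 : ℝ) < d := by exact_mod_cast hd
  have hd1 : (1 : ℝ) ≤ d := by exact_mod_cast hd
  have hc0 : 0 < c - 1 := by linarith
  set u : ℝ := (d : ℝ) ^ (21 / 20 : ℝ) with hu
  have hu1 : 1 ≤ u := Real.one_le_rpow hd1 (by norm_num)
  set A : ℕ := ⌈u⌉₊ with hA
  have hA1 : u ≤ A := Nat.le_ceil _
  have hA2 : (A : ℝ) ≤ 2 * u := by
    have := (Nat.ceil_lt_add_one (show 0 ≤ u by linarith)).le
    linarith
  have hA3 : 1 ≤ A := by
    have : (1 : ℝ) ≤ A := hu1.trans hA1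
    exact_mod_cast this
  have hui : (d : ℝ) ^ (-(21 / 20) : ℝ) = u⁻¹ := Real.rpow_neg hd0.le _
  rw [hui]
  have hu0 : 0 < u := by linarith
  -- u^2 ≤ d^3
  have hu2 : u * u ≤ (d : ℝ) ^ 3 := by
    rw [hu, ← Real.rpow_add hd0, ← Real.rpow_natCast]
    exact Real.rpow_le_rpow_of_exponent_le hd1 (by norm_num)
  -- u^3 X^(c-1) ≤ 4 X d^3
  have hu3 : u ^ 3 * (X : ℝ) ^ (c - 1) ≤ 4 * X * d ^ 3 := by
    have e1 : u ^ 3 = (d : ℝ) ^ 3 * ((d : ℝ) ^ 3) ^ (1 / 20 : ℝ) := by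
      rw [hu, ← Real.rpow_natCast, ← Real.rpow_mul hd0.le, ← Real.rpow_natCast,
        ← Real.rpow_mul hd0.le, ← Real.rpow_add hd0]
      norm_num
    have e2 : ((d : ℝ) ^ 3) ^ (1 / 20 : ℝ) ≤ 4 * (X : ℝ) ^ (2 - c) := by
      refine (Real.rpow_le_rpow (by positivity) hdX (by norm_num)).trans ?_
      rw [← Real.rpow_mul (by positivity), Real.mul_rpow (by norm_num) hX0.le]
      refine mul_le_mul ?_ ?_ (by positivity) (by norm_num)
      · calc (2 : ℝ) ^ (c * (1 / 20)) ≤ 2 ^ (2 : ℝ) :=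
              Real.rpow_le_rpow_of_exponent_le (by norm_num) (by linarith)
          _ = 4 := by norm_num
      · exact Real.rpow_le_rpow_of_exponent_le hX1 (by linarith)
    have e3 : (X : ℝ) ^ (2 - c) * (X : ℝ) ^ (c - 1) = X := by
      rw [← Real.rpow_add hX0]; ring_nf; simp
    rw [e1]
    calc (d : ℝ) ^ 3 * ((d : ℝ) ^ 3) ^ (1 / 20 : ℝ) * (X : ℝ) ^ (c - 1)
        ≤ (d : ℝ) ^ 3 * (4 * (X : ℝ) ^ (2 - c)) * (X : ℝ) ^ (c - 1) := by gcongr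
      _ = (d : ℝ) ^ 3 * 4 * ((X : ℝ) ^ (2 - c) * (X : ℝ) ^ (c - 1)) := by ring
      _ = _ := by rw [e3]; ring
  refine (count_le hc1 (by linarith) hX hd hA3).trans ?_
  have t1 : (X : ℝ) / A ≤ X * u⁻¹ := by
    rw [div_eq_mul_inv]; gcongr
  have t2 : (A : ℝ) * (8 * A * (X : ℝ) ^ (c - 1) / d ^ 3) ≤ 128 * X * u⁻¹ := by
    calc (A : ℝ) * (8 * A * (X : ℝ) ^ (c - 1) / d ^ 3)
        ≤ (2 * u) * (8 * (2 * u) * (X : ℝ) ^ (c - 1) / d ^ 3) := by gcongr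
      _ = 32 * (u ^ 3 * (X : ℝ) ^ (c - 1)) / d ^ 3 * u⁻¹ := by field_simp; ring
      _ ≤ 32 * (4 * X * d ^ 3) / d ^ 3 * u⁻¹ := by gcongr
      _ = _ := by field_simp; ring
  have t3 : (A : ℝ) * (32 * X / ((c - 1) * d ^ 3)) ≤ 64 / (c - 1) * X * u⁻¹ := by
    calc (A : ℝ) * (32 * X / ((c - 1) * d ^ 3)) ≤ (2 * u) * (32 * X / ((c - 1) * (u * u))) := by
          gcongr
      _ = _ := by field_simp; ring
  rw [mul_add]
  linarith

lemma sum_cubes (D : ℕ) : ∑ d ∈ Ico 2 D, (1 : ℝ) / (d : ℝ) ^ 3 ≤ 21 / 100 := by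
  have h : ∀ n : ℕ, ∑ d ∈ Ico 2 (n + 4), (1 : ℝ) / (d : ℝ) ^ 3
      ≤ 1 / 8 + 1 / 27 + 1 / 24 - 1 / (2 * ((n : ℝ) + 3) * (n + 4)) := by
    intro n
    induction n with
    | zero => 
      rw [sum_Ico_succ_top (by norm_num), sum_Ico_succ_top (by norm_num)]; norm_num
    | succ n ih =>
      rw [show n + 1 + 4 = (n + 4) + 1 by ring, sum_Ico_succ_top (by omega)]
      have hn : (0 : ℝ) ≤ n := Nat.cast_nonneg n
      have : (1 : ℝ) / ((n + 4 : ℕ) : ℝ) ^ 3 ≤ 1 / (2 * ((n : ℝ) + 3) * (n + 4))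
          - 1 / (2 * ((n : ℝ) + 1 + 3) * (n + 1 + 4)) := by
        have e : 1 / (2 * ((n : ℝ) + 3) * (n + 4)) - 1 / (2 * ((n : ℝ) + 1 + 3) * (n + 1 + 4))
            = 1 / (((n : ℝ) + 3) * (n + 4) * (n + 5)) := by
          field_simp; ring
        rw [e]
        push_cast
        apply one_div_le_one_div_of_le (by positivity)
        nlinarith
      push_cast at *
      linarith
  have h1 : ∑ d ∈ Ico 2 D, (1 : ℝ) / (d : ℝ) ^ 3 ≤ ∑ d ∈ Ico 2 (D + 4), (1 : ℝ) / (d : ℝ) ^ 3 :=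
    sum_le_sum_of_subset_of_nonneg (Ico_subset_Ico le_rfl (by omega))
      (fun _ _ _ => by positivity)
  have h2 := h D
  have h3 : (0 : ℝ) ≤ 1 / (2 * ((D : ℝ) + 3) * (D + 4)) := by positivity
  norm_num at h2 h3 ⊢
  norm_num at h1
  linarith


lemma dvd_bound {c : ℝ} (hc1 : 1 < c) {X d m : ℕ} (hX : 1 ≤ X) (hm : m ∈ Ico X (2 * X))
    (h : d ^ 3 ∣ ⌊(m : ℝ) ^ c⌋₊) : (d : ℝ) ^ 3 ≤ (2 * X) ^ c := by
  have hm' := mem_Ico.1 hm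
  have hm1 : (1 : ℝ) ≤ m := by exact_mod_cast hX.trans hm'.1
  have h1 : 1 ≤ ⌊(m : ℝ) ^ c⌋₊ := Nat.le_floor (by
    simpa using Real.one_le_rpow hm1 (by linarith))
  have h2 : d ^ 3 ≤ ⌊(m : ℝ) ^ c⌋₊ := Nat.le_of_dvd h1 h
  have h3 : ((d ^ 3 : ℕ) : ℝ) ≤ (m : ℝ) ^ c :=
    (Nat.cast_le.2 h2).trans (Nat.floor_le (by positivity))
  push_cast at h3
  refine h3.trans (Real.rpow_le_rpow (by positivity) ?_ (by linarith))
  exact_mod_cast hm'.2.le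

lemma large_d' {c : ℝ} (hc1 : 1 < c) (hc : c < 11 / 6) {X d : ℕ} (hX : 1 ≤ X) (hd : 1 ≤ d) :
    (((Ico X (2 * X)).filter (fun m : ℕ => d ^ 3 ∣ ⌊(m : ℝ) ^ c⌋₊)).card : ℝ)
      ≤ (129 + 64 / (c - 1)) * X * (d : ℝ) ^ (-(21 / 20) : ℝ) + 1 := by
  rcases ((Ico X (2 * X)).filter (fun m : ℕ => d ^ 3 ∣ ⌊(m : ℝ) ^ c⌋₊)).eq_empty_or_nonempty
    with h | ⟨m, hm⟩
  · rw [h]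
    have : 0 < c - 1 := by linarith
    simp only [card_empty, Nat.cast_zero]
    positivity
  · exact large_d hc1 hc hX hd (dvd_bound hc1 hX (mem_filter.1 hm).1 (mem_filter.1 hm).2)

lemma tail_small {η : ℝ} (hη : 0 < η) :
    ∃ D : ℕ, 2 ≤ D ∧ ∀ Y : ℕ, ∑ d ∈ Ico D Y, (d : ℝ) ^ (-(21 / 20) : ℝ) ≤ η := by
  have hs : Summable (fun d : ℕ => (d : ℝ) ^ (-(21 / 20) : ℝ)) :=
    Real.summable_nat_rpow.2 (by norm_num)
  have ht := hs.hasSum.tendsto_sum_nat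
  obtain ⟨D, hD2, hD⟩ := ((eventually_ge_atTop 2).and
    (ht.eventually (lt_mem_nhds (show (∑' d : ℕ, (d : ℝ) ^ (-(21 / 20) : ℝ)) - η
      < ∑' d : ℕ, (d : ℝ) ^ (-(21 / 20) : ℝ) by linarith)))).exists
  refine ⟨D, hD2, fun Y => ?_⟩
  rcases le_total Y D with h | h
  · rw [Ico_eq_empty_of_le h]; simpa using hη.le
  · rw [sum_Ico_eq_sub _ h]
    have := hs.sum_le_tsum (range Y) (fun d _ => by positivity)
    linarith

lemma exists_cubefree {c : ℝ} (hc1 : 1 < c) (hc : c < 11 / 6) :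
    ∀ᶠ X : ℕ in atTop, ∃ m ∈ Ico X (2 * X), CubeFree ⌊(m : ℝ) ^ c⌋₊ := by
  have hc2 : c < 2 := by linarith
  have hc0 : 0 < c - 1 := by linarith
  set C0 : ℝ := 129 + 64 / (c - 1) with hC0
  have hC0p : 0 < C0 := by positivity
  obtain ⟨D, hD2, hD⟩ := tail_small (η := 1 / (100 * C0)) (by positivity)
  set ε : ℝ := 1 / (100 * (D + 1)) with hε
  have hε0 : 0 < ε := by positivity
  have hsm : ∀ᶠ X : ℕ in atTop, ∀ d ∈ Ico 2 D,
      ∑ m ∈ (Ico X (2 * X)).filter (fun m : ℕ => d ^ 3 ∣ ⌊(m : ℝ) ^ c⌋₊), w c m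
        ≤ 4 / (d ^ 3 : ℕ) * W c X + ε * (X : ℝ) ^ (c - 1) := by
    rw [Filter.eventually_all_finset]
    intro d hd
    have := (mem_Ico.1 hd).1
    exact small_d hc1 hc2 (d ^ 3) (Nat.one_le_pow _ _ (by omega)) hε0
  filter_upwards [hsm, eventually_ge_atTop 1,
    rpow_small (p := 2 / 3) (q := 1) (C := 3) (ε := 1 / 100) (by norm_num) (by norm_num)]
    with X hs hX hY
  have hX0 : (0 : ℝ) < X := by exact_mod_cast hX
  have hX1 : (1 : ℝ) ≤ X := by exact_mod_cast hX
  rw [Real.rpow_one] at hY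
  by_contra hcon
  push Not at hcon
  set Y : ℕ := ⌊(2 * (X : ℝ)) ^ (2 / 3 : ℝ)⌋₊ + 1 with hYdef
  have hYX : (Y : ℝ) ≤ X / 100 := by
    have h1 : ((⌊(2 * (X : ℝ)) ^ (2 / 3 : ℝ)⌋₊ : ℕ) : ℝ) ≤ (2 * (X : ℝ)) ^ (2 / 3 : ℝ) :=
      Nat.floor_le (by positivity)
    rw [Real.mul_rpow (by norm_num) hX0.le] at h1
    have h2 : (2 : ℝ) ^ (2 / 3 : ℝ) ≤ 2 := by
      calc (2 : ℝ) ^ (2 / 3 : ℝ) ≤ 2 ^ (1 : ℝ) :=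
            Real.rpow_le_rpow_of_exponent_le (by norm_num) (by norm_num)
        _ = 2 := Real.rpow_one 2
    have h3 : 1 ≤ (X : ℝ) ^ (2 / 3 : ℝ) := Real.one_le_rpow hX1 (by norm_num)
    rw [hYdef, Nat.cast_add, Nat.cast_one, Real.mul_rpow (by norm_num) hX0.le]
    nlinarith
  set S : ℕ → Finset ℕ := fun d =>
    (Ico X (2 * X)).filter (fun m : ℕ => d ^ 3 ∣ ⌊(m : ℝ) ^ c⌋₊) with hS
  have hcov : Ico X (2 * X) ⊆ (Ico 2 D).biUnion S ∪ (Ico D Y).biUnion S := by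
    intro m hm
    have h1 := hcon m hm
    unfold CubeFree at h1
    push Not at h1
    obtain ⟨p, hp, hpd⟩ := h1
    have hmS : m ∈ S p := mem_filter.2 ⟨hm, hpd⟩
    by_cases hpD : p < D
    · exact mem_union_left _ (mem_biUnion.2 ⟨p, mem_Ico.2 ⟨hp.two_le, hpD⟩, hmS⟩)
    · refine mem_union_right _ (mem_biUnion.2 ⟨p, mem_Ico.2 ⟨by omega, ?_⟩, hmS⟩)
      have hb := dvd_bound hc1 hX hm hpd
      refine Nat.lt_succ_of_le (Nat.le_floor ?_)
      have h2 : (p : ℝ) ^ 3 ≤ (2 * X) ^ (2 : ℝ) :=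
        hb.trans (Real.rpow_le_rpow_of_exponent_le (by linarith) hc2.le)
      have h3 := Real.rpow_le_rpow (by positivity) h2 (show (0 : ℝ) ≤ 1 / 3 by norm_num)
      rw [← Real.rpow_mul (by positivity), ← Real.rpow_natCast,
        ← Real.rpow_mul (by positivity)] at h3
      norm_num at h3
      exact h3
  have hW1 : W c X ≤ ∑ d ∈ Ico 2 D, ∑ m ∈ S d, w c m + ∑ d ∈ Ico D Y, ∑ m ∈ S d, w c m := by
    have hb : ∀ s : Finset ℕ, ∑ m ∈ s.biUnion S, w c m ≤ ∑ d ∈ s, ∑ m ∈ S d, w c m := by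
      intro s
      induction s using Finset.induction_on with
      | empty => simp
      | insert a s ha ih =>
        rw [biUnion_insert, sum_insert ha]
        have := sum_union_inter (s₁ := S a) (s₂ := s.biUnion S) (f := w c)
        have h0 : 0 ≤ ∑ m ∈ S a ∩ s.biUnion S, w c m := sum_nonneg fun m _ => w_nonneg c m
        linarith
    refine (sum_le_sum_of_subset_of_nonneg hcov (fun m _ _ => w_nonneg c m)).trans ?_
    have := sum_union_inter (s₁ := (Ico 2 D).biUnion S) (s₂ := (Ico D Y).biUnion S) (f := w c)
    have h0 : 0 ≤ ∑ m ∈ (Ico 2 D).biUnion S ∩ (Ico D Y).biUnion S, w c m :=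
      sum_nonneg fun m _ => w_nonneg c m
    linarith [hb (Ico 2 D), hb (Ico D Y)]
  have hN0 : 0 < (X : ℝ) ^ (c - 1) := by positivity
  set N := (X : ℝ) ^ (c - 1) with hN
  have hWN := le_W hc1 hc2 hX
  rw [← hN] at hWN
  have hW0 : 0 < W c X := by linarith
  have b1 : ∑ d ∈ Ico 2 D, ∑ m ∈ S d, w c m ≤ 84 / 100 * W c X + 1 / 100 * N := by
    refine (sum_le_sum hs).trans ?_
    rw [sum_add_distrib, sum_const, Nat.card_Ico, nsmul_eq_mul]
    have e1 : ∑ d ∈ Ico 2 D, 4 / ((d ^ 3 : ℕ) : ℝ) * W c X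
        = 4 * (∑ d ∈ Ico 2 D, (1 : ℝ) / (d : ℝ) ^ 3) * W c X := by
      rw [mul_sum, sum_mul]
      refine sum_congr rfl fun d _ => ?_
      push_cast; ring
    rw [e1]
    have e2 := sum_cubes D
    have e3 : ((D - 2 : ℕ) : ℝ) * ε ≤ 1 / 100 := by
      have : ((D - 2 : ℕ) : ℝ) ≤ D + 1 := by
        have : ((D - 2 : ℕ) : ℝ) ≤ D := by exact_mod_cast Nat.sub_le _ _
        linarith
      calc _ ≤ ((D : ℝ) + 1) * ε := by gcongr
        _ = 1 / 100 := by rw [hε]; field_simp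
    have e4 : 4 * (∑ d ∈ Ico 2 D, (1 : ℝ) / (d : ℝ) ^ 3) * W c X ≤ 84 / 100 * W c X :=
      mul_le_mul_of_nonneg_right (by linarith) hW0.le
    have e5 : ((D - 2 : ℕ) : ℝ) * (ε * N) ≤ 1 / 100 * N := by
      rw [← mul_assoc]; exact mul_le_mul_of_nonneg_right e3 hN0.le
    linarith
  have b2 : ∑ d ∈ Ico D Y, ∑ m ∈ S d, w c m ≤ 2 / 100 * N := by
    have e1 : ∀ d ∈ Ico D Y, ∑ m ∈ S d, w c m
        ≤ (C0 * X * (d : ℝ) ^ (-(21 / 20) : ℝ) + 1) * w c X := by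
      intro d hd
      have hd1 := (mem_Ico.1 hd).1
      calc ∑ m ∈ S d, w c m ≤ ∑ m ∈ S d, w c X :=
            sum_le_sum fun m hm => w_anti hc2 hX (mem_Ico.1 (mem_filter.1 hm).1).1
        _ = (S d).card * w c X := by rw [sum_const, nsmul_eq_mul]
        _ ≤ _ := mul_le_mul_of_nonneg_right (large_d' hc1 hc hX (by omega)) (w_nonneg c X)
    refine (sum_le_sum e1).trans ?_
    rw [← sum_mul, sum_add_distrib, ← mul_sum, sum_const, Nat.card_Ico, nsmul_eq_mul, mul_one]
    have e2 : C0 * X * ∑ d ∈ Ico D Y, (d : ℝ) ^ (-(21 / 20) : ℝ) ≤ X / 100 := by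
      calc _ ≤ C0 * X * (1 / (100 * C0)) :=
            mul_le_mul_of_nonneg_left (hD Y) (by positivity)
        _ = _ := by field_simp
    have e3 : ((Y - D : ℕ) : ℝ) ≤ Y := by exact_mod_cast Nat.sub_le _ _
    calc _ ≤ (X / 100 + X / 100) * w c X :=
          mul_le_mul_of_nonneg_right (by linarith) (w_nonneg c X)
      _ = 2 / 100 * (X * w c X) := by ring
      _ = _ := by rw [mul_w hX]
  linarith

end CF

theorem infinitely_many_cubefree_floor (c : ℝ) (hc1 : 1 < c) (hc2 : c < 11 / 6) :
    {m : ℕ | CubeFree ⌊(m : ℝ) ^ c⌋₊}.Infinite := by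
  refine Set.infinite_of_forall_exists_gt fun a => ?_
  obtain ⟨X, hX, m, hm, h⟩ :=
    ((Filter.eventually_gt_atTop a).and (CF.exists_cubefree hc1 hc2)).exists
  exact ⟨m, h, lt_of_lt_of_le hX (Finset.mem_Ico.1 hm).1⟩
end
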